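/- arXiv:2505.02897 — 2 statements merged into one kernel-verified Lean document; each statement's English description precedes it below -/
import Mathlib

section
/- Let (ν_J)_{J∈ℤ} be a modular invariant spectrum and let a, b be reals with A ≤ a < b. For an integer J let ℓ_J(a,b) denote the supremum of the lengths of the connected components of the open set (a,b) \ supp(ν_J), with ℓ_J(a,b) := 0 if this set is empty. Then for every ε > 0, lim_{J→∞} J^{1/4−ε} · ℓ_J(a,b) = 0. -/
open MeasureTheory Filter Topology Real

noncomputable section

/-- A spectrum: a family of positive Borel measures on `ℝ`, each supported in
`{h | Tgap < h ∧ Tgap < h + J}`, with finite total Laplace-type sum. -/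
def IsSpectrum (Tgap : ℝ) (ν : ℤ → Measure ℝ) : Prop :=
  (∀ J : ℤ, ν J {h : ℝ | ¬ (Tgap < h ∧ Tgap < h + (J : ℝ))} = 0) ∧
  (∀ b b' : ℝ, 0 < b → 0 < b' →
    (∑' J : ℤ, ∫⁻ h : ℝ, ENNReal.ofReal (Real.exp (-b * h - b' * (h + (J : ℝ)))) ∂(ν J)) < ⊤)

/-- The reduced (Virasoro primary) partition function. -/
def Ztilde (A : ℝ) (ν : ℤ → Measure ℝ) (βL βR : ℂ) : ℂ :=
  Complex.exp ((A : ℂ) * (βL + βR)) *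
    ((1 - Complex.exp (-βL)) * (1 - Complex.exp (-βR)) +
      ∑' J : ℤ, ∫ h : ℝ, Complex.exp (-βL * (h : ℂ) - βR * ((h : ℂ) + (J : ℂ))) ∂(ν J))

/-- Modular invariance of the reduced partition function (principal square root). -/
def ModularInvariant (A : ℝ) (ν : ℤ → Measure ℝ) : Prop :=
  ∀ βL βR : ℂ, 0 < βL.re → 0 < βR.re →
    Ztilde A ν βL βR =
      ((4 * (π : ℂ) ^ 2) / (βL * βR)) ^ ((1 : ℂ) / 2) *
        Ztilde A ν (4 * (π : ℂ) ^ 2 / βL) (4 * (π : ℂ) ^ 2 / βR)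

/-- The topological support of a measure on `ℝ`. -/
def measSupport (μ : Measure ℝ) : Set ℝ :=
  {x : ℝ | ∀ U : Set ℝ, IsOpen U → x ∈ U → 0 < μ U}

/-- The maximal level spacing `ℓ_J(a,b)`: the supremum of the diameters (lengths) of the
connected components of `(a,b) \ supp(ν_J)` (equal to `0` if this set is empty, since
`Real.sSup ∅ = 0`). -/
def maxGap (μ : Measure ℝ) (a b : ℝ) : ℝ :=
  sSup ((fun x => Metric.diam (connectedComponentIn (Set.Ioo a b \ measSupport μ) x)) ''
    (Set.Ioo a b \ measSupport μ))


/-- Real version of the non-vacuum sum. -/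
def Nr (ν : ℤ → Measure ℝ) (x y : ℝ) : ℝ :=
  ∑' J : ℤ, ∫ h : ℝ, Real.exp (-x * h - y * (h + (J : ℝ))) ∂(ν J)

lemma spec_lint_lt {T : ℝ} {ν : ℤ → Measure ℝ} (hs : IsSpectrum T ν) {x y : ℝ} (hx : 0 < x)
    (hy : 0 < y) (J : ℤ) :
    ∫⁻ h : ℝ, ENNReal.ofReal (Real.exp (-x * h - y * (h + (J : ℝ)))) ∂(ν J) < ⊤ :=
  lt_of_le_of_lt (ENNReal.le_tsum J) (hs.2 x y hx hy)

lemma spec_int {T : ℝ} {ν : ℤ → Measure ℝ} (hs : IsSpectrum T ν) {x y : ℝ} (hx : 0 < x)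
    (hy : 0 < y) (J : ℤ) :
    Integrable (fun h : ℝ => Real.exp (-x * h - y * (h + (J : ℝ)))) (ν J) := by
  refine ⟨by fun_prop, ?_⟩
  rw [hasFiniteIntegral_iff_ofReal (ae_of_all _ fun h => (Real.exp_pos _).le)]
  exact spec_lint_lt hs hx hy J

lemma spec_summable {T : ℝ} {ν : ℤ → Measure ℝ} (hs : IsSpectrum T ν) {x y : ℝ} (hx : 0 < x)
    (hy : 0 < y) :
    Summable (fun J : ℤ => ∫ h : ℝ, Real.exp (-x * h - y * (h + (J : ℝ))) ∂(ν J)) := by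
  have := ENNReal.summable_toReal (hs.2 x y hx hy).ne
  refine this.congr fun J => ?_
  rw [integral_eq_lintegral_of_nonneg_ae (ae_of_all _ fun h => (Real.exp_pos _).le) (by fun_prop)]

lemma cterm_norm (βL βR : ℂ) (J : ℤ) (h : ℝ) :
    ‖Complex.exp (-βL * (h : ℂ) - βR * ((h : ℂ) + (J : ℂ)))‖ =
      Real.exp (-βL.re * h - βR.re * (h + (J : ℝ))) := by
  rw [Complex.norm_exp]
  congr 1
  have : ((h : ℂ) + (J : ℂ)) = ((h + (J : ℝ) : ℝ) : ℂ) := by push_cast; rfl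
  rw [this, Complex.sub_re, Complex.re_mul_ofReal, Complex.re_mul_ofReal, Complex.neg_re]

lemma cterm_norm_int_le (ν : ℤ → Measure ℝ) (βL βR : ℂ) (J : ℤ) :
    ‖∫ h : ℝ, Complex.exp (-βL * (h : ℂ) - βR * ((h : ℂ) + (J : ℂ))) ∂(ν J)‖ ≤
      ∫ h : ℝ, Real.exp (-βL.re * h - βR.re * (h + (J : ℝ))) ∂(ν J) := by
  refine (norm_integral_le_integral_norm _).trans (le_of_eq ?_)
  exact integral_congr_ae (ae_of_all _ fun h => cterm_norm βL βR J h)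

lemma N_norm_le {T : ℝ} {ν : ℤ → Measure ℝ} (hs : IsSpectrum T ν) {βL βR : ℂ} (hL : 0 < βL.re)
    (hR : 0 < βR.re) :
    ‖∑' J : ℤ, ∫ h : ℝ, Complex.exp (-βL * (h : ℂ) - βR * ((h : ℂ) + (J : ℂ))) ∂(ν J)‖ ≤
      Nr ν βL.re βR.re :=
  tsum_of_norm_bounded (spec_summable hs hL hR).hasSum (fun J => cterm_norm_int_le ν βL βR J)

lemma Nr_nonneg (ν : ℤ → Measure ℝ) (x y : ℝ) : 0 ≤ Nr ν x y :=
  tsum_nonneg fun _ => integral_nonneg fun _ => (Real.exp_pos _).le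

lemma Nr_shift {T : ℝ} {ν : ℤ → Measure ℝ} (hs : IsSpectrum T ν) {x y p q : ℝ} (hx : 0 < x)
    (hy : 0 < y) (hp : 0 ≤ p) (hq : 0 ≤ q) :
    Nr ν (x + p) (y + q) ≤ Real.exp (-T * (p + q)) * Nr ν x y := by
  unfold Nr
  rw [← tsum_mul_left]
  refine Summable.tsum_le_tsum (fun J => ?_) (spec_summable hs (by linarith) (by linarith))
    ((spec_summable hs hx hy).mul_left _)
  rw [← integral_const_mul]
  refine integral_mono_ae (spec_int hs (by linarith) (by linarith) J)
    ((spec_int hs hx hy J).const_mul _) ?_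
  have h0 : ∀ᵐ h ∂(ν J), T < h ∧ T < h + (J : ℝ) := by
    rw [ae_iff]; exact hs.1 J
  filter_upwards [h0] with h hh
  rw [← Real.exp_add]
  apply Real.exp_le_exp.mpr
  nlinarith [mul_nonneg hp (sub_nonneg.mpr hh.1.le), mul_nonneg hq (sub_nonneg.mpr hh.2.le)]

lemma Ztilde_ofReal (A : ℝ) (ν : ℤ → Measure ℝ) (x y : ℝ) :
    Ztilde A ν (x : ℂ) (y : ℂ) =
      ((Real.exp (A * (x + y)) *
        ((1 - Real.exp (-x)) * (1 - Real.exp (-y)) + Nr ν x y) : ℝ) : ℂ) := by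
  unfold Ztilde Nr
  push_cast
  congr 2
  congr 1
  ext J
  rw [← integral_complex_ofReal]
  push_cast
  rfl

lemma Nr_modular_le {A : ℝ} {ν : ℤ → Measure ℝ} (hA : 0 < A)
    (hmod : ModularInvariant A ν) {x y : ℝ} (hx : 0 < x) (hy : 0 < y) :
    Nr ν x y ≤ Real.sqrt (4 * π ^ 2 / (x * y)) * (Real.exp (A * (4 * π ^ 2 / x + 4 * π ^ 2 / y)) *
      (1 + Nr ν (4 * π ^ 2 / x) (4 * π ^ 2 / y))) := by
  have hx' : 0 < 4 * π ^ 2 / x := by positivity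
  have hy' : 0 < 4 * π ^ 2 / y := by positivity
  have h := hmod (x : ℂ) (y : ℂ) (by simpa using hx) (by simpa using hy)
  have e1 : (4 * (π : ℂ) ^ 2 / (x : ℂ)) = ((4 * π ^ 2 / x : ℝ) : ℂ) := by push_cast; rfl
  have e2 : (4 * (π : ℂ) ^ 2 / (y : ℂ)) = ((4 * π ^ 2 / y : ℝ) : ℂ) := by push_cast; rfl
  have e3 : (4 * (π : ℂ) ^ 2 / ((x : ℂ) * y)) = ((4 * π ^ 2 / (x * y) : ℝ) : ℂ) := by
    push_cast; rfl
  have e4 : ((1 : ℂ) / 2) = ((1 / 2 : ℝ) : ℂ) := by push_cast; rfl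
  rw [e1, e2, e3, e4, Ztilde_ofReal, Ztilde_ofReal, ← Complex.ofReal_cpow (by positivity),
    ← Complex.ofReal_mul] at h
  have h := Complex.ofReal_injective h
  rw [← Real.sqrt_eq_rpow] at h
  have b1 : ∀ t : ℝ, 0 < t → 0 ≤ 1 - Real.exp (-t) ∧ 1 - Real.exp (-t) ≤ 1 := by
    intro t ht
    have := Real.exp_pos (-t)
    have : Real.exp (-t) ≤ 1 := Real.exp_le_one_iff.mpr (by linarith)
    constructor <;> linarith
  have hN := Nr_nonneg ν x y
  have hexp : 1 ≤ Real.exp (A * (x + y)) := Real.one_le_exp (by positivity)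
  have hv := mul_nonneg (b1 x hx).1 (b1 y hy).1
  calc Nr ν x y ≤ (1 - Real.exp (-x)) * (1 - Real.exp (-y)) + Nr ν x y := by linarith
    _ ≤ Real.exp (A * (x + y)) * ((1 - Real.exp (-x)) * (1 - Real.exp (-y)) + Nr ν x y) :=
      le_mul_of_one_le_left (by linarith) hexp
    _ = _ := h
    _ ≤ _ := by
      gcongr
      exact mul_le_one₀ (b1 _ hx').2 (b1 _ hy').1 (b1 _ hy').2

lemma Nr_bound_large {A T : ℝ} {ν : ℤ → Measure ℝ} (hA : 0 < A) (hT : 0 < T)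
    (hs : IsSpectrum T ν) (hmod : ModularInvariant A ν) (X : ℝ) (hX : 0 < X) :
    ∃ C : ℝ, 0 < C ∧ (∀ x y : ℝ, 0 < x → x ≤ X → 1 ≤ y →
      Nr ν x y ≤ C * Real.exp (-T * y) * (Real.sqrt (1 / x) * Real.exp (A * (4 * π ^ 2 / x)))) ∧
      (∀ x y : ℝ, 0 < x → x ≤ X → 0 < y → y ≤ 1 →
      Nr ν x y ≤ C * (Real.sqrt (1 / x) * Real.exp (A * (4 * π ^ 2 / x))) *
        (Real.sqrt (1 / y) * Real.exp (A * (4 * π ^ 2 / y)))) := by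
  set K := 1 + Nr ν (4 * π ^ 2 / X) (4 * π ^ 2) with hK
  have hK0 : 0 < K := by have := Nr_nonneg ν (4 * π ^ 2 / X) (4 * π ^ 2); linarith
  have key : ∀ x y : ℝ, 0 < x → x ≤ X → 0 < y → y ≤ 1 →
      Nr ν x y ≤ (2 * π * K) * (Real.sqrt (1 / x) * Real.exp (A * (4 * π ^ 2 / x))) *
        (Real.sqrt (1 / y) * Real.exp (A * (4 * π ^ 2 / y))) := by
    intro x y hx hxX hy hy1
    refine (Nr_modular_le hA hmod hx hy).trans ?_
    have h1 : Nr ν (4 * π ^ 2 / x) (4 * π ^ 2 / y) ≤ Nr ν (4 * π ^ 2 / X) (4 * π ^ 2) := by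
      have a1 : 4 * π ^ 2 / X ≤ 4 * π ^ 2 / x := by gcongr
      have a2 : 4 * π ^ 2 ≤ 4 * π ^ 2 / y := by
        rw [le_div_iff₀ hy]; nlinarith [Real.pi_pos, sq_nonneg π]
      have := Nr_shift hs (x := 4 * π ^ 2 / X) (y := 4 * π ^ 2) (by positivity) (by positivity)
        (sub_nonneg.mpr a1) (sub_nonneg.mpr a2)
      rw [add_sub_cancel, add_sub_cancel] at this
      refine this.trans (mul_le_of_le_one_left (Nr_nonneg _ _ _) ?_)
      apply Real.exp_le_one_iff.mpr
      nlinarith [sub_nonneg.mpr a1, sub_nonneg.mpr a2]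
    have h2 : Real.sqrt (4 * π ^ 2 / (x * y)) = 2 * π * Real.sqrt (1 / x) * Real.sqrt (1 / y) := by
      have : 4 * π ^ 2 / (x * y) = (2 * π) ^ 2 * (1 / x) * (1 / y) := by field_simp; ring
      rw [this, Real.sqrt_mul (by positivity), Real.sqrt_mul (by positivity),
        Real.sqrt_sq (by positivity)]
    rw [h2, mul_add A, Real.exp_add]
    calc 2 * π * √(1 / x) * √(1 / y) * (Real.exp (A * (4 * π ^ 2 / x)) *
          Real.exp (A * (4 * π ^ 2 / y)) * (1 + Nr ν (4 * π ^ 2 / x) (4 * π ^ 2 / y)))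
        ≤ 2 * π * √(1 / x) * √(1 / y) * (Real.exp (A * (4 * π ^ 2 / x)) *
          Real.exp (A * (4 * π ^ 2 / y)) * K) := by rw [hK]; gcongr
      _ = _ := by ring
  refine ⟨max (2 * π * K) (2 * π * K * Real.exp (A * (4 * π ^ 2)) * Real.exp T),
    lt_max_of_lt_left (by positivity), ?_, ?_⟩
  · intro x y hx hxX hy
    have h1 := key x 1 hx hxX one_pos le_rfl
    have h2 := Nr_shift hs hx one_pos le_rfl (sub_nonneg.mpr hy)
    rw [add_zero, add_sub_cancel, zero_add] at h2
    have e : Real.exp (-T * (y - 1)) = Real.exp T * Real.exp (-T * y) := by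
      rw [← Real.exp_add]; congr 1; ring
    calc Nr ν x y ≤ _ := h2
      _ ≤ Real.exp (-T * (y - 1)) * _ := mul_le_mul_of_nonneg_left h1 (Real.exp_pos _).le
      _ = (2 * π * K * Real.exp (A * (4 * π ^ 2)) * Real.exp T) * Real.exp (-T * y) *
        (Real.sqrt (1 / x) * Real.exp (A * (4 * π ^ 2 / x))) := by
          rw [e, div_one, div_one, Real.sqrt_one]; ring
      _ ≤ _ := by
        gcongr
        exact le_max_right _ _
  · intro x y hx hxX hy hy1
    refine (key x y hx hxX hy hy1).trans ?_
    gcongr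
    exact le_max_left _ _

lemma csqrt_mul {a b : ℂ} (ha : 0 < a.re) (hb : 0 < b.re) :
    (a * b) ^ ((1 : ℂ) / 2) = a ^ ((1 : ℂ) / 2) * b ^ ((1 : ℂ) / 2) := by
  have ha0 : a ≠ 0 := by rintro rfl; simp at ha
  have hb0 : b ≠ 0 := by rintro rfl; simp at hb
  have h1 := abs_lt.mp (Complex.abs_arg_lt_pi_div_two_iff.mpr (Or.inl ha))
  have h2 := abs_lt.mp (Complex.abs_arg_lt_pi_div_two_iff.mpr (Or.inl hb))
  rw [Complex.cpow_def_of_ne_zero (mul_ne_zero ha0 hb0), Complex.cpow_def_of_ne_zero ha0,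
    Complex.cpow_def_of_ne_zero hb0, ← Complex.exp_add, Complex.log_mul ha0 hb0, add_mul]
  constructor <;> linarith [h1.1, h1.2, h2.1, h2.2]

lemma cdiv_re_pos {c : ℝ} (hc : 0 < c) {z : ℂ} (hz : 0 < z.re) : 0 < ((c : ℂ) / z).re := by
  have hz0 : z ≠ 0 := by rintro rfl; simp at hz
  have : 0 < Complex.normSq z := Complex.normSq_pos.mpr hz0
  rw [Complex.div_re]
  simp only [Complex.ofReal_re, Complex.ofReal_im, zero_mul, zero_div, add_zero]
  positivity

/-- vacuum character -/
def Vac (A : ℝ) (β : ℂ) : ℂ := Complex.exp ((A : ℂ) * β) * (1 - Complex.exp (-β))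

/-- crossed vacuum character -/
def Fvac (A : ℝ) (z : ℂ) : ℂ :=
  (2 * (π : ℂ) / z) ^ ((1 : ℂ) / 2) * Vac A (4 * (π : ℂ) ^ 2 / z)

lemma half_gauss_int {z : ℂ} (hz : 0 < z.re) (k : ℂ) :
    Integrable (fun p : ℝ => Complex.exp (-z * (p : ℂ) ^ 2) *
      (Complex.exp (k * p) + Complex.exp (-k * p))) := by
  have h1 := integrable_cexp_quadratic hz k 0
  have h2 := integrable_cexp_quadratic hz (-k) 0
  refine (h1.add h2).congr (ae_of_all _ fun p => ?_)
  simp only [Pi.add_apply, add_zero, Complex.exp_add]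
  ring

lemma half_gauss {z : ℂ} (hz : 0 < z.re) (k : ℂ) :
    ∫ p in Set.Ioi (0 : ℝ), Complex.exp (-z * (p : ℂ) ^ 2) *
      (Complex.exp (k * p) + Complex.exp (-k * p)) =
      ((π : ℂ) / z) ^ ((1 : ℂ) / 2) * Complex.exp (k ^ 2 / (4 * z)) := by
  have hb : (-z).re < 0 := by simpa using hz
  have h := integral_cexp_quadratic hb k 0
  have h1 := integrable_cexp_quadratic hz k 0
  have h2 := integrable_cexp_quadratic hz (-k) 0
  rw [← integral_add_compl (measurableSet_Ioi (a := (0 : ℝ))) h1, Set.compl_Ioi,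
    ] at h
  have h3 := integral_comp_neg_Iic (0 : ℝ)
    (fun x : ℝ => Complex.exp (-z * (x : ℂ) ^ 2 + -k * (x : ℂ) + 0))
  rw [neg_zero] at h3
  have h4 : ∫ x in Set.Iic (0 : ℝ), Complex.exp (-z * (x : ℂ) ^ 2 + k * (x : ℂ) + 0) =
      ∫ x in Set.Ioi (0 : ℝ), Complex.exp (-z * (x : ℂ) ^ 2 + -k * (x : ℂ) + 0) := by
    rw [← h3]
    congr 1
    ext x
    push_cast
    congr 1
    ring
  rw [h4, ← integral_add h1.integrableOn h2.integrableOn] at h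
  have e : (0 - k ^ 2 / (4 * -z)) = k ^ 2 / (4 * z) := by
    rw [mul_neg, div_neg, zero_sub, neg_neg]
  rw [neg_neg, e] at h
  rw [← h]
  congr 1
  ext x
  simp only [add_zero, Complex.exp_add]
  ring

lemma exists_c (A : ℝ) (hA : 0 < A) : ∃ (κ : ℂ) (c : ℝ → ℝ), Continuous c ∧
    (∀ p : ℝ, (c p : ℂ) = (Complex.exp (κ * p) + Complex.exp (-κ * p)) / 2) ∧
    κ ^ 2 = 16 * (π : ℂ) ^ 2 * ((A : ℂ) - 1) ∧
    (∀ p, 0 ≤ p → |c p| ≤ Real.exp (4 * π * √A * p)) ∧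
    (∃ m > 0, ∀ p, 0 ≤ p → m * p ^ 2 ≤ Real.cosh (4 * π * √A * p) - c p) ∧
    (∃ p0 > 0, ∀ p, p0 ≤ p →
      Real.exp (4 * π * √A * p) / 4 ≤ Real.cosh (4 * π * √A * p) - c p) := by
  have hsA : 0 < √A := Real.sqrt_pos.mpr hA
  have hpi := Real.pi_pos
  have cosh_ge : ∀ x : ℝ, 0 ≤ x → 1 + x ^ 2 / 2 ≤ Real.cosh x := by
    intro x hx
    have h1 := Real.cosh_two_mul (x / 2)
    have h2 := Real.cosh_sq (x / 2)
    have h3 : x / 2 ≤ Real.sinh (x / 2) := Real.self_le_sinh_iff.mpr (by linarith)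
    rw [show 2 * (x / 2) = x by ring] at h1
    nlinarith
  have half_le : ∀ x : ℝ, Real.exp x / 2 ≤ Real.cosh x := by
    intro x; rw [Real.cosh_eq]; linarith [Real.exp_pos (-x)]
  by_cases h1 : 1 ≤ A
  · have hs : √(A - 1) < √A := Real.sqrt_lt_sqrt (by linarith) (by linarith)
    have hs0 := Real.sqrt_nonneg (A - 1)
    have hcosh_le : ∀ x : ℝ, 0 ≤ x → Real.cosh x ≤ Real.exp x := by
      intro x hx
      rw [Real.cosh_eq]
      have : Real.exp (-x) ≤ Real.exp x := Real.exp_le_exp.mpr (by linarith)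
      linarith
    refine ⟨((4 * π * √(A - 1) : ℝ) : ℂ), fun p => Real.cosh (4 * π * √(A - 1) * p), by fun_prop,
      ?_, ?_, ?_, ?_, ?_⟩
    · intro p
      simp only [Real.cosh_eq]; push_cast; ring_nf
    · have : ((√(A - 1) : ℝ) : ℂ) ^ 2 = ((A : ℂ) - 1) := by
        rw [← Complex.ofReal_pow, Real.sq_sqrt (by linarith)]; push_cast; rfl
      push_cast
      rw [mul_pow, this]; ring
    · intro p hp
      rw [abs_of_nonneg (Real.cosh_pos _).le]
      refine (hcosh_le _ (by positivity)).trans ?_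
      gcongr
    · refine ⟨8 * π ^ 2, by positivity, fun p hp => ?_⟩
      -- cosh X - cosh Y = 2 sinh((X+Y)/2) sinh((X-Y)/2)
      set X := 4 * π * √A * p
      set Y := 4 * π * √(A - 1) * p
      have hXY : Y ≤ X := by simp only [X, Y]; gcongr
      have hY : 0 ≤ Y := by positivity
      have e : Real.cosh X - Real.cosh Y = 2 * (Real.sinh ((X + Y) / 2) * Real.sinh ((X - Y) / 2)) := by
        have a1 := Real.cosh_add ((X + Y) / 2) ((X - Y) / 2)
        have a2 := Real.cosh_sub ((X + Y) / 2) ((X - Y) / 2)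
        rw [show (X + Y) / 2 + (X - Y) / 2 = X by ring] at a1
        rw [show (X + Y) / 2 - (X - Y) / 2 = Y by ring] at a2
        rw [a1, a2]; ring
      have b1 : (X + Y) / 2 ≤ Real.sinh ((X + Y) / 2) := Real.self_le_sinh_iff.mpr (by linarith)
      have b2 : (X - Y) / 2 ≤ Real.sinh ((X - Y) / 2) := Real.self_le_sinh_iff.mpr (by linarith)
      have b3 := mul_le_mul b1 b2 (by linarith) (by linarith)
      have e2 : X ^ 2 - Y ^ 2 = 16 * π ^ 2 * p ^ 2 := by
        simp only [X, Y, mul_pow]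
        rw [Real.sq_sqrt hA.le, Real.sq_sqrt (by linarith)]; ring
      nlinarith
    · have hd : 0 < 4 * π * (√A - √(A - 1)) := by
        have := sub_pos.mpr hs
        positivity
      refine ⟨2 / (4 * π * (√A - √(A - 1))), by positivity, fun p hp => ?_⟩
      rw [div_le_iff₀ hd] at hp
      have hp0 : 0 ≤ p := by
        by_contra hneg
        push Not at hneg
        nlinarith
      have h3 := half_le (4 * π * √A * p)
      have h4 := hcosh_le (4 * π * √(A - 1) * p) (by positivity)
      have h5 : Real.exp (4 * π * √(A - 1) * p) * 4 ≤ Real.exp (4 * π * √A * p) := by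
        have : (4 : ℝ) ≤ Real.exp 2 := by
          have := Real.exp_one_gt_d9
          rw [show (2 : ℝ) = 1 + 1 by norm_num, Real.exp_add]; nlinarith
        calc _ ≤ Real.exp (4 * π * √(A - 1) * p) * Real.exp 2 := by gcongr
          _ ≤ _ := by
            rw [← Real.exp_add]; apply Real.exp_le_exp.mpr; nlinarith
      linarith
  · push Not at h1
    refine ⟨((4 * π * √(1 - A) : ℝ) : ℂ) * Complex.I, fun p => Real.cos (4 * π * √(1 - A) * p),
      by fun_prop, ?_, ?_, ?_, ?_, ?_⟩
    · intro p
      rw [Complex.ofReal_cos, Complex.cos]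
      push_cast
      ring_nf
    · have : ((√(1 - A) : ℝ) : ℂ) ^ 2 = (1 - (A : ℂ)) := by
        rw [← Complex.ofReal_pow, Real.sq_sqrt (by linarith)]; push_cast; rfl
      push_cast
      rw [mul_pow, mul_pow, this, Complex.I_sq]; ring
    · intro p hp
      exact (Real.abs_cos_le_one _).trans (Real.one_le_exp (by positivity))
    · refine ⟨8 * π ^ 2 * A, by positivity, fun p hp => ?_⟩
      have := cosh_ge (4 * π * √A * p) (by positivity)
      have h2 := Real.cos_le_one (4 * π * √(1 - A) * p)
      rw [mul_pow, mul_pow, Real.sq_sqrt hA.le] at this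
      nlinarith
    · refine ⟨2 / (4 * π * √A), by positivity, fun p hp => ?_⟩
      rw [div_le_iff₀ (by positivity)] at hp
      have h3 := half_le (4 * π * √A * p)
      have h2 := Real.cos_le_one (4 * π * √(1 - A) * p)
      have : (4 : ℝ) ≤ Real.exp (4 * π * √A * p) := by
        have := Real.exp_one_gt_d9
        calc (4 : ℝ) ≤ Real.exp (1 + 1) := by rw [Real.exp_add]; nlinarith
          _ ≤ _ := Real.exp_le_exp.mpr (by linarith)
      linarith

lemma exists_rho (A : ℝ) (hA : 0 < A) : ∃ ρ : ℝ → ℝ, ContinuousOn ρ (Set.Ioi 0) ∧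
    (∃ m > 0, ∀ t, 0 < t → m * √t ≤ ρ t) ∧
    (∀ t, 1 ≤ t → ρ t ≤ 4 * Real.exp (4 * π * √A * √t)) ∧
    (∃ t0 > 0, ∀ t, t0 ≤ t → Real.exp (4 * π * √A * √t) / (4 * √t) ≤ ρ t) ∧
    (∀ z : ℂ, 0 < z.re →
      IntegrableOn (fun t : ℝ => Complex.exp (-z * t) * (ρ t : ℂ)) (Set.Ioi 0) ∧
      ∫ t in Set.Ioi (0 : ℝ), Complex.exp (-z * t) * (ρ t : ℂ) = Fvac A z) := by
  obtain ⟨κ, c, hc, hcκ, hκ, hcle, ⟨m, hm, hmle⟩, ⟨p0, hp0, hp⟩⟩ := exists_c A hA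
  have h2 : 1 ≤ √2 := Real.one_le_sqrt.mpr (by norm_num)
  have h22 : √2 ≤ 2 := Real.sqrt_le_iff.mpr (by norm_num)
  set g : ℝ → ℝ := fun p => Real.cosh (4 * π * √A * p) - c p with hg
  have hgc : Continuous g := by fun_prop
  have hg0 : ∀ p, 0 ≤ p → 0 ≤ g p := fun p hp => le_trans (by positivity) (hmle p hp)
  refine ⟨fun t => √2 * (√t)⁻¹ * g (√t), ?_, ⟨m, hm, ?_⟩, ?_, ⟨p0 ^ 2, by positivity, ?_⟩, ?_⟩
  · apply ContinuousOn.mul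
    · apply ContinuousOn.mul continuousOn_const
      apply ContinuousOn.inv₀ (by fun_prop)
      intro x hx
      exact (Real.sqrt_pos.mpr hx).ne'
    · fun_prop
  · intro t ht
    have hst : 0 < √t := Real.sqrt_pos.mpr ht
    have := hmle (√t) hst.le
    calc m * √t = 1 * (√t)⁻¹ * (m * (√t) ^ 2) := by field_simp
      _ ≤ √2 * (√t)⁻¹ * g (√t) := by gcongr
  · intro t ht
    have hst : 1 ≤ √t := Real.one_le_sqrt.mpr ht
    have h0 := hg0 (√t) (by linarith)
    have h1 : g (√t) ≤ 2 * Real.exp (4 * π * √A * √t) := by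
      have h3 := (abs_le.mp (hcle (√t) (by linarith))).1
      have h4 : Real.cosh (4 * π * √A * √t) ≤ Real.exp (4 * π * √A * √t) := by
        rw [Real.cosh_eq]
        have : Real.exp (-(4 * π * √A * √t)) ≤ Real.exp (4 * π * √A * √t) :=
          Real.exp_le_exp.mpr (by
            have : 0 ≤ 4 * π * √A * √t := by have := Real.pi_pos; positivity
            linarith)
        linarith
      simp only [hg]; linarith
    have h5 : (√t)⁻¹ ≤ 1 := inv_le_one_of_one_le₀ hst
    calc √2 * (√t)⁻¹ * g (√t) ≤ 2 * 1 * (2 * Real.exp (4 * π * √A * √t)) := by gcongr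
      _ = _ := by ring
  · intro t ht
    have ht0 : 0 < t := lt_of_lt_of_le (by positivity) ht
    have hst : p0 ≤ √t := Real.le_sqrt_of_sq_le ht
    have hst0 : 0 < √t := by linarith
    have := hp (√t) hst
    calc Real.exp (4 * π * √A * √t) / (4 * √t) = 1 * (√t)⁻¹ * (Real.exp (4 * π * √A * √t) / 4) := by
          field_simp
      _ ≤ √2 * (√t)⁻¹ * g (√t) := by gcongr
  · intro z hz
    have hz0 : z ≠ 0 := by rintro rfl; simp at hz
    set k : ℂ := ((4 * π * √A : ℝ) : ℂ) with hk
    have hk2 : k ^ 2 = 16 * (π : ℂ) ^ 2 * (A : ℂ) := by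
      have : ((√A : ℝ) : ℂ) ^ 2 = (A : ℂ) := by
        rw [← Complex.ofReal_pow, Real.sq_sqrt hA.le]
      rw [hk]; push_cast
      rw [mul_pow, this]; ring
    have e : ∀ x ∈ Set.Ioi (0 : ℝ), (|(2 : ℝ)| * x ^ ((2 : ℝ) - 1)) •
        (Complex.exp (-z * ((x ^ (2 : ℝ) : ℝ) : ℂ)) *
          ((√2 * (√(x ^ (2 : ℝ)))⁻¹ * g (√(x ^ (2 : ℝ))) : ℝ) : ℂ)) =
        (√2 : ℂ) * (Complex.exp (-z * (x : ℂ) ^ 2) * (Complex.exp (k * x) + Complex.exp (-k * x)) -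
          Complex.exp (-z * (x : ℂ) ^ 2) * (Complex.exp (κ * x) + Complex.exp (-κ * x))) := by
      intro x hx
      have hx : 0 < x := hx
      have e1 : x ^ ((2 : ℝ) - 1) = x := by norm_num
      rw [e1, Real.rpow_two, Real.sqrt_sq hx.le, abs_two]
      have hg' : (g x : ℂ) = (Complex.exp (k * x) + Complex.exp (-k * x)) / 2 -
          (Complex.exp (κ * x) + Complex.exp (-κ * x)) / 2 := by
        rw [← hcκ]
        simp only [hg, hk]
        rw [Real.cosh_eq]
        push_cast
        ring_nf
      rw [Complex.real_smul]
      push_cast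
      rw [hg']
      have hxc : (x : ℂ) ≠ 0 := by exact_mod_cast hx.ne'
      field_simp
    have hi1 := half_gauss_int hz k
    have hi2 := half_gauss_int hz κ
    constructor
    · rw [← integrableOn_Ioi_comp_rpow_iff _ (two_ne_zero' ℝ)]
      refine IntegrableOn.congr_fun ?_ (fun x hx => (e x hx).symm) measurableSet_Ioi
      exact ((hi1.sub hi2).const_mul _).integrableOn
    · rw [← integral_comp_rpow_Ioi _ (two_ne_zero' ℝ), setIntegral_congr_fun measurableSet_Ioi e,
        integral_const_mul, integral_sub hi1.integrableOn hi2.integrableOn, half_gauss hz,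
        half_gauss hz, hk2, hκ]
      unfold Fvac Vac
      have e2 : (2 * (π : ℂ) / z) ^ ((1 : ℂ) / 2) = (√2 : ℂ) * ((π : ℂ) / z) ^ ((1 : ℂ) / 2) := by
        rw [mul_div_assoc, csqrt_mul (by norm_num) (cdiv_re_pos Real.pi_pos hz)]
        congr 1
        rw [Real.sqrt_eq_rpow, Complex.ofReal_cpow (by norm_num)]
        push_cast
        rfl
      rw [e2]
      have e3 : 16 * (π : ℂ) ^ 2 * (A : ℂ) / (4 * z) = A * (4 * (π : ℂ) ^ 2 / z) := by
        field_simp; ring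
      have e4 : 16 * (π : ℂ) ^ 2 * ((A : ℂ) - 1) / (4 * z) =
          A * (4 * (π : ℂ) ^ 2 / z) + -(4 * (π : ℂ) ^ 2 / z) := by
        field_simp; ring
      rw [e3, e4, Complex.exp_add]
      ring

lemma fourpi_re (z : ℂ) : (4 * (π : ℂ) ^ 2 / z).re = 4 * π ^ 2 * z.re / ‖z‖ ^ 2 := by
  have : (4 * (π : ℂ) ^ 2) = ((4 * π ^ 2 : ℝ) : ℂ) := by push_cast; rfl
  rw [this, Complex.div_re, Complex.sq_norm]
  simp only [Complex.ofReal_re, Complex.ofReal_im, zero_mul, zero_div, add_zero]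

lemma fourpi_re_pos {z : ℂ} (hz : 0 < z.re) : 0 < (4 * (π : ℂ) ^ 2 / z).re := by
  have := cdiv_re_pos (c := 4 * π ^ 2) (by positivity) hz
  simpa using this

lemma norm_one_sub_exp_le {q : ℂ} (hq : 0 ≤ q.re) : ‖1 - Complex.exp (-q)‖ ≤ 2 := by
  refine (norm_sub_le _ _).trans ?_
  rw [Complex.norm_exp, norm_one, Complex.neg_re]
  have : Real.exp (-q.re) ≤ 1 := Real.exp_le_one_iff.mpr (by linarith)
  linarith

lemma norm_one_sub_exp_le' {q : ℂ} (hq : 0 ≤ q.re) : ‖1 - Complex.exp (-q)‖ ≤ 2 * ‖q‖ := by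
  by_cases h : ‖q‖ ≤ 1
  · rw [norm_sub_rev]
    have := Complex.norm_exp_sub_one_le (x := -q) (by rwa [norm_neg])
    rwa [norm_neg] at this
  · have := norm_one_sub_exp_le hq
    linarith

lemma Vac_norm_le (A : ℝ) {q : ℂ} (hq : 0 ≤ q.re) : ‖Vac A q‖ ≤ 2 * Real.exp (A * q.re) := by
  unfold Vac
  rw [norm_mul, Complex.norm_exp, Complex.re_ofReal_mul]
  have := norm_one_sub_exp_le hq
  have h2 := Real.exp_pos (A * q.re)
  nlinarith

lemma Vac_norm_le' (A : ℝ) {q : ℂ} (hq : 0 ≤ q.re) :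
    ‖Vac A q‖ ≤ 2 * ‖q‖ * Real.exp (A * q.re) := by
  unfold Vac
  rw [norm_mul, Complex.norm_exp, Complex.re_ofReal_mul]
  have := norm_one_sub_exp_le' hq
  have h2 := Real.exp_pos (A * q.re)
  nlinarith

lemma csqrt_norm (x : ℂ) : ‖x ^ ((1 : ℂ) / 2)‖ = √‖x‖ := by
  have e4 : ((1 : ℂ) / 2) = ((1 / 2 : ℝ) : ℂ) := by push_cast; rfl
  rw [e4, Complex.norm_cpow_real, Real.sqrt_eq_rpow]

lemma norm_twopi_div (z : ℂ) : ‖2 * (π : ℂ) / z‖ = 2 * π / ‖z‖ := by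
  have : (2 * (π : ℂ)) = ((2 * π : ℝ) : ℂ) := by push_cast; rfl
  rw [this, norm_div, Complex.norm_real, Real.norm_of_nonneg (by have := Real.pi_pos; positivity)]

lemma norm_fourpi_div (z : ℂ) : ‖4 * (π : ℂ) ^ 2 / z‖ = 4 * π ^ 2 / ‖z‖ := by
  have : (4 * (π : ℂ) ^ 2) = ((4 * π ^ 2 : ℝ) : ℂ) := by push_cast; rfl
  rw [this, norm_div, Complex.norm_real, Real.norm_of_nonneg (by positivity)]

lemma Fvac_norm_le (A : ℝ) {z : ℂ} (hz : 0 < z.re) :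
    ‖Fvac A z‖ ≤ √(2 * π / ‖z‖) * (2 * Real.exp (A * (4 * π ^ 2 * z.re / ‖z‖ ^ 2))) := by
  unfold Fvac
  rw [norm_mul, csqrt_norm, norm_twopi_div, ← fourpi_re]
  gcongr
  exact Vac_norm_le A (fourpi_re_pos hz).le

lemma Fvac_norm_le' (A : ℝ) {z : ℂ} (hz : 0 < z.re) :
    ‖Fvac A z‖ ≤ √(2 * π / ‖z‖) *
      (2 * (4 * π ^ 2 / ‖z‖) * Real.exp (A * (4 * π ^ 2 * z.re / ‖z‖ ^ 2))) := by
  unfold Fvac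
  rw [norm_mul, csqrt_norm, norm_twopi_div, ← fourpi_re, ← norm_fourpi_div]
  gcongr
  exact Vac_norm_le' A (fourpi_re_pos hz).le

lemma Fvac_decay (A : ℝ) (hA : 0 < A) {z : ℂ} (hz : 0 < z.re) {k θ B : ℝ} (hk : 0 < k)
    (hkz : k * (1 + |θ|) ≤ ‖z‖) (hB : 4 * π ^ 2 * z.re / ‖z‖ ^ 2 ≤ B) :
    ‖Fvac A z‖ ≤ √(2 * π / k) * (2 * (4 * π ^ 2 / k)) * Real.exp (A * B) *
      (1 + ‖θ‖) ^ (-(3 / 2 : ℝ)) := by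
  have h1 : 0 < 1 + |θ| := by positivity
  have hpi := Real.pi_pos
  have e : (1 + ‖θ‖) ^ (-(3 / 2 : ℝ)) = √(1 / (1 + |θ|)) * (1 / (1 + |θ|)) := by
    rw [Real.norm_eq_abs, Real.sqrt_eq_rpow, Real.rpow_neg h1.le,
      show (3 / 2 : ℝ) = 1 / 2 + 1 by norm_num,
      Real.rpow_add h1, Real.rpow_one, one_div (1 + |θ|), Real.inv_rpow h1.le, mul_inv]
  have e2 : √(2 * π / k) * √(1 / (1 + |θ|)) = √(2 * π / (k * (1 + |θ|))) := by
    rw [← Real.sqrt_mul (by positivity)]; congr 1; field_simp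
  calc ‖Fvac A z‖ ≤ _ := Fvac_norm_le' A hz
    _ ≤ √(2 * π / (k * (1 + |θ|))) * (2 * (4 * π ^ 2 / (k * (1 + |θ|))) * Real.exp (A * B)) := by
      gcongr
    _ = _ := by
      rw [e, ← e2]; field_simp

lemma Fvac_cont (A : ℝ) {z : ℂ} (hz : 0 < z.re) : ContinuousAt (Fvac A) z := by
  have hz0 : z ≠ 0 := by rintro rfl; simp at hz
  unfold Fvac Vac
  have h1 : ContinuousAt (fun z : ℂ => 2 * (π : ℂ) / z) z :=
    ContinuousAt.div continuousAt_const continuousAt_id hz0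
  have h2 : ContinuousAt (fun z : ℂ => 4 * (π : ℂ) ^ 2 / z) z :=
    ContinuousAt.div continuousAt_const continuousAt_id hz0
  apply ContinuousAt.mul
  · apply ContinuousAt.cpow h1 continuousAt_const
    left
    have := cdiv_re_pos (c := 2 * π) (by have := Real.pi_pos; positivity) hz
    simpa using this
  · apply ContinuousAt.mul
    · exact (continuousAt_const.mul h2).cexp
    · exact continuousAt_const.sub h2.neg.cexp

lemma Fvac_line_cont (A : ℝ) {r : ℝ} (hr : 0 < r) :
    Continuous (fun θ : ℝ => Fvac A ((r : ℂ) + θ * Complex.I)) := by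
  rw [continuous_iff_continuousAt]
  intro θ
  have h : ContinuousAt (Fvac A) ((r : ℂ) + θ * Complex.I) := Fvac_cont A (by simpa using hr)
  exact ContinuousAt.comp (f := fun θ : ℝ => (r : ℂ) + θ * Complex.I) (x := θ) h
    (by fun_prop)

lemma line_norm_ge (r θ : ℝ) : |r| ≤ ‖(r : ℂ) + θ * Complex.I‖ ∧ |θ| ≤ ‖(r : ℂ) + θ * Complex.I‖ := by
  constructor
  · simpa using Complex.abs_re_le_norm ((r : ℂ) + θ * Complex.I)
  · simpa using Complex.abs_im_le_norm ((r : ℂ) + θ * Complex.I)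

lemma decay_integrable : Integrable (fun θ : ℝ => (1 + ‖θ‖) ^ (-(3 / 2 : ℝ))) :=
  integrable_one_add_norm (by norm_num)

lemma Fvac_line_int (A : ℝ) (hA : 0 < A) {r : ℝ} (hr : 0 < r) (hr1 : r ≤ 1) :
    Integrable (fun θ : ℝ => Fvac A ((r : ℂ) + θ * Complex.I)) := by
  refine Integrable.mono' (decay_integrable.const_mul
    (√(2 * π / (r / 2)) * (2 * (4 * π ^ 2 / (r / 2))) * Real.exp (A * (4 * π ^ 2 / r))))
    (Fvac_line_cont A hr).aestronglyMeasurable (ae_of_all _ fun θ => ?_)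
  obtain ⟨h1, h2⟩ := line_norm_ge r θ
  rw [abs_of_pos hr] at h1
  have hre : ((r : ℂ) + θ * Complex.I).re = r := by simp
  refine Fvac_decay A hA (by rw [hre]; exact hr) (by positivity) ?_ ?_
  · nlinarith [abs_nonneg θ]
  · have hpos : 0 < ‖(r : ℂ) + θ * Complex.I‖ := by linarith
    rw [hre, div_le_div_iff₀ (by positivity) hr]
    have : r ^ 2 ≤ ‖(r : ℂ) + θ * Complex.I‖ ^ 2 := by gcongr
    nlinarith [Real.pi_pos, sq_nonneg π]

lemma rho_inversion {A : ℝ} (hA : 0 < A) {ρ : ℝ → ℝ} (hρc : ContinuousOn ρ (Set.Ioi 0))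
    (hρ : ∀ z : ℂ, 0 < z.re →
      IntegrableOn (fun t : ℝ => Complex.exp (-z * t) * (ρ t : ℂ)) (Set.Ioi 0) ∧
      ∫ t in Set.Ioi (0 : ℝ), Complex.exp (-z * t) * (ρ t : ℂ) = Fvac A z)
    {r : ℝ} (hr : 0 < r) (hr1 : r ≤ 1) {v : ℝ} (hv : 0 < v) :
    ∫ θ : ℝ, Complex.exp (θ * v * Complex.I) * Fvac A ((r : ℂ) + θ * Complex.I) =
      2 * π * (Complex.exp (-r * v) * (ρ v : ℂ)) := by
  set f : ℝ → ℂ := Set.indicator (Set.Ioi 0) (fun t : ℝ => Complex.exp (-(r : ℂ) * t) * (ρ t : ℂ))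
    with hf
  have hfi : Integrable f := by
    rw [hf, integrable_indicator_iff measurableSet_Ioi]
    exact (hρ r (by simpa using hr)).1
  have hfF : FourierTransform.fourier f =
      fun ξ : ℝ => Fvac A ((r : ℂ) + ((2 * π * ξ : ℝ) : ℂ) * Complex.I) := by
    ext ξ
    rw [Real.fourier_eq', ← (hρ _ (by simpa using hr)).2, ← integral_indicator measurableSet_Ioi]
    congr 1
    ext t
    by_cases ht : t ∈ Set.Ioi (0 : ℝ)
    · simp only [hf, Set.indicator_of_mem ht, smul_eq_mul]
      rw [← mul_assoc, ← Complex.exp_add]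
      congr 2
      simp only [RCLike.inner_apply, conj_trivial]
      push_cast
      ring
    · simp only [hf, Set.indicator_of_notMem ht, smul_zero]
  have hFi : Integrable (FourierTransform.fourier f) := by
    rw [hfF]
    exact (Fvac_line_int A hA hr hr1).comp_mul_left' (R := 2 * π) (by have := Real.pi_pos; positivity)
  have hcont : ContinuousAt f v := by
    have h1 : ContinuousAt (fun t : ℝ => Complex.exp (-(r : ℂ) * t) * (ρ t : ℂ)) v := by
      have : ContinuousAt ρ v := hρc.continuousAt (Ioi_mem_nhds hv)
      exact ContinuousAt.mul (by fun_prop) (Complex.continuous_ofReal.continuousAt.comp this)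
    refine h1.congr ?_
    filter_upwards [Ioi_mem_nhds hv] with t ht
    rw [hf, Set.indicator_of_mem ht]
  have key := hfi.fourierInv_fourier_eq hFi hcont
  rw [Real.fourierInv_eq', hfF, hf, Set.indicator_of_mem (show v ∈ Set.Ioi (0 : ℝ) from hv)] at key
  rw [← key]
  have e := Measure.integral_comp_mul_left
    (fun θ : ℝ => Complex.exp (θ * v * Complex.I) * Fvac A ((r : ℂ) + θ * Complex.I)) (2 * π)
  have hpi := Real.pi_pos
  rw [abs_of_pos (by positivity)] at e
  have e' : ∫ ξ : ℝ, Complex.exp (((2 * π * inner ℝ ξ v : ℝ) : ℂ) * Complex.I) •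
      Fvac A ((r : ℂ) + ((2 * π * ξ : ℝ) : ℂ) * Complex.I) =
      ∫ ξ : ℝ, Complex.exp (((2 * π * ξ : ℝ) : ℂ) * v * Complex.I) *
        Fvac A ((r : ℂ) + ((2 * π * ξ : ℝ) : ℂ) * Complex.I) := by
    congr 1
    ext ξ
    rw [smul_eq_mul]
    congr 2
    simp only [RCLike.inner_apply, conj_trivial]
    push_cast
    ring
  rw [e', e, Complex.real_smul]
  generalize ∫ θ : ℝ, Complex.exp (θ * v * Complex.I) * Fvac A ((r : ℂ) + θ * Complex.I) = I0
  push_cast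
  have : (π : ℂ) ≠ 0 := by exact_mod_cast hpi.ne'
  field_simp

lemma main_term {A : ℝ} (hA : 0 < A) {ρ : ℝ → ℝ} (hρc : ContinuousOn ρ (Set.Ioi 0))
    (hρ : ∀ z : ℂ, 0 < z.re →
      IntegrableOn (fun t : ℝ => Complex.exp (-z * t) * (ρ t : ℂ)) (Set.Ioi 0) ∧
      ∫ t in Set.Ioi (0 : ℝ), Complex.exp (-z * t) * (ρ t : ℂ) = Fvac A z)
    {r : ℝ} (hr : 0 < r) (hr1 : r ≤ 1) {w : ℂ} (hw : r < w.re) {J : ℝ} (hJ : 0 ≤ J) :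
    ∫ θ : ℝ, Complex.exp (θ * J * Complex.I) * (Fvac A (w - ((r : ℂ) + θ * Complex.I)) *
        Fvac A ((r : ℂ) + θ * Complex.I)) =
      2 * π * Complex.exp (-r * J) *
        ∫ t in Set.Ioi (0 : ℝ), Complex.exp (-w * t) * ((ρ t : ℂ) * (ρ (J + t) : ℂ)) := by
  have hwr : 0 < (w - r).re := by simpa using hw
  have hint2 := (hρ (w - r) hwr).1
  have hint1 := Fvac_line_int A hA hr hr1
  set G : ℝ → ℝ → ℂ := fun θ t => Complex.exp (θ * (J + t) * Complex.I) *
    (Fvac A ((r : ℂ) + θ * Complex.I) * (Complex.exp (-(w - r) * t) * (ρ t : ℂ))) with hG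
  have hGi : Integrable (Function.uncurry G) (volume.prod (volume.restrict (Set.Ioi (0 : ℝ)))) := by
    have := hint1.mul_prod hint2
    refine this.bdd_mul (c := 1) (f := fun p : ℝ × ℝ => Complex.exp (p.1 * (J + p.2) * Complex.I)) ?_ ?_
    · apply Continuous.aestronglyMeasurable
      fun_prop
    · refine ae_of_all _ fun p => le_of_eq ?_
      have : ((p.1 : ℂ) * (J + p.2) * Complex.I) = ((p.1 * (J + p.2) : ℝ) : ℂ) * Complex.I := by
        push_cast; rfl
      rw [this, Complex.norm_exp_ofReal_mul_I]
  have hswap := integral_integral_swap hGi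
  have e1 : ∀ θ : ℝ, ∫ t in Set.Ioi (0 : ℝ), G θ t =
      Complex.exp (θ * J * Complex.I) * (Fvac A (w - ((r : ℂ) + θ * Complex.I)) *
        Fvac A ((r : ℂ) + θ * Complex.I)) := by
    intro θ
    rw [← (hρ (w - ((r : ℂ) + θ * Complex.I)) (by simpa using hw)).2, ← integral_mul_const,
      ← integral_const_mul]
    congr 1
    ext t
    simp only [hG]
    have : Complex.exp (-(w - ((r : ℂ) + θ * Complex.I)) * t) =
        Complex.exp (-(w - r) * t) * Complex.exp (θ * t * Complex.I) := by
      rw [← Complex.exp_add]; congr 1; ring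
    rw [this, mul_add, add_mul, Complex.exp_add]
    ring
  have e2 : ∀ t ∈ Set.Ioi (0 : ℝ), ∫ θ : ℝ, G θ t =
      2 * π * Complex.exp (-r * J) * (Complex.exp (-w * t) * ((ρ t : ℂ) * (ρ (J + t) : ℂ))) := by
    intro t ht
    have ht : 0 < t := ht
    have h := rho_inversion hA hρc hρ hr hr1 (v := J + t) (by linarith)
    have : ∀ θ : ℝ, G θ t = (Complex.exp (θ * ((J + t : ℝ) : ℂ) * Complex.I) *
        Fvac A ((r : ℂ) + θ * Complex.I)) * (Complex.exp (-(w - r) * t) * (ρ t : ℂ)) := by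
      intro θ
      simp only [hG]
      push_cast
      ring
    simp_rw [this]
    rw [integral_mul_const, h]
    have e : Complex.exp (-(r : ℂ) * ((J + t : ℝ) : ℂ)) * Complex.exp (-(w - r) * t) =
        Complex.exp (-r * J) * Complex.exp (-w * t) := by
      rw [← Complex.exp_add, ← Complex.exp_add]; congr 1; push_cast; ring
    linear_combination (2 * π * (ρ t : ℂ) * (ρ (J + t) : ℂ)) * e
  simp_rw [e1] at hswap
  rw [hswap, setIntegral_congr_fun measurableSet_Ioi e2, integral_const_mul]

/-- complex non-vacuum sum -/
def Nc (ν : ℤ → Measure ℝ) (βL βR : ℂ) : ℂ :=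
  ∑' J : ℤ, ∫ h : ℝ, Complex.exp (-βL * (h : ℂ) - βR * ((h : ℂ) + (J : ℂ))) ∂(ν J)

lemma circle_int (n : ℤ) :
    ∫ θ in (-π)..π, Complex.exp ((n : ℂ) * Complex.I * (θ : ℂ)) = if n = 0 then 2 * (π : ℂ) else 0 := by
  split_ifs with h
  · subst h
    simp
    ring
  · have hc : (n : ℂ) * Complex.I ≠ 0 := mul_ne_zero (by exact_mod_cast h) Complex.I_ne_zero
    rw [integral_exp_mul_complex hc]
    have : Complex.exp ((n : ℂ) * Complex.I * (π : ℂ)) =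
        Complex.exp ((n : ℂ) * Complex.I * ((-π : ℝ) : ℂ)) := by
      rw [Complex.exp_eq_exp_iff_exists_int]
      exact ⟨n, by push_cast; ring⟩
    rw [this, sub_self, zero_div]

lemma spin_extract {T : ℝ} {ν : ℤ → Measure ℝ} (hs : IsSpectrum T ν) {r : ℝ} (hr : 0 < r)
    {w : ℂ} (hw : r < w.re) (J : ℤ) :
    Continuous (fun θ : ℝ => Nc ν (w - ((r : ℂ) + θ * Complex.I)) ((r : ℂ) + θ * Complex.I)) ∧
    ∫ θ in (-π)..π, Complex.exp (θ * (J : ℝ) * Complex.I) *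
      Nc ν (w - ((r : ℂ) + θ * Complex.I)) ((r : ℂ) + θ * Complex.I) =
      2 * π * Complex.exp (-r * (J : ℝ)) * ∫ h : ℝ, Complex.exp (-w * h) ∂(ν J) := by
  set c : ℤ → ℂ := fun J' =>
    ∫ h : ℝ, Complex.exp (-(w - r) * (h : ℂ) - r * ((h : ℂ) + (J' : ℂ))) ∂(ν J') with hc
  have hwr : 0 < (w - r).re := by simpa using hw
  have hcs : Summable (fun J' => ‖c J'‖) := by
    refine Summable.of_nonneg_of_le (fun _ => norm_nonneg _)
      (fun J' => cterm_norm_int_le ν (w - r) r J') ?_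
    exact spec_summable hs hwr (by simpa using hr)
  have hN : ∀ θ : ℝ, Nc ν (w - ((r : ℂ) + θ * Complex.I)) ((r : ℂ) + θ * Complex.I) =
      ∑' J' : ℤ, Complex.exp (-(J' : ℂ) * θ * Complex.I) * c J' := by
    intro θ
    unfold Nc
    congr 1
    ext J'
    rw [hc, ← integral_const_mul]
    congr 1
    ext h
    rw [← Complex.exp_add]
    congr 1
    ring
  have hn : ∀ (J' : ℤ) (θ : ℝ), ‖Complex.exp (-(J' : ℂ) * θ * Complex.I)‖ = 1 := by
    intro J' θ
    have : (-(J' : ℂ) * θ * Complex.I) = ((-(J' : ℝ) * θ : ℝ) : ℂ) * Complex.I := by push_cast; rfl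
    rw [this, Complex.norm_exp_ofReal_mul_I]
  have hn' : ∀ (θ : ℝ), ‖Complex.exp (θ * (J : ℝ) * Complex.I)‖ = 1 := by
    intro θ
    have : ((θ : ℂ) * ((J : ℝ) : ℂ) * Complex.I) = ((θ * (J : ℝ) : ℝ) : ℂ) * Complex.I := by
      push_cast; rfl
    rw [this, Complex.norm_exp_ofReal_mul_I]
  constructor
  · simp_rw [hN]
    refine continuous_tsum (fun J' => by fun_prop) hcs (fun J' θ => ?_)
    rw [norm_mul, hn, one_mul]
  · simp_rw [hN, ← tsum_mul_left]
    rw [intervalIntegral.integral_of_le (by linarith [Real.pi_pos])]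
    have hF := hasSum_integral_of_summable_integral_norm
      (μ := volume.restrict (Set.Ioc (-π) π))
      (F := fun (J' : ℤ) (θ : ℝ) => Complex.exp (θ * (J : ℝ) * Complex.I) *
        (Complex.exp (-(J' : ℂ) * θ * Complex.I) * c J'))
      (fun J' => by
        have : Continuous (fun θ : ℝ => Complex.exp (θ * (J : ℝ) * Complex.I) *
          (Complex.exp (-(J' : ℂ) * θ * Complex.I) * c J')) := by fun_prop
        exact this.integrableOn_Ioc)
      (by
        simp only [norm_mul, hn, hn', one_mul, integral_const, smul_eq_mul]
        exact hcs.mul_left _)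
    have e : ∀ J' : ℤ, ∫ θ in Set.Ioc (-π) π, Complex.exp (θ * (J : ℝ) * Complex.I) *
        (Complex.exp (-(J' : ℂ) * θ * Complex.I) * c J') =
        if J' = J then 2 * (π : ℂ) * c J else 0 := by
      intro J'
      have e1 : ∀ θ : ℝ, Complex.exp (θ * (J : ℝ) * Complex.I) *
        (Complex.exp (-(J' : ℂ) * θ * Complex.I) * c J') =
        Complex.exp (((J - J' : ℤ) : ℂ) * Complex.I * (θ : ℂ)) * c J' := by
        intro θ
        rw [← mul_assoc, ← Complex.exp_add]
        congr 2
        push_cast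
        ring
      simp_rw [e1]
      rw [integral_mul_const, ← intervalIntegral.integral_of_le (by linarith [Real.pi_pos]),
        circle_int]
      by_cases hJ : J' = J
      · subst hJ; simp
      · rw [if_neg hJ, if_neg (by omega), zero_mul]
    simp_rw [e] at hF
    have h2 := hF.unique (hasSum_ite_eq J (2 * (π : ℂ) * c J))
    rw [h2, hc, mul_assoc (2 * (π : ℂ)) (Complex.exp _), ← integral_const_mul (Complex.exp _)]
    refine congrArg _ (integral_congr_ae (ae_of_all _ fun h => ?_))
    simp only
    rw [← Complex.exp_add]
    congr 1
    push_cast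
    ring

lemma Ztilde_eq (A : ℝ) (ν : ℤ → Measure ℝ) (βL βR : ℂ) :
    Ztilde A ν βL βR = Vac A βL * Vac A βR + Complex.exp ((A : ℂ) * (βL + βR)) * Nc ν βL βR := by
  unfold Ztilde Vac Nc
  rw [mul_add (A : ℂ), Complex.exp_add]
  ring

lemma diff_eq {A : ℝ} {ν : ℤ → Measure ℝ} (hmod : ModularInvariant A ν) {u z : ℂ}
    (hu : 0 < u.re) (hz : 0 < z.re) :
    Complex.exp ((A : ℂ) * (u + z)) * Nc ν u z - Fvac A u * Fvac A z =
      (2 * (π : ℂ) / u) ^ ((1 : ℂ) / 2) * (2 * (π : ℂ) / z) ^ ((1 : ℂ) / 2) *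
        (Complex.exp ((A : ℂ) * (4 * (π : ℂ) ^ 2 / u + 4 * (π : ℂ) ^ 2 / z)) *
          Nc ν (4 * (π : ℂ) ^ 2 / u) (4 * (π : ℂ) ^ 2 / z)) - Vac A u * Vac A z := by
  have h := hmod u z hu hz
  have hp : (4 * (π : ℂ) ^ 2) / (u * z) = (2 * (π : ℂ) / u) * (2 * (π : ℂ) / z) := by
    rw [div_mul_div_comm]; congr 1; ring
  have p1 : 0 < (2 * (π : ℂ) / u).re := by
    have := cdiv_re_pos (c := 2 * π) (by have := Real.pi_pos; positivity) hu
    simpa using this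
  have p2 : 0 < (2 * (π : ℂ) / z).re := by
    have := cdiv_re_pos (c := 2 * π) (by have := Real.pi_pos; positivity) hz
    simpa using this
  rw [hp, csqrt_mul p1 p2, Ztilde_eq, Ztilde_eq] at h
  unfold Fvac
  linear_combination h

lemma sqrt_le_exp {v : ℝ} (hv : 0 ≤ v) : √v ≤ Real.exp v := by
  rw [Real.sqrt_le_left (Real.exp_pos _).le]
  have := Real.add_one_le_exp v
  nlinarith

set_option maxHeartbeats 2000000 in
lemma nonvac_bound {A T : ℝ} {ν : ℤ → Measure ℝ} (hA : 0 < A) (hT : 0 < T)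
    (hs : IsSpectrum T ν) (hmod : ModularInvariant A ν) :
    ∃ C > 0, ∃ d > 0, d ≤ 4 * π ^ 2 * A ∧ ∀ r s θ : ℝ, 0 < r → r ≤ 1 / 2 → |θ| ≤ π →
      ∀ u z : ℂ, u = ((1 : ℂ) + s * Complex.I) - ((r : ℂ) + θ * Complex.I) →
        z = (r : ℂ) + θ * Complex.I →
      ‖Complex.exp ((A : ℂ) * (4 * (π : ℂ) ^ 2 / u + 4 * (π : ℂ) ^ 2 / z)) *
          Nc ν (4 * (π : ℂ) ^ 2 / u) (4 * (π : ℂ) ^ 2 / z)‖ ≤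
        C * √(1 / r) * Real.exp ((4 * π ^ 2 * A - d) / r) * Real.exp (4 * (A + 1) * s ^ 2) := by
  obtain ⟨C, hC, hC1, hC2⟩ := Nr_bound_large hA hT hs hmod (8 * π ^ 2) (by positivity)
  have hpi := Real.pi_pos
  obtain ⟨d, hd⟩ : ∃ d, d = min (4 * π ^ 2 * min A T) (3 * π ^ 2 * A) := ⟨_, rfl⟩
  have hd0 : 0 < d := hd ▸ lt_min (by have := lt_min hA hT; positivity) (by positivity)
  have hd1 : d ≤ 4 * π ^ 2 * min A T := hd ▸ min_le_left _ _
  have hd2 : d ≤ 3 * π ^ 2 * A := hd ▸ min_le_right _ _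
  have hd3 : d ≤ 4 * π ^ 2 * A := hd2.trans (by nlinarith [mul_pos (pow_pos hpi 2) hA])
  refine ⟨C * Real.exp ((A + 1) * (2 + 4 * π ^ 2)) * Real.exp (A * (8 * π ^ 2 + 1)) * Real.exp A,
    by positivity, d, hd0, hd3, ?_⟩
  intro r s θ hr hr1 hθ u z hu hz
  have hure : u.re = 1 - r := by rw [hu]; simp
  have huim : u.im = s - θ := by rw [hu]; simp
  have hzre : z.re = r := by rw [hz]; simp
  have hzim : z.im = θ := by rw [hz]; simp
  have hu0 : 0 < u.re := by rw [hure]; linarith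
  have hz0 : 0 < z.re := by rw [hzre]; linarith
  have hun : ‖u‖ ^ 2 = (1 - r) ^ 2 + (s - θ) ^ 2 := by
    rw [Complex.sq_norm, Complex.normSq_apply, hure, huim]; ring
  have hzn : ‖z‖ ^ 2 = r ^ 2 + θ ^ 2 := by
    rw [Complex.sq_norm, Complex.normSq_apply, hzre, hzim]; ring
  have hθ2 : θ ^ 2 ≤ π ^ 2 := sq_le_sq' (by linarith [(abs_le.mp hθ).1]) (abs_le.mp hθ).2
  have hun0 : 0 < ‖u‖ ^ 2 := by
    rw [hun]; have : 0 < (1 - r) ^ 2 := by nlinarith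
    positivity
  have hzn0 : 0 < ‖z‖ ^ 2 := by rw [hzn]; positivity
  have hx0 := fourpi_re_pos hu0
  have hy0 := fourpi_re_pos hz0
  have hxe := fourpi_re u
  have hye := fourpi_re z
  have hN := N_norm_le hs hx0 hy0
  rw [norm_mul, Complex.norm_exp, Complex.re_ofReal_mul, Complex.add_re]
  change ‖Nc ν _ _‖ ≤ _ at hN
  generalize (4 * (π : ℂ) ^ 2 / u).re = x at hx0 hxe hN ⊢
  generalize (4 * (π : ℂ) ^ 2 / z).re = y at hy0 hye hN ⊢
  have hxX : x ≤ 8 * π ^ 2 := by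
    rw [hxe, div_le_iff₀ hun0, hun, hure]
    have h1 : (1 - r) ≤ 2 * ((1 - r) ^ 2 + (s - θ) ^ 2) := by nlinarith [sq_nonneg (s - θ)]
    nlinarith [pow_pos hpi 2]
  have hx' : 4 * π ^ 2 / x ≤ 2 + 4 * π ^ 2 + 4 * s ^ 2 := by
    have : 4 * π ^ 2 / x = ‖u‖ ^ 2 / u.re := by rw [hxe]; field_simp
    rw [this, div_le_iff₀ hu0, hun, hure]
    have h1 : (s - θ) ^ 2 ≤ 2 * s ^ 2 + 2 * θ ^ 2 := by nlinarith [sq_nonneg (s + θ)]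
    nlinarith [sq_nonneg s, sq_nonneg π]
  have hxs : √(1 / x) * Real.exp (A * (4 * π ^ 2 / x)) ≤
      Real.exp ((A + 1) * (2 + 4 * π ^ 2)) * Real.exp (4 * (A + 1) * s ^ 2) := by
    have h1 : √(1 / x) ≤ Real.exp (4 * π ^ 2 / x) := by
      refine (sqrt_le_exp (by positivity)).trans (Real.exp_le_exp.mpr ?_)
      gcongr
      nlinarith [Real.pi_gt_three]
    calc _ ≤ Real.exp (4 * π ^ 2 / x) * Real.exp (A * (4 * π ^ 2 / x)) := by gcongr
      _ = Real.exp ((A + 1) * (4 * π ^ 2 / x)) := by rw [← Real.exp_add]; congr 1; ring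
      _ ≤ Real.exp ((A + 1) * (2 + 4 * π ^ 2 + 4 * s ^ 2)) := by gcongr
      _ = _ := by rw [← Real.exp_add]; congr 1; ring
  have hr1' : 1 ≤ √(1 / r) := by
    apply Real.one_le_sqrt.mpr
    rw [le_div_iff₀ hr]; linarith
  have eA : 1 ≤ Real.exp A := Real.one_le_exp hA.le
  by_cases hy1 : 1 ≤ y
  · have hyr : y ≤ 4 * π ^ 2 / r := by
      rw [hye, hzre, hzn, div_le_div_iff₀ (by positivity) hr]
      nlinarith [sq_nonneg θ, pow_pos hpi 2, mul_nonneg (pow_pos hpi 2).le (sq_nonneg θ)]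
    have hey : A * y + -T * y ≤ (4 * π ^ 2 * A - d) / r := by
      have h1 : A * y + -T * y ≤ (A - min A T) * y := by
        nlinarith [min_le_right A T, mul_nonneg (sub_nonneg.mpr (min_le_right A T)) hy0.le]
      have h2 : (A - min A T) * y ≤ (A - min A T) * (4 * π ^ 2 / r) :=
        mul_le_mul_of_nonneg_left hyr (sub_nonneg.mpr (min_le_left A T))
      have h3 : (A - min A T) * (4 * π ^ 2 / r) ≤ (4 * π ^ 2 * A - d) / r := by
        rw [← mul_div_assoc]
        gcongr
        linarith
      linarith
    have e1 : Real.exp (A * (x + y)) * Real.exp (-T * y) ≤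
        Real.exp (A * (8 * π ^ 2 + 1)) * Real.exp ((4 * π ^ 2 * A - d) / r) := by
      rw [← Real.exp_add, ← Real.exp_add]
      apply Real.exp_le_exp.mpr
      nlinarith
    calc Real.exp (A * (x + y)) * ‖Nc ν (4 * (π : ℂ) ^ 2 / u) (4 * (π : ℂ) ^ 2 / z)‖
        ≤ Real.exp (A * (x + y)) * (C * Real.exp (-T * y) *
          (√(1 / x) * Real.exp (A * (4 * π ^ 2 / x)))) := by
          gcongr
          exact hN.trans (hC1 x y hx0 hxX hy1)
      _ = C * (Real.exp (A * (x + y)) * Real.exp (-T * y)) *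
          (√(1 / x) * Real.exp (A * (4 * π ^ 2 / x))) := by ring
      _ ≤ C * (Real.exp (A * (8 * π ^ 2 + 1)) * Real.exp ((4 * π ^ 2 * A - d) / r)) *
          (Real.exp ((A + 1) * (2 + 4 * π ^ 2)) * Real.exp (4 * (A + 1) * s ^ 2)) := by
          gcongr
      _ = C * Real.exp ((A + 1) * (2 + 4 * π ^ 2)) * Real.exp (A * (8 * π ^ 2 + 1)) * 1 * 1 *
          Real.exp ((4 * π ^ 2 * A - d) / r) * Real.exp (4 * (A + 1) * s ^ 2) := by ring
      _ ≤ _ := by gcongr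
  · push Not at hy1
    have hy' : 4 * π ^ 2 / y ≤ 1 + π ^ 2 / r := by
      have : 4 * π ^ 2 / y = ‖z‖ ^ 2 / r := by rw [hye, hzre]; field_simp
      rw [this, hzn, div_le_iff₀ hr, add_mul, div_mul_cancel₀ _ hr.ne']
      nlinarith
    have hys : √(1 / y) ≤ √(1 / r) := by
      apply Real.sqrt_le_sqrt
      rw [hye, hzre, one_div_div, hzn, div_le_div_iff₀ (by positivity) hr]
      have hb : r ^ 2 + θ ^ 2 ≤ 4 * π ^ 2 := by nlinarith [Real.pi_gt_three]
      have := mul_le_mul_of_nonneg_right hb hr.le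
      linarith
    have e1 : Real.exp (A * (x + y)) ≤ Real.exp (A * (8 * π ^ 2 + 1)) := by
      gcongr
    have e2 : Real.exp (A * (4 * π ^ 2 / y)) ≤ Real.exp A * Real.exp ((4 * π ^ 2 * A - d) / r) := by
      rw [← Real.exp_add]
      apply Real.exp_le_exp.mpr
      have h1 : A * (4 * π ^ 2 / y) ≤ A * (1 + π ^ 2 / r) := by gcongr
      have h2 : A * (1 + π ^ 2 / r) = A + (π ^ 2 * A) / r := by ring
      have h3 : (π ^ 2 * A) / r ≤ (4 * π ^ 2 * A - d) / r := by
        gcongr; linarith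
      linarith
    calc Real.exp (A * (x + y)) * ‖Nc ν (4 * (π : ℂ) ^ 2 / u) (4 * (π : ℂ) ^ 2 / z)‖
        ≤ Real.exp (A * (8 * π ^ 2 + 1)) * (C * (Real.exp ((A + 1) * (2 + 4 * π ^ 2)) *
          Real.exp (4 * (A + 1) * s ^ 2)) *
          (√(1 / r) * (Real.exp A * Real.exp ((4 * π ^ 2 * A - d) / r)))) := by
          gcongr
          refine hN.trans ((hC2 x y hx0 hxX hy0 hy1.le).trans ?_)
          gcongr
      _ = _ := by ring

lemma diff_bound {A T : ℝ} {ν : ℤ → Measure ℝ} (hA : 0 < A) (hT : 0 < T)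
    (hs : IsSpectrum T ν) (hmod : ModularInvariant A ν) :
    ∃ C > 0, ∃ d > 0, d ≤ 4 * π ^ 2 * A ∧ ∀ r s θ : ℝ, 0 < r → r ≤ 1 / 2 → |θ| ≤ π →
      ∀ u z : ℂ, u = ((1 : ℂ) + s * Complex.I) - ((r : ℂ) + θ * Complex.I) →
        z = (r : ℂ) + θ * Complex.I →
      ‖Complex.exp ((A : ℂ) * (u + z)) * Nc ν u z - Fvac A u * Fvac A z‖ ≤
        C * (1 / r) * Real.exp ((4 * π ^ 2 * A - d) / r) * Real.exp (4 * (A + 1) * s ^ 2) := by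
  obtain ⟨C, hC, d, hd, hd1, hb⟩ := nonvac_bound hA hT hs hmod
  have hpi := Real.pi_pos
  refine ⟨√(4 * π) * √(2 * π) * C + 4 * Real.exp A, by positivity, d, hd, hd1, ?_⟩
  intro r s θ hr hr1 hθ u z hu hz
  have hB := hb r s θ hr hr1 hθ u z hu hz
  have hure : u.re = 1 - r := by rw [hu]; simp
  have hzre : z.re = r := by rw [hz]; simp
  have hu0 : 0 < u.re := by rw [hure]; linarith
  have hz0 : 0 < z.re := by rw [hzre]; linarith
  have hun : 1 / 2 ≤ ‖u‖ := by
    have := Complex.re_le_norm u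
    linarith
  have hzn : r ≤ ‖z‖ := by
    have := Complex.re_le_norm z
    linarith
  rw [diff_eq hmod hu0 hz0]
  refine (norm_sub_le _ _).trans ?_
  rw [norm_mul, norm_mul, csqrt_norm, csqrt_norm, norm_twopi_div, norm_twopi_div]
  have h1 : √(2 * π / ‖u‖) ≤ √(4 * π) := by
    apply Real.sqrt_le_sqrt
    rw [div_le_iff₀ (by linarith)]; nlinarith
  have h2 : √(2 * π / ‖z‖) ≤ √(2 * π) * √(1 / r) := by
    rw [← Real.sqrt_mul (by positivity)]
    apply Real.sqrt_le_sqrt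
    rw [mul_one_div]
    gcongr
  have h3 : ‖Vac A u * Vac A z‖ ≤ 4 * Real.exp A := by
    rw [norm_mul]
    calc ‖Vac A u‖ * ‖Vac A z‖ ≤ (2 * Real.exp (A * u.re)) * (2 * Real.exp (A * z.re)) := by
          gcongr
          · exact Vac_norm_le A hu0.le
          · exact Vac_norm_le A hz0.le
      _ = 4 * Real.exp A := by
          rw [show (2 * Real.exp (A * u.re)) * (2 * Real.exp (A * z.re)) =
            4 * (Real.exp (A * u.re) * Real.exp (A * z.re)) by ring, ← Real.exp_add, hure, hzre]
          congr 2; ring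
  have h4 : 1 ≤ (1 / r) * Real.exp ((4 * π ^ 2 * A - d) / r) * Real.exp (4 * (A + 1) * s ^ 2) := by
    have a1 : 1 ≤ 1 / r := by rw [le_div_iff₀ hr]; linarith
    have a2 : 1 ≤ Real.exp ((4 * π ^ 2 * A - d) / r) :=
      Real.one_le_exp (div_nonneg (by linarith) hr.le)
    have a3 : 1 ≤ Real.exp (4 * (A + 1) * s ^ 2) := Real.one_le_exp (by positivity)
    exact one_le_mul_of_one_le_of_one_le (one_le_mul_of_one_le_of_one_le a1 a2) a3
  calc _ ≤ √(4 * π) * (√(2 * π) * √(1 / r)) * (C * √(1 / r) *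
        Real.exp ((4 * π ^ 2 * A - d) / r) * Real.exp (4 * (A + 1) * s ^ 2)) + 4 * Real.exp A * 1 := by
        rw [mul_one]
        gcongr
    _ = √(4 * π) * √(2 * π) * C * (√(1 / r) * √(1 / r)) *
        Real.exp ((4 * π ^ 2 * A - d) / r) * Real.exp (4 * (A + 1) * s ^ 2) + 4 * Real.exp A * 1 := by
        ring
    _ ≤ √(4 * π) * √(2 * π) * C * (1 / r) *
        Real.exp ((4 * π ^ 2 * A - d) / r) * Real.exp (4 * (A + 1) * s ^ 2) + 4 * Real.exp A *
        ((1 / r) * Real.exp ((4 * π ^ 2 * A - d) / r) * Real.exp (4 * (A + 1) * s ^ 2)) := by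
        rw [Real.mul_self_sqrt (by positivity)]
        gcongr
    _ = _ := by ring


lemma Fvac_u_bound {A : ℝ} (hA : 0 < A) {u : ℂ} (h1 : 1 / 2 ≤ u.re) :
    ‖Fvac A u‖ ≤ √(4 * π) * (2 * Real.exp (A * (8 * π ^ 2))) := by
  have hpi := Real.pi_pos
  have hn : u.re ≤ ‖u‖ := Complex.re_le_norm u
  refine (Fvac_norm_le A (by linarith)).trans ?_
  gcongr
  · rw [div_le_iff₀ (by linarith)]; nlinarith
  · rw [div_le_iff₀ (by nlinarith)]
    have : 4 * π ^ 2 * u.re ≤ 4 * π ^ 2 * (2 * ‖u‖ ^ 2) := by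
      gcongr
      nlinarith
    linarith

lemma Fvac_tail_bound {A : ℝ} (hA : 0 < A) {r θ : ℝ} (hr : 0 < r) (hr1 : r ≤ 1 / 2) (hθ : π ≤ |θ|) :
    ‖Fvac A ((r : ℂ) + θ * Complex.I)‖ ≤
      √(2 * π / (1 / 2)) * (2 * (4 * π ^ 2 / (1 / 2))) * Real.exp (A * 4) *
      (1 + ‖θ‖) ^ (-(3 / 2 : ℝ)) := by
  have hpi := Real.pi_gt_three
  obtain ⟨_, h2⟩ := line_norm_ge r θ
  have hre : ((r : ℂ) + θ * Complex.I).re = r := by simp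
  refine Fvac_decay A hA (by rw [hre]; exact hr) (by norm_num) (by linarith) ?_
  rw [hre]
  have h3 : π ≤ ‖(r : ℂ) + θ * Complex.I‖ := hθ.trans h2
  have h4 : π ^ 2 ≤ ‖(r : ℂ) + θ * Complex.I‖ ^ 2 := by gcongr
  rw [div_le_iff₀ (pow_pos (by linarith) 2)]
  nlinarith [sq_nonneg π]

lemma comb {A T : ℝ} (hA : 0 < A) (hT : 0 < T) {ν : ℤ → Measure ℝ} (hs : IsSpectrum T ν)
    (hmod : ModularInvariant A ν) {ρ : ℝ → ℝ} (hρc : ContinuousOn ρ (Set.Ioi 0))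
    (hρ : ∀ z : ℂ, 0 < z.re →
      IntegrableOn (fun t : ℝ => Complex.exp (-z * t) * (ρ t : ℂ)) (Set.Ioi 0) ∧
      ∫ t in Set.Ioi (0 : ℝ), Complex.exp (-z * t) * (ρ t : ℂ) = Fvac A z) :
    ∃ C > 0, ∃ d > 0, ∀ (J : ℤ) (r s : ℝ), 0 ≤ J → 0 < r → r ≤ 1 / 2 →
      ‖(∫ h : ℝ, Complex.exp (-(1 + s * Complex.I) * ((h : ℂ) - A)) ∂(ν J)) -
        ∫ t in Set.Ioi (0 : ℝ), Complex.exp (-(1 + s * Complex.I) * t) *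
          ((ρ t : ℂ) * (ρ ((J : ℝ) + t) : ℂ))‖ ≤
        C * (1 / r) * Real.exp (r * J + (4 * π ^ 2 * A - d) / r + 4 * (A + 1) * s ^ 2) := by
  obtain ⟨C, hC, d, hd, hdA, hdiff⟩ := diff_bound hA hT hs hmod
  have hpi := Real.pi_pos
  set K : ℝ := (√(4 * π) * (2 * Real.exp (A * (8 * π ^ 2)))) *
    (√(2 * π / (1 / 2)) * (2 * (4 * π ^ 2 / (1 / 2))) * Real.exp (A * 4)) with hK
  have hK0 : 0 ≤ K := by positivity
  set I0 : ℝ := ∫ θ : ℝ, (1 + ‖θ‖) ^ (-(3 / 2 : ℝ)) with hI0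
  have hI00 : 0 ≤ I0 := integral_nonneg fun θ => by positivity
  refine ⟨C + K * I0, by positivity, d, hd, ?_⟩
  intro J r s hJ hr hr1
  set w : ℂ := 1 + s * Complex.I with hw
  have hwre : w.re = 1 := by simp [hw]
  set F : ℝ → ℂ := fun θ => Fvac A (w - ((r : ℂ) + θ * Complex.I)) *
        Fvac A ((r : ℂ) + θ * Complex.I) with hF
  set N : ℝ → ℂ := fun θ => Nc ν (w - ((r : ℂ) + θ * Complex.I)) ((r : ℂ) + θ * Complex.I) with hN
  set E : ℝ → ℂ := fun θ => Complex.exp (θ * (J : ℝ) * Complex.I) with hE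
  have hEn : ∀ θ, ‖E θ‖ = 1 := by
    intro θ
    have : (θ * (J : ℝ) * Complex.I : ℂ) = ((θ * J : ℝ) : ℂ) * Complex.I := by push_cast; ring
    simp only [hE]
    rw [this, Complex.norm_exp_ofReal_mul_I]
  have hEc : Continuous E := by simp only [hE]; fun_prop
  obtain ⟨hNc, hspin⟩ := spin_extract hs hr (w := w) (by rw [hwre]; linarith) J
  have hmain := main_term hA hρc hρ hr (by linarith) (w := w) (by rw [hwre]; linarith)
    (J := (J : ℝ)) (by exact_mod_cast hJ)
  set P : ℂ := ∫ h : ℝ, Complex.exp (-w * ((h : ℂ) - A)) ∂(ν J) with hP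
  set Q : ℂ := ∫ t in Set.Ioi (0 : ℝ), Complex.exp (-w * t) *
          ((ρ t : ℂ) * (ρ ((J : ℝ) + t) : ℂ)) with hQ
  have hPe : P = Complex.exp (A * w) * ∫ h : ℝ, Complex.exp (-w * h) ∂(ν J) := by
    rw [hP, ← integral_const_mul]
    congr 1; ext h
    rw [← Complex.exp_add]; congr 1; ring
  have hure : ∀ θ : ℝ, (w - ((r : ℂ) + θ * Complex.I)).re = 1 - r := by
    intro θ; simp [hwre]
  have hFc : Continuous F := by
    apply Continuous.mul _ (Fvac_line_cont A hr)
    rw [continuous_iff_continuousAt]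
    intro θ
    have h : ContinuousAt (Fvac A) (w - ((r : ℂ) + θ * Complex.I)) :=
      Fvac_cont A (by rw [hure]; linarith)
    exact ContinuousAt.comp (f := fun θ : ℝ => w - ((r : ℂ) + θ * Complex.I)) (x := θ) h
      (by fun_prop)
  have hEF : Integrable (fun θ => E θ * F θ) := by
    refine Integrable.mono' (((Fvac_line_int A hA hr (by linarith)).norm).const_mul
      (√(4 * π) * (2 * Real.exp (A * (8 * π ^ 2))))) (hEc.mul hFc).aestronglyMeasurable
      (ae_of_all _ fun θ => ?_)
    rw [norm_mul, hEn, one_mul, hF, norm_mul]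
    gcongr
    exact Fvac_u_bound hA (by rw [hure]; linarith)
  set X : ℝ := 1 / r * Real.exp ((4 * π ^ 2 * A - d) / r) * Real.exp (4 * (A + 1) * s ^ 2) with hX
  have hX1 : 1 ≤ X := by
    have a1 : 1 ≤ 1 / r := by rw [le_div_iff₀ hr]; linarith
    have a2 : 1 ≤ Real.exp ((4 * π ^ 2 * A - d) / r) :=
      Real.one_le_exp (div_nonneg (by linarith) hr.le)
    have a3 : 1 ≤ Real.exp (4 * (A + 1) * s ^ 2) := Real.one_le_exp (by positivity)
    exact one_le_mul_of_one_le_of_one_le (one_le_mul_of_one_le_of_one_le a1 a2) a3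
  -- difference on the circle
  have hc1 : ‖∫ θ in (-π)..π, E θ * (Complex.exp (A * w) * N θ - F θ)‖ ≤ C * X * |π - (-π)| := by
    apply intervalIntegral.norm_integral_le_of_norm_le_const
    intro θ hθ
    rw [Set.uIoc_of_le (by linarith)] at hθ
    rw [norm_mul, hEn, one_mul]
    have := hdiff r s θ hr hr1 (abs_le.mpr ⟨hθ.1.le, hθ.2⟩) _ _ rfl rfl
    have e : (1 + s * Complex.I - ((r : ℂ) + θ * Complex.I) + ((r : ℂ) + θ * Complex.I)) = w := by
      rw [hw]; ring
    rw [e] at this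
    refine this.trans (le_of_eq ?_)
    rw [hX]; ring
  have hsplit : ∫ θ in (-π)..π, E θ * (Complex.exp (A * w) * N θ - F θ) =
      Complex.exp (A * w) * (∫ θ in (-π)..π, E θ * N θ) - ∫ θ in (-π)..π, E θ * F θ := by
    rw [← intervalIntegral.integral_const_mul, ← intervalIntegral.integral_sub]
    · congr 1; ext θ; ring
    · exact ((hEc.mul hNc).const_mul _).intervalIntegrable _ _
    · exact (hEc.mul hFc).intervalIntegrable _ _
  have htail : ‖(∫ θ, E θ * F θ) - ∫ θ in (-π)..π, E θ * F θ‖ ≤ K * I0 := by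
    rw [intervalIntegral.integral_of_le (by linarith),
      ← integral_add_compl measurableSet_Ioc hEF, add_sub_cancel_left, hI0, ← integral_const_mul]
    refine (norm_integral_le_integral_norm _).trans ?_
    calc ∫ θ in (Set.Ioc (-π) π)ᶜ, ‖E θ * F θ‖ ≤
        ∫ θ in (Set.Ioc (-π) π)ᶜ, K * (1 + ‖θ‖) ^ (-(3 / 2 : ℝ)) := by
          apply setIntegral_mono_on hEF.norm.integrableOn
            (decay_integrable.const_mul K).integrableOn measurableSet_Ioc.compl
          intro θ hθ
          rw [norm_mul, hEn, one_mul, hF, norm_mul, hK, mul_assoc]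
          have hθ' : π ≤ |θ| := by
            by_contra hcon
            push Not at hcon
            rw [abs_lt] at hcon
            exact hθ ⟨hcon.1, hcon.2.le⟩
          have b1 := Fvac_u_bound hA (u := w - ((r : ℂ) + θ * Complex.I)) (by rw [hure]; linarith)
          have b2 := Fvac_tail_bound hA hr hr1 hθ'
          exact mul_le_mul b1 b2 (norm_nonneg _) (by positivity)
      _ ≤ _ := setIntegral_le_integral (decay_integrable.const_mul K)
          (ae_of_all _ fun θ => by positivity)
  have hfin : 2 * π * Complex.exp (-r * (J : ℝ)) * (P - Q) =
      (∫ θ in (-π)..π, E θ * (Complex.exp (A * w) * N θ - F θ)) -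
        ((∫ θ, E θ * F θ) - ∫ θ in (-π)..π, E θ * F θ) := by
    rw [hsplit, hspin]
    have : ∫ θ, E θ * F θ = 2 * π * Complex.exp (-r * (J : ℝ)) * Q := hmain
    rw [this, hPe]
    ring
  have hnorm : 2 * π * Real.exp (-(r * J)) * ‖P - Q‖ ≤ C * X * (2 * π) + K * I0 := by
    have e1 : ‖2 * π * Complex.exp (-r * (J : ℝ)) * (P - Q)‖ =
        2 * π * Real.exp (-(r * J)) * ‖P - Q‖ := by
      have : (-r * (J : ℝ) : ℂ) = ((-(r * J) : ℝ) : ℂ) := by push_cast; ring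
      rw [this, norm_mul, norm_mul, norm_mul, Complex.norm_exp_ofReal]
      simp [abs_of_pos hpi]
    rw [← e1, hfin]
    refine (norm_sub_le _ _).trans (add_le_add ?_ htail)
    refine hc1.trans (le_of_eq ?_)
    rw [sub_neg_eq_add, abs_of_pos (by linarith)]
    ring
  have hk2 : K * I0 ≤ K * I0 * X * (2 * π) := by
    have h1 : 1 ≤ X * (2 * π) := by nlinarith [Real.pi_gt_three]
    have h2 : 0 ≤ K * I0 := by positivity
    nlinarith
  have hf2 : Real.exp (-(r * J)) * ‖P - Q‖ ≤ (C + K * I0) * X := by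
    have : (2 * π) * (Real.exp (-(r * J)) * ‖P - Q‖) ≤ (2 * π) * ((C + K * I0) * X) := by
      nlinarith
    exact le_of_mul_le_mul_left this (by positivity)
  calc ‖P - Q‖ = Real.exp (r * J) * (Real.exp (-(r * J)) * ‖P - Q‖) := by
        rw [← mul_assoc, ← Real.exp_add]; simp
    _ ≤ Real.exp (r * J) * ((C + K * I0) * X) := by gcongr
    _ = _ := by rw [hX, Real.exp_add, Real.exp_add]; ring


lemma gauss_tail {σ Λ : ℝ} (hσ : 0 < σ) (hΛ : 0 < Λ) :
    (ProbabilityTheory.gaussianReal 0 (Real.toNNReal (σ ^ 2))).real {s : ℝ | Λ < |s|} ≤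
      2 * Real.exp (-(Λ ^ 2 / (2 * σ ^ 2))) := by
  set v := Real.toNNReal (σ ^ 2) with hv
  have hvc : (v : ℝ) = σ ^ 2 := Real.coe_toNNReal _ (by positivity)
  set γ := ProbabilityTheory.gaussianReal 0 v with hγ
  have hmgf : ∀ t, ProbabilityTheory.mgf id γ t = Real.exp (0 * t + v * t ^ 2 / 2) :=
    fun t => ProbabilityTheory.mgf_gaussianReal (by simp [hγ]) t
  have h1 := ProbabilityTheory.measure_ge_le_exp_mul_mgf (μ := γ) (X := id) Λ
    (t := Λ / σ ^ 2) (by positivity) (ProbabilityTheory.integrable_exp_mul_gaussianReal _)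
  have h2 := ProbabilityTheory.measure_le_le_exp_mul_mgf (μ := γ) (X := id) (-Λ)
    (t := -(Λ / σ ^ 2)) (by rw [neg_nonpos]; positivity)
    (ProbabilityTheory.integrable_exp_mul_gaussianReal _)
  rw [hmgf, hvc, ← Real.exp_add] at h1 h2
  have e1 : -(Λ / σ ^ 2) * Λ + (0 * (Λ / σ ^ 2) + σ ^ 2 * (Λ / σ ^ 2) ^ 2 / 2) =
      -(Λ ^ 2 / (2 * σ ^ 2)) := by field_simp; ring
  have e2 : - -(Λ / σ ^ 2) * -Λ + (0 * -(Λ / σ ^ 2) + σ ^ 2 * (-(Λ / σ ^ 2)) ^ 2 / 2) =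
      -(Λ ^ 2 / (2 * σ ^ 2)) := by field_simp; ring
  rw [e1] at h1
  rw [e2] at h2
  have hsub : {s : ℝ | Λ < |s|} ⊆ {s : ℝ | Λ ≤ id s} ∪ {s : ℝ | id s ≤ -Λ} := by
    intro s hs
    rcases lt_abs.mp (show Λ < |s| from hs) with h | h
    · left; exact h.le
    · right; change s ≤ -Λ; linarith
  calc γ.real {s : ℝ | Λ < |s|} ≤ γ.real ({s : ℝ | Λ ≤ id s} ∪ {s : ℝ | id s ≤ -Λ}) :=
        measureReal_mono hsub
    _ ≤ _ := measureReal_union_le _ _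
    _ ≤ _ := by linarith

lemma gauss_test (P : Measure ℝ) [IsFiniteMeasure P] {σ : ℝ} (x : ℝ) :
    ∫ s, Complex.exp (-(s * x * Complex.I)) * charFun P s
      ∂(ProbabilityTheory.gaussianReal 0 (Real.toNNReal (σ ^ 2))) =
    ((∫ t, Real.exp (-(σ ^ 2 * (t - x) ^ 2 / 2)) ∂P : ℝ) : ℂ) := by
  set v := Real.toNNReal (σ ^ 2) with hv
  have hvc : (v : ℝ) = σ ^ 2 := Real.coe_toNNReal _ (by positivity)
  set γ := ProbabilityTheory.gaussianReal 0 v with hγ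
  have h1 : ∀ s : ℝ, Complex.exp (-(s * x * Complex.I)) * charFun P s =
      ∫ t, Complex.exp (s * (t - x) * Complex.I) ∂P := by
    intro s
    rw [charFun_apply_real, ← integral_const_mul]
    congr 1; ext t
    rw [← Complex.exp_add]; congr 1; ring
  simp_rw [h1]
  rw [integral_integral_swap, ← integral_complex_ofReal]
  · congr 1; ext t
    have h2 := ProbabilityTheory.charFun_gaussianReal (μ := 0) (v := v) (t - x)
    rw [charFun_apply_real] at h2
    have h3 : ∀ s : ℝ, Complex.exp (s * (t - x) * Complex.I) =
      Complex.exp (((t - x : ℝ) : ℂ) * s * Complex.I) := by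
      intro s; congr 1; push_cast; ring
    simp_rw [h3]
    rw [h2, Complex.ofReal_exp]
    congr 1
    have : ((v : ℝ) : ℂ) = (σ : ℂ) ^ 2 := by rw [hvc]; push_cast; rfl
    rw [this]
    push_cast; ring
  · refine Integrable.mono' (integrable_const (1 : ℝ)) ?_ (ae_of_all _ fun p => ?_)
    · apply Continuous.aestronglyMeasurable
      unfold Function.uncurry
      fun_prop
    · change ‖Complex.exp (p.1 * (p.2 - x) * Complex.I)‖ ≤ 1
      have : (p.1 * (p.2 - x) * Complex.I : ℂ) = ((p.1 * (p.2 - x) : ℝ) : ℂ) * Complex.I := by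
        push_cast; ring
      rw [this, Complex.norm_exp_ofReal_mul_I]

lemma gap_contra (P Q : Measure ℝ) [IsFiniteMeasure P] [IsFiniteMeasure Q] {σ Λ δ η x : ℝ}
    (hσ : 0 < σ) (hΛ : 0 < Λ) (hδ : 0 < δ)
    (h : ∀ s, |s| ≤ Λ → ‖charFun P s - charFun Q s‖ ≤ η)
    (hP : P (Set.Ioo (x - δ) (x + δ)) = 0) :
    ∫ t, Real.exp (-(σ ^ 2 * (t - x) ^ 2 / 2)) ∂Q ≤
      η + (2 * Q.real Set.univ + η) * (2 * Real.exp (-(Λ ^ 2 / (2 * σ ^ 2)))) +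
        Real.exp (-(σ ^ 2 * δ ^ 2 / 2)) * (Q.real Set.univ + η) := by
  set p := P.real Set.univ with hp
  set q := Q.real Set.univ with hq
  have hq0 : 0 ≤ q := measureReal_nonneg
  have hη : 0 ≤ η := (norm_nonneg _).trans (h 0 (by simpa using hΛ.le))
  have hpq : p ≤ q + η := by
    have := h 0 (by simpa using hΛ.le)
    rw [charFun_zero, charFun_zero, ← Complex.ofReal_sub, Complex.norm_real, Real.norm_eq_abs] at this
    have := (abs_le.mp this).2
    linarith
  set γ := ProbabilityTheory.gaussianReal 0 (Real.toNNReal (σ ^ 2)) with hγ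
  have tail := gauss_tail hσ hΛ
  rw [← hγ] at tail
  set τ := γ.real {s : ℝ | Λ < |s|} with hτ
  set φ : ℝ → ℝ := fun t => Real.exp (-(σ ^ 2 * (t - x) ^ 2 / 2)) with hφ
  have eP := gauss_test P (σ := σ) x
  have eQ := gauss_test Q (σ := σ) x
  rw [← hγ] at eP eQ
  have nrm : ∀ s : ℝ, ‖Complex.exp (-(s * x * Complex.I))‖ = 1 := by
    intro s
    have : (-(s * x * Complex.I) : ℂ) = ((-(s * x) : ℝ) : ℂ) * Complex.I := by push_cast; ring
    rw [this, Complex.norm_exp_ofReal_mul_I]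
  have hcm : ∀ (R : Measure ℝ) [IsFiniteMeasure R], Integrable
      (fun s : ℝ => Complex.exp (-(s * x * Complex.I)) * charFun R s) γ := by
    intro R _
    refine Integrable.mono' (integrable_const (R.real Set.univ)) ?_ (ae_of_all _ fun s => ?_)
    · apply AEStronglyMeasurable.mul
      · exact Continuous.aestronglyMeasurable (by fun_prop)
      · exact stronglyMeasurable_charFun.aestronglyMeasurable
    · rw [norm_mul, nrm, one_mul]
      exact norm_charFun_le s
  have hms : MeasurableSet {s : ℝ | Λ < |s|} := measurableSet_lt measurable_const (by fun_prop)
  have hdiff : ‖((∫ t, φ t ∂P : ℝ) : ℂ) - ((∫ t, φ t ∂Q : ℝ) : ℂ)‖ ≤ η + (p + q) * τ := by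
    rw [← eP, ← eQ, ← integral_sub (hcm P) (hcm Q)]
    have hb : ∀ s : ℝ, ‖Complex.exp (-(s * x * Complex.I)) * charFun P s -
        Complex.exp (-(s * x * Complex.I)) * charFun Q s‖ ≤
        η + {s : ℝ | Λ < |s|}.indicator (fun _ => p + q) s := by
      intro s
      rw [← mul_sub, norm_mul, nrm, one_mul]
      by_cases hs : Λ < |s|
      · rw [Set.indicator_of_mem (by exact hs)]
        have := norm_sub_le (charFun P s) (charFun Q s)
        have h1 := norm_charFun_le (μ := P) s
        have h2 := norm_charFun_le (μ := Q) s
        linarith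
      · rw [Set.indicator_of_notMem (by exact hs), add_zero]
        exact h s (not_lt.mp hs)
    refine (norm_integral_le_of_norm_le (g := fun s => η + {s : ℝ | Λ < |s|}.indicator
      (fun _ => p + q) s) ?_ (ae_of_all _ hb)).trans (le_of_eq ?_)
    · exact (integrable_const _).add ((integrable_const _).indicator hms)
    · rw [integral_add (integrable_const _) ((integrable_const _).indicator hms),
        integral_indicator_const _ hms]
      simp [hτ, mul_comm]
  have hPφ : ∫ t, φ t ∂P ≤ Real.exp (-(σ ^ 2 * δ ^ 2 / 2)) * p := by
    have : ∀ᵐ t ∂P, ‖φ t‖ ≤ Real.exp (-(σ ^ 2 * δ ^ 2 / 2)) := by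
      have h0 : ∀ᵐ t ∂P, t ∉ Set.Ioo (x - δ) (x + δ) := by
        rw [ae_iff]; simp only [not_not]; exact hP
      filter_upwards [h0] with t ht
      rw [Real.norm_of_nonneg (Real.exp_pos _).le]
      apply Real.exp_le_exp.mpr
      have h1 : δ ≤ |t - x| := by
        by_contra hc
        push Not at hc
        rw [abs_lt] at hc
        exact ht ⟨by linarith, by linarith⟩
      have h2 : δ ^ 2 ≤ (t - x) ^ 2 := by rw [← sq_abs (t - x)]; gcongr
      have := mul_le_mul_of_nonneg_left h2 (sq_nonneg σ)
      linarith
    exact (le_abs_self _).trans (norm_integral_le_of_norm_le_const this)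
  rw [← Complex.ofReal_sub, Complex.norm_real, Real.norm_eq_abs] at hdiff
  have h1 := (abs_le.mp hdiff).1
  have hτ0 : 0 ≤ τ := measureReal_nonneg
  have h2 : (p + q) * τ ≤ (2 * q + η) * (2 * Real.exp (-(Λ ^ 2 / (2 * σ ^ 2)))) :=
    mul_le_mul (by linarith) tail hτ0 (by linarith)
  have h3 := mul_le_mul_of_nonneg_left hpq (Real.exp_pos (-(σ ^ 2 * δ ^ 2 / 2))).le
  linarith


lemma rho_upper {A : ℝ} (hA : 0 < A) {ρ : ℝ → ℝ} (hρc : ContinuousOn ρ (Set.Ioi 0))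
    (hρ0 : ∀ t, 0 < t → 0 ≤ ρ t)
    (hρu : ∀ t, 1 ≤ t → ρ t ≤ 4 * Real.exp (4 * π * √A * √t))
    (hρ : ∀ z : ℂ, 0 < z.re →
      IntegrableOn (fun t : ℝ => Complex.exp (-z * t) * (ρ t : ℂ)) (Set.Ioi 0) ∧
      ∫ t in Set.Ioi (0 : ℝ), Complex.exp (-z * t) * (ρ t : ℂ) = Fvac A z) :
    ∃ C > 0, ∀ J : ℝ, 1 ≤ J →
      IntegrableOn (fun t => Real.exp (-t) * (ρ t * ρ (J + t))) (Set.Ioi 0) ∧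
      ∫ t in Set.Ioi 0, Real.exp (-t) * (ρ t * ρ (J + t)) ≤ C * Real.exp (4 * π * √A * √J) := by
  have hpi := Real.pi_pos
  have hint : IntegrableOn (fun t : ℝ => Real.exp (-(t / 2)) * ρ t) (Set.Ioi 0) := by
    have h := (hρ ((1 / 2 : ℝ) : ℂ) (by rw [Complex.ofReal_re]; norm_num)).1.norm
    refine h.congr ?_
    filter_upwards [ae_restrict_mem measurableSet_Ioi] with t ht
    have : (-((1 / 2 : ℝ) : ℂ) * t) = ((-(t / 2) : ℝ) : ℂ) := by push_cast; ring
    rw [norm_mul, this, Complex.norm_exp_ofReal, Complex.norm_real, Real.norm_of_nonneg (hρ0 t ht)]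
  set I1 := ∫ t in Set.Ioi (0 : ℝ), Real.exp (-(t / 2)) * ρ t with hI1
  have hI10 : 0 ≤ I1 := setIntegral_nonneg measurableSet_Ioi fun t ht =>
    mul_nonneg (Real.exp_pos _).le (hρ0 t ht)
  set K := 4 * Real.exp (8 * π ^ 2 * A) with hK
  refine ⟨K * I1 + 1, by positivity, fun J hJ => ?_⟩
  set M := Real.exp (4 * π * √A * √J) with hM
  have hb : ∀ t ∈ Set.Ioi (0 : ℝ), Real.exp (-t) * (ρ t * ρ (J + t)) ≤
      (K * M) * (Real.exp (-(t / 2)) * ρ t) := by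
    intro t ht
    have ht0 : 0 < t := ht
    have h1 : ρ (J + t) ≤ 4 * (M * Real.exp (t / 2 + 8 * π ^ 2 * A)) := by
      refine (hρu _ (by linarith)).trans ?_
      rw [hM, ← Real.exp_add]
      gcongr
      have a1 : √(J + t) ≤ √J + √t := by
        rw [Real.sqrt_le_left (by positivity)]
        nlinarith [Real.sq_sqrt ht0.le, Real.sq_sqrt (show 0 ≤ J by linarith),
          mul_nonneg (Real.sqrt_nonneg J) (Real.sqrt_nonneg t)]
      have a2 : 4 * π * √A * √t ≤ t / 2 + 8 * π ^ 2 * A := by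
        have b1 := Real.sq_sqrt hA.le
        have b2 := Real.sq_sqrt ht0.le
        nlinarith [sq_nonneg (√t - 4 * π * √A)]
      have a3 := mul_le_mul_of_nonneg_left a1 (show 0 ≤ 4 * π * √A by positivity)
      linarith
    have h2 : Real.exp (-t) = Real.exp (-(t / 2)) * Real.exp (-(t / 2)) := by
      rw [← Real.exp_add]; congr 1; ring
    have h3 : Real.exp (-(t / 2)) * Real.exp (t / 2) = 1 := by
      rw [← Real.exp_add]; simp
    calc Real.exp (-t) * (ρ t * ρ (J + t)) ≤
        Real.exp (-t) * (ρ t * (4 * (M * Real.exp (t / 2 + 8 * π ^ 2 * A)))) := by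
          have := hρ0 t ht0
          gcongr
      _ = (K * M) * (Real.exp (-(t / 2)) * ρ t) * (Real.exp (-(t / 2)) * Real.exp (t / 2)) := by
          rw [h2, Real.exp_add, hK]; ring
      _ = _ := by rw [h3, mul_one]
  have hn : ∀ t ∈ Set.Ioi (0 : ℝ), 0 ≤ Real.exp (-t) * (ρ t * ρ (J + t)) := by
    intro t ht
    have ht0 : 0 < t := ht
    exact mul_nonneg (Real.exp_pos _).le (mul_nonneg (hρ0 t ht) (hρ0 _ (by linarith)))
  have hi : IntegrableOn (fun t => Real.exp (-t) * (ρ t * ρ (J + t))) (Set.Ioi 0) := by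
    refine Integrable.mono' (hint.const_mul (K * M)) ?_ ?_
    · apply ContinuousOn.aestronglyMeasurable _ measurableSet_Ioi
      apply ContinuousOn.mul (by fun_prop)
      apply hρc.mul
      apply hρc.comp (by fun_prop)
      intro t ht
      have ht0 : 0 < t := ht
      exact show 0 < J + t by linarith
    · filter_upwards [ae_restrict_mem measurableSet_Ioi] with t ht
      rw [Real.norm_of_nonneg (hn t ht)]
      exact hb t ht
  refine ⟨hi, ?_⟩
  calc _ ≤ ∫ t in Set.Ioi (0 : ℝ), (K * M) * (Real.exp (-(t / 2)) * ρ t) :=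
        setIntegral_mono_on hi (hint.const_mul _) measurableSet_Ioi hb
    _ = K * I1 * M := by rw [integral_const_mul]; ring
    _ ≤ _ := by
        have : 0 < M := Real.exp_pos _
        gcongr
        linarith

lemma rho_lower {A : ℝ} (hA : 0 < A) {ρ : ℝ → ℝ} (hρc : ContinuousOn ρ (Set.Ioi 0))
    {m : ℝ} (hm : 0 < m) (hρm : ∀ t, 0 < t → m * √t ≤ ρ t) {t0 : ℝ}
    (hρl : ∀ t, t0 ≤ t → Real.exp (4 * π * √A * √t) / (4 * √t) ≤ ρ t)
    (hint : ∀ J : ℝ, 1 ≤ J → IntegrableOn (fun t => Real.exp (-t) * (ρ t * ρ (J + t))) (Set.Ioi 0))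
    {X : ℝ} (hX : 0 < X) :
    ∃ c > 0, ∀ J : ℝ, 1 ≤ J → t0 ≤ J → ∀ x0, 0 ≤ x0 → x0 ≤ X → ∀ σ, 1 ≤ σ → σ ≤ J →
      c * Real.exp (4 * π * √A * √J) / J ^ 3 ≤
        ∫ t in Set.Ioi 0, Real.exp (-(σ ^ 2 * (t - x0) ^ 2 / 2)) *
          (Real.exp (-t) * (ρ t * ρ (J + t))) := by
  have hpi := Real.pi_pos
  have hρ0 : ∀ t, 0 < t → 0 ≤ ρ t := fun t ht => (by positivity : 0 ≤ m * √t).trans (hρm t ht)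
  refine ⟨Real.exp (-(1 / 2)) * Real.exp (-(X + 1)) * (m / 2) / (4 * (X + 2)) / 2, by positivity, ?_⟩
  intro J hJ hJt x0 hx0 hx0X σ hσ hσJ
  have hσ0 : 0 < σ := by linarith
  have hJ0 : 0 < J := by linarith
  have hiσ : 1 / σ ≤ 1 := by rw [div_le_one hσ0]; exact hσ
  have hiσ0 : 0 < 1 / σ := by positivity
  set M := Real.exp (4 * π * √A * √J) with hM
  set f : ℝ → ℝ := fun t => Real.exp (-(σ ^ 2 * (t - x0) ^ 2 / 2)) *
          (Real.exp (-t) * (ρ t * ρ (J + t))) with hf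
  have hn : ∀ t ∈ Set.Ioi (0 : ℝ), 0 ≤ Real.exp (-t) * (ρ t * ρ (J + t)) := by
    intro t ht
    have ht0 : 0 < t := ht
    exact mul_nonneg (Real.exp_pos _).le (mul_nonneg (hρ0 t ht) (hρ0 _ (by linarith)))
  have hfn : ∀ t ∈ Set.Ioi (0 : ℝ), 0 ≤ f t := fun t ht =>
    mul_nonneg (Real.exp_pos _).le (hn t ht)
  have hfi : IntegrableOn f (Set.Ioi 0) := by
    refine Integrable.mono' (hint J hJ) ?_ ?_
    · apply AEStronglyMeasurable.mul
      · exact Continuous.aestronglyMeasurable (by fun_prop)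
      · exact (hint J hJ).aestronglyMeasurable
    · filter_upwards [ae_restrict_mem measurableSet_Ioi] with t ht
      rw [Real.norm_of_nonneg (hfn t ht)]
      exact mul_le_of_le_one_left (hn t ht) (Real.exp_le_one_iff.mpr (by
        have : 0 ≤ σ ^ 2 * (t - x0) ^ 2 / 2 := by positivity
        linarith))
  set S := Set.Icc (x0 + 1 / σ / 2) (x0 + 1 / σ) with hS
  have hSsub : S ⊆ Set.Ioi 0 := by
    intro t ht
    have := ht.1
    exact show 0 < t by linarith
  set k := Real.exp (-(1 / 2)) * (Real.exp (-(X + 1)) * ((m / 2 / σ) * (M / (4 * ((X + 2) * J)))))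
    with hk
  have hlow : ∀ t ∈ S, k ≤ f t := by
    intro t ht
    have h1 := ht.1
    have h2 := ht.2
    have ht0 : 0 < t := hSsub ht
    have a1 : Real.exp (-(1 / 2)) ≤ Real.exp (-(σ ^ 2 * (t - x0) ^ 2 / 2)) := by
      apply Real.exp_le_exp.mpr
      have b1 : 0 ≤ σ * (t - x0) := mul_nonneg hσ0.le (by linarith)
      have b2 : σ * (t - x0) ≤ 1 := by
        have := mul_le_mul_of_nonneg_left (show t - x0 ≤ 1 / σ by linarith) hσ0.le
        rwa [mul_one_div_cancel hσ0.ne'] at this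
      nlinarith
    have a2 : Real.exp (-(X + 1)) ≤ Real.exp (-t) := Real.exp_le_exp.mpr (by linarith)
    have a3 : m / 2 / σ ≤ ρ t := by
      refine le_trans ?_ (hρm t ht0)
      have b1 : 1 / σ / 2 ≤ √t := by
        apply Real.le_sqrt_of_sq_le
        nlinarith
      calc m / 2 / σ = m * (1 / σ / 2) := by field_simp
        _ ≤ _ := by gcongr
    have a4 : M / (4 * ((X + 2) * J)) ≤ ρ (J + t) := by
      refine le_trans ?_ (hρl (J + t) (by linarith))
      rw [hM]
      have hs0 : 0 < √(J + t) := Real.sqrt_pos.mpr (by linarith)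
      gcongr
      · linarith
      · calc √(J + t) ≤ J + t := by
              rw [Real.sqrt_le_left (by linarith)]
              nlinarith
          _ ≤ (X + 2) * J := by nlinarith
    have p4 : 0 ≤ ρ (J + t) := hρ0 _ (by linarith)
    have p3 := hρ0 t ht0
    rw [hk]
    change _ ≤ Real.exp (-(σ ^ 2 * (t - x0) ^ 2 / 2)) * (Real.exp (-t) * (ρ t * ρ (J + t)))
    gcongr
  have hvol : volume.real S = 1 / σ / 2 := by
    rw [hS, Real.volume_real_Icc_of_le (by linarith)]
    ring
  calc _ ≤ k * (1 / σ / 2) := by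
        have e : k * (1 / σ / 2) = Real.exp (-(1 / 2)) * Real.exp (-(X + 1)) * (m / 2) /
          (4 * (X + 2)) / 2 * M / (σ ^ 2 * J) := by
          rw [hk]; field_simp
        rw [e]
        have hM0 : 0 < M := Real.exp_pos _
        gcongr
        calc σ ^ 2 * J ≤ J ^ 2 * J := by gcongr
          _ = J ^ 3 := by ring
    _ = ∫ t in S, k := by rw [setIntegral_const, hvol, smul_eq_mul, mul_comm]
    _ ≤ ∫ t in S, f t := setIntegral_mono_on (integrableOn_const (by rw [hS]; simp))
        (hfi.mono_set hSsub) measurableSet_Icc hlow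
    _ ≤ ∫ t in Set.Ioi 0, f t := setIntegral_mono_set hfi
        ((ae_restrict_mem measurableSet_Ioi).mono hfn) hSsub.eventuallyLE


lemma bridge {μ : Measure ℝ} {A : ℝ} (hμ : Integrable (fun h : ℝ => Real.exp (-(h - A))) μ)
    {g : ℝ → ℝ} (hg : IntegrableOn (fun t => Real.exp (-t) * g t) (Set.Ioi 0))
    (hg0 : ∀ t, 0 < t → 0 ≤ g t) {σ Λ δ η x : ℝ}
    (hσ : 0 < σ) (hΛ : 0 < Λ) (hδ : 0 < δ)
    (h : ∀ s : ℝ, |s| ≤ Λ → ‖(∫ h : ℝ, Complex.exp (-(1 + s * Complex.I) * ((h : ℂ) - A)) ∂μ) -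
        ∫ t in Set.Ioi (0 : ℝ), Complex.exp (-(1 + s * Complex.I) * t) * (g t : ℂ)‖ ≤ η)
    (hP : μ (Set.Ioo (x - δ) (x + δ)) = 0) :
    ∫ t in Set.Ioi 0, Real.exp (-(σ ^ 2 * (t - (x - A)) ^ 2 / 2)) * (Real.exp (-t) * g t) ≤
      η + (2 * (∫ t in Set.Ioi 0, Real.exp (-t) * g t) + η) *
          (2 * Real.exp (-(Λ ^ 2 / (2 * σ ^ 2)))) +
        Real.exp (-(σ ^ 2 * δ ^ 2 / 2)) * ((∫ t in Set.Ioi 0, Real.exp (-t) * g t) + η) := by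
  set P0 := μ.withDensity (fun h => ENNReal.ofReal (Real.exp (-(h - A)))) with hP0
  set P := Measure.map (fun h => h - A) P0 with hPd
  set Q := (volume.restrict (Set.Ioi (0 : ℝ))).withDensity
    (fun t => ENNReal.ofReal (Real.exp (-t) * g t)) with hQd
  haveI : IsFiniteMeasure P0 := isFiniteMeasure_withDensity_ofReal hμ.2
  haveI : IsFiniteMeasure P := by rw [hPd]; infer_instance
  haveI : IsFiniteMeasure Q := isFiniteMeasure_withDensity_ofReal hg.2
  have hmsub : Measurable (fun h : ℝ => h - A) := by fun_prop
  have hQae : AEMeasurable (fun t => ENNReal.ofReal (Real.exp (-t) * g t))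
      (volume.restrict (Set.Ioi (0 : ℝ))) := hg.aestronglyMeasurable.aemeasurable.ennreal_ofReal
  have hq0 : ∀ t ∈ Set.Ioi (0 : ℝ), (ENNReal.ofReal (Real.exp (-t) * g t)).toReal =
      Real.exp (-t) * g t := fun t ht =>
    ENNReal.toReal_ofReal (mul_nonneg (Real.exp_pos _).le (hg0 t ht))
  have cP : ∀ s : ℝ, charFun P (-s) =
      ∫ h : ℝ, Complex.exp (-(1 + s * Complex.I) * ((h : ℂ) - A)) ∂μ := by
    intro s
    rw [charFun_apply_real, hPd, integral_map hmsub.aemeasurable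
      (Continuous.aestronglyMeasurable (by fun_prop)), hP0,
      integral_withDensity_eq_integral_toReal_smul (by fun_prop) (ae_of_all _ fun h => by simp)]
    congr 1; ext h
    rw [ENNReal.toReal_ofReal (Real.exp_pos _).le, Complex.real_smul, Complex.ofReal_exp,
      ← Complex.exp_add]
    congr 1; push_cast; ring
  have cQ : ∀ s : ℝ, charFun Q (-s) =
      ∫ t in Set.Ioi (0 : ℝ), Complex.exp (-(1 + s * Complex.I) * t) * (g t : ℂ) := by
    intro s
    rw [charFun_apply_real, hQd,
      integral_withDensity_eq_integral_toReal_smul₀ hQae (ae_of_all _ fun h => by simp)]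
    apply setIntegral_congr_fun measurableSet_Ioi
    intro t ht
    simp only
    rw [hq0 t ht, Complex.real_smul, Complex.ofReal_mul, Complex.ofReal_exp, mul_right_comm,
      ← Complex.exp_add]
    congr 2; push_cast; ring
  have hQu : Q.real Set.univ = ∫ t in Set.Ioi 0, Real.exp (-t) * g t := by
    have h1 : Q.real Set.univ = ∫ t, (1 : ℝ) ∂Q := by simp
    rw [h1, hQd,
      integral_withDensity_eq_integral_toReal_smul₀ hQae (ae_of_all _ fun h => by simp)]
    apply setIntegral_congr_fun measurableSet_Ioi
    intro t ht
    simp only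
    rw [hq0 t ht, smul_eq_mul, mul_one]
  have hQφ : ∫ t, Real.exp (-(σ ^ 2 * (t - (x - A)) ^ 2 / 2)) ∂Q =
      ∫ t in Set.Ioi 0, Real.exp (-(σ ^ 2 * (t - (x - A)) ^ 2 / 2)) * (Real.exp (-t) * g t) := by
    rw [hQd,
      integral_withDensity_eq_integral_toReal_smul₀ hQae (ae_of_all _ fun h => by simp)]
    apply setIntegral_congr_fun measurableSet_Ioi
    intro t ht
    simp only
    rw [hq0 t ht, smul_eq_mul, mul_comm]
  have hP' : P (Set.Ioo (x - A - δ) (x - A + δ)) = 0 := by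
    rw [hPd, Measure.map_apply hmsub measurableSet_Ioo]
    have : (fun h : ℝ => h - A) ⁻¹' (Set.Ioo (x - A - δ) (x - A + δ)) =
        Set.Ioo (x - δ) (x + δ) := by
      ext h
      simp only [Set.mem_preimage, Set.mem_Ioo]
      constructor <;> rintro ⟨h1, h2⟩ <;> constructor <;> linarith
    rw [this]
    exact withDensity_absolutelyContinuous _ _ hP
  have key := gap_contra P Q hσ hΛ hδ (η := η) (x := x - A) (by
    intro s hs
    have := h (-s) (by rwa [abs_neg])
    rwa [← cP, ← cQ, neg_neg] at this) hP'
  rwa [hQφ, hQu] at key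

lemma decay_lemma {ε κ c C : ℝ} (hε : 0 < ε) (hκ : 0 < κ) (hc : 0 < c) :
    ∀ᶠ J : ℝ in atTop, C * J ^ 4 * Real.exp (-(κ * J ^ ε)) < c := by
  have h1 := tendsto_rpow_mul_exp_neg_mul_atTop_nhds_zero (4 / ε) κ hκ
  have h2 := (h1.comp (tendsto_rpow_atTop hε)).const_mul C
  rw [mul_zero] at h2
  filter_upwards [h2.eventually_lt_const hc, eventually_gt_atTop 0] with J hJ hJ0
  simp only [Function.comp] at hJ
  rw [← Real.rpow_mul hJ0.le, mul_div_cancel₀ _ hε.ne', neg_mul] at hJ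
  have : J ^ (4 : ℝ) = J ^ (4 : ℕ) := by exact_mod_cast Real.rpow_natCast J 4
  rw [this] at hJ
  linarith


set_option maxHeartbeats 1000000 in
lemma no_gap {A T : ℝ} (hA : 0 < A) (hT : 0 < T) {ν : ℤ → Measure ℝ} (hs : IsSpectrum T ν)
    (hmod : ModularInvariant A ν) {a b : ℝ} (hAa : A ≤ a) (hab : a < b) {ε : ℝ} (hε : 0 < ε)
    (hε1 : ε < 1 / 4) :
    ∀ᶠ J : ℤ in atTop, ∀ x ∈ Set.Ioo a b,
      ν J (Set.Ioo (x - (J : ℝ) ^ (-(1 / 4 : ℝ) + ε)) (x + (J : ℝ) ^ (-(1 / 4 : ℝ) + ε))) ≠ 0 := by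
  have hpi := Real.pi_pos
  obtain ⟨ρ, hρc, ⟨m, hm, hρm⟩, hρu, ⟨t0, ht0, hρl⟩, hρ⟩ := exists_rho A hA
  have hρ0 : ∀ t, 0 < t → 0 ≤ ρ t := fun t ht => (by positivity : 0 ≤ m * √t).trans (hρm t ht)
  obtain ⟨C, hC, d, hd, hcomb⟩ := comb hA hT hs hmod hρc hρ
  obtain ⟨Cq, hCq, hup⟩ := rho_upper hA hρc hρ0 hρu hρ
  obtain ⟨c, hc, hlow⟩ := rho_lower hA hρc hm hρm hρl (fun J hJ => (hup J hJ).1)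
    (X := b - A) (by linarith)
  have hsA : 0 < √A := Real.sqrt_pos.mpr hA
  have hsA2 : √A ^ 2 = A := Real.sq_sqrt hA.le
  set κ := d / (16 * π * √A * (A + 1)) with hκ
  set κ1 := d / (4 * π * √A) with hκ1
  have hκ0 : 0 < κ := by positivity
  have hκ10 : 0 < κ1 := by positivity
  set κ0 := min κ1 (min (κ / 2) (1 / 2)) with hκ0d
  have hk0 : 0 < κ0 := by
    rw [hκ0d]; exact lt_min hκ10 (lt_min (by positivity) (by norm_num))
  have hk1 : κ0 ≤ κ1 := min_le_left _ _
  have hk2 : κ0 ≤ κ / 2 := (min_le_right _ _).trans (min_le_left _ _)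
  have hk3 : κ0 ≤ 1 / 2 := (min_le_right _ _).trans (min_le_right _ _)
  set C1 := C / (2 * π * √A) with hC1
  have hC10 : 0 < C1 := by positivity
  have hdec := decay_lemma (ε := ε) (κ := κ0) (c := c) (C := 4 * C1 + 5 * Cq) hε hk0 hc
  have hall : ∀ᶠ j : ℝ in atTop, 1 ≤ j ∧ t0 ≤ j ∧ 16 * π ^ 2 * A ≤ j ∧
      (4 * C1 + 5 * Cq) * j ^ 4 * Real.exp (-(κ0 * j ^ ε)) < c :=
    (eventually_ge_atTop 1).and ((eventually_ge_atTop t0).and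
      ((eventually_ge_atTop (16 * π ^ 2 * A)).and hdec))
  filter_upwards [tendsto_intCast_atTop_atTop.eventually hall] with J hJ x hx hnull
  obtain ⟨hj1, hjt, hjA, hdecJ⟩ := hJ
  set j : ℝ := (J : ℝ) with hj
  have hj0 : 0 < j := by linarith
  have hsj : 0 < √j := Real.sqrt_pos.mpr hj0
  have hsj2 : √j ^ 2 = j := Real.sq_sqrt hj0.le
  have hsjr : √j = j ^ (1 / 2 : ℝ) := Real.sqrt_eq_rpow j
  have hsjle : √j ≤ j := by nlinarith [Real.one_le_sqrt.mpr hj1]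
  have hJ0 : 0 ≤ J := by
    have : (0 : ℝ) ≤ (J : ℝ) := hj0.le
    exact_mod_cast this
  set r := 2 * π * √A / √j with hr
  have hr0 : 0 < r := by positivity
  have hr1 : r ≤ 1 / 2 := by
    rw [hr, div_le_iff₀ hsj]
    have : 4 * π * √A ≤ √j := by
      apply Real.le_sqrt_of_sq_le
      calc (4 * π * √A) ^ 2 = 16 * π ^ 2 * √A ^ 2 := by ring
        _ ≤ j := by rw [hsA2]; exact hjA
    linarith
  set M := Real.exp (4 * π * √A * √j) with hM
  have hM0 : 0 < M := Real.exp_pos _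
  set E := Real.exp (-(κ0 * j ^ ε)) with hE
  have hE0 : 0 < E := Real.exp_pos _
  have hE1 : E ≤ 1 := Real.exp_le_one_iff.mpr (by
    have : 0 < κ0 * j ^ ε := by positivity
    linarith)
  set Λ := √(κ * √j) with hΛ
  have hΛ0 : 0 < Λ := Real.sqrt_pos.mpr (by positivity)
  have hΛ2 : Λ ^ 2 = κ * √j := Real.sq_sqrt (by positivity)
  set σ := j ^ (1 / 4 - ε / 2 : ℝ) with hσ
  have hσ1 : 1 ≤ σ := Real.one_le_rpow hj1 (by linarith)
  have hσ0 : 0 < σ := by linarith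
  have hσj : σ ≤ j := by
    calc σ ≤ j ^ (1 : ℝ) := Real.rpow_le_rpow_of_exponent_le hj1 (by linarith)
      _ = j := Real.rpow_one j
  set δ := j ^ (-(1 / 4 : ℝ) + ε) with hδ
  have hδ0 : 0 < δ := by positivity
  have hσ2 : σ ^ 2 = j ^ (1 / 2 - ε : ℝ) := by
    rw [hσ, ← Real.rpow_natCast, ← Real.rpow_mul hj0.le]
    congr 1; push_cast; ring
  have hδ2 : δ ^ 2 = j ^ (-(1 / 2 : ℝ) + 2 * ε) := by
    rw [hδ, ← Real.rpow_natCast, ← Real.rpow_mul hj0.le]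
    congr 1; push_cast; ring
  have hσδ : σ ^ 2 * δ ^ 2 = j ^ ε := by
    rw [hσ2, hδ2, ← Real.rpow_add hj0]
    congr 1; ring
  have hsσ : √j = σ ^ 2 * j ^ ε := by
    rw [hσ2, hsjr, ← Real.rpow_add hj0]
    congr 1; ring
  have hEa : Real.exp (-(σ ^ 2 * δ ^ 2 / 2)) ≤ E := by
    apply Real.exp_le_exp.mpr
    rw [hσδ]
    have : 0 ≤ j ^ ε := by positivity
    have h1 := mul_le_mul_of_nonneg_right hk3 this
    linarith
  have hEb : Real.exp (-(Λ ^ 2 / (2 * σ ^ 2))) ≤ E := by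
    apply Real.exp_le_exp.mpr
    have e : Λ ^ 2 / (2 * σ ^ 2) = κ / 2 * j ^ ε := by
      rw [hΛ2, hsσ]; field_simp
    rw [e]
    have : 0 ≤ j ^ ε := by positivity
    exact neg_le_neg (mul_le_mul_of_nonneg_right hk2 this)
  have hEc : Real.exp (-(κ1 * √j)) ≤ E := by
    apply Real.exp_le_exp.mpr
    have h1 : j ^ ε ≤ √j := by
      rw [hsjr]; exact Real.rpow_le_rpow_of_exponent_le hj1 (by linarith)
    have : 0 ≤ j ^ ε := by positivity
    exact neg_le_neg (mul_le_mul hk1 h1 this hκ10.le)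
  have hη : ∀ s : ℝ, |s| ≤ Λ →
      ‖(∫ h : ℝ, Complex.exp (-(1 + s * Complex.I) * ((h : ℂ) - A)) ∂(ν J)) -
        ∫ t in Set.Ioi (0 : ℝ), Complex.exp (-(1 + s * Complex.I) * t) *
          ((ρ t * ρ (j + t) : ℝ) : ℂ)‖ ≤ C1 * j * M * E := by
    intro s hsΛ
    have h1 := hcomb J r s hJ0 hr0 hr1
    simp only [Complex.ofReal_mul]
    refine h1.trans ?_
    have hs2 : s ^ 2 ≤ κ * √j := by
      rw [← hΛ2, ← sq_abs s]; gcongr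
    have e1 : r * j = 2 * π * √A * √j := by
      rw [hr]
      field_simp
      rw [hsj2]
    have e2 : (4 * π ^ 2 * A - d) / r = 2 * π * √A * √j - 2 * κ1 * √j := by
      rw [hr, hκ1]
      field_simp
      rw [hsA2]; ring
    have e3 : 4 * (A + 1) * (κ * √j) = κ1 * √j := by
      rw [hκ, hκ1]; field_simp; ring
    have e4 : C * (1 / r) = C1 * √j := by
      rw [hr, hC1]; field_simp
    have hexp : r * j + (4 * π ^ 2 * A - d) / r + 4 * (A + 1) * s ^ 2 ≤
        4 * π * √A * √j + -(κ1 * √j) := by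
      have := mul_le_mul_of_nonneg_left hs2 (show 0 ≤ 4 * (A + 1) by positivity)
      rw [e1, e2]
      linarith
    calc C * (1 / r) * Real.exp (r * j + (4 * π ^ 2 * A - d) / r + 4 * (A + 1) * s ^ 2) ≤
        C1 * √j * Real.exp (4 * π * √A * √j + -(κ1 * √j)) := by
          rw [e4]; gcongr
      _ = C1 * √j * M * Real.exp (-(κ1 * √j)) := by rw [Real.exp_add, hM]; ring
      _ ≤ C1 * j * M * E := by gcongr
  have hμ : Integrable (fun h : ℝ => Real.exp (-(h - A))) (ν J) := by
    have := (spec_int hs (x := 1 / 2) (y := 1 / 2) (by norm_num) (by norm_num) J).const_mul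
      (Real.exp (A + j / 2))
    refine this.congr (ae_of_all _ fun h => ?_)
    simp only
    rw [← Real.exp_add]; congr 1; rw [hj]; ring
  obtain ⟨hqi, hqle⟩ := hup j hj1
  have hl := hlow j hj1 hjt (x - A) (by have := hx.1; linarith) (by have := hx.2; linarith) σ hσ1 hσj
  have hb := bridge hμ hqi (fun t ht => mul_nonneg (hρ0 t ht) (hρ0 _ (by linarith)))
    hσ0 hΛ0 hδ0 hη hnull
  set q := ∫ t in Set.Ioi 0, Real.exp (-t) * (ρ t * ρ (j + t)) with hq
  have hq2 : q ≤ Cq * j * M := by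
    refine hqle.trans ?_
    have : Cq * M * 1 ≤ Cq * M * j := by gcongr
    linarith
  have hq0 : 0 ≤ q := setIntegral_nonneg measurableSet_Ioi fun t ht =>
    mul_nonneg (Real.exp_pos _).le (mul_nonneg (hρ0 t ht)
      (hρ0 _ (by have : 0 < t := ht; linarith)))
  have hfin : c * M / j ^ 3 ≤ (4 * C1 + 5 * Cq) * j * M * E := by
    refine hl.trans (hb.trans ?_)
    have hX : C1 * j * M * E ≤ C1 * j * M := mul_le_of_le_one_right (by positivity) hE1
    have t1 : (2 * q + C1 * j * M * E) * (2 * Real.exp (-(Λ ^ 2 / (2 * σ ^ 2)))) ≤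
        (2 * (Cq * j * M) + C1 * j * M) * (2 * E) := by
      gcongr
    have t2 : Real.exp (-(σ ^ 2 * δ ^ 2 / 2)) * (q + C1 * j * M * E) ≤
        E * (Cq * j * M + C1 * j * M) := by
      gcongr
    calc _ ≤ C1 * j * M * E + (2 * (Cq * j * M) + C1 * j * M) * (2 * E) +
          E * (Cq * j * M + C1 * j * M) := by linarith
      _ = _ := by ring
  rw [div_le_iff₀ (by positivity)] at hfin
  have : c * M ≤ (4 * C1 + 5 * Cq) * j ^ 4 * E * M := by
    calc c * M ≤ _ := hfin
      _ = _ := by ring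
  have := le_of_mul_le_mul_right this hM0
  linarith

lemma maxGap_le {μ : Measure ℝ} {a b δ : ℝ} (hδ : 0 < δ)
    (h : ∀ x ∈ Set.Ioo a b, μ (Set.Ioo (x - δ) (x + δ)) ≠ 0) : maxGap μ a b ≤ 2 * δ := by
  unfold maxGap
  apply Real.sSup_le _ (by linarith)
  rintro _ ⟨x, hx, rfl⟩
  simp only
  set U := Set.Ioo a b \ measSupport μ with hU
  set K := connectedComponentIn U x with hK
  have hKU : K ⊆ U := connectedComponentIn_subset U x
  have hKc : IsPreconnected K := isPreconnected_connectedComponentIn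
  have hnull : ∀ y z, y ∈ K → z ∈ K → μ (Set.Ioo y z) = 0 := by
    intro y z hy hz
    apply measure_null_of_locally_null
    intro t ht
    have htK : t ∈ K := hKc.ordConnected.out hy hz ⟨ht.1.le, ht.2.le⟩
    have := (hKU htK).2
    have hns : ¬ ∀ V : Set ℝ, IsOpen V → t ∈ V → 0 < μ V := this
    push Not at hns
    obtain ⟨V, hVo, htV, hV⟩ := hns
    exact ⟨V, mem_nhdsWithin_of_mem_nhds (hVo.mem_nhds htV), le_antisymm hV zero_le⟩
  have hkey : ∀ y z, y ∈ K → z ∈ K → z - y ≤ 2 * δ := by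
    intro y z hy hz
    by_contra hcon
    push Not at hcon
    have hyU := (hKU hy).1
    have hzU := (hKU hz).1
    apply h ((y + z) / 2) ⟨by linarith [hyU.1, hzU.1], by linarith [hyU.2, hzU.2]⟩
    refine measure_mono_null (fun t ht => ?_) (hnull y z hy hz)
    exact ⟨by linarith [ht.1], by linarith [ht.2]⟩
  apply Metric.diam_le_of_forall_dist_le (by linarith)
  intro y hy z hz
  rw [Real.dist_eq, abs_le]
  constructor
  · linarith [hkey y z hy hz]
  · linarith [hkey z y hz hy]

lemma maxGap_nonneg (μ : Measure ℝ) (a b : ℝ) : 0 ≤ maxGap μ a b := by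
  unfold maxGap
  apply Real.sSup_nonneg
  rintro _ ⟨x, _, rfl⟩
  exact Metric.diam_nonneg


/-- Corollary (maximal level spacing): for `(a,b) ⊆ (A,∞)`, the maximal spacing of the
spin-`J` spectrum vanishes faster than `J^(-1/4+ε)` as `J → ∞`. -/
theorem max_level_spacing
    (A Tgap : ℝ) (hA : 0 < A) (hTgap : 0 < Tgap)
    (ν : ℤ → Measure ℝ) (hspec : IsSpectrum Tgap ν) (hmod : ModularInvariant A ν)
    (a b : ℝ) (hAa : A ≤ a) (hab : a < b) (ε : ℝ) (hε : 0 < ε) :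
    Tendsto (fun J : ℤ => (J : ℝ) ^ ((1 / 4 : ℝ) - ε) * maxGap (ν J) a b) atTop (𝓝 0) := by

  set e : ℝ := min ε (1 / 4) / 2 with he
  have he0 : 0 < e := by rw [he]; have := lt_min hε (show (0 : ℝ) < 1 / 4 by norm_num); linarith
  have he1 : e < 1 / 4 := by
    have := min_le_right ε (1 / 4)
    linarith
  have heε : e < ε := by
    have := min_le_left ε (1 / 4)
    linarith
  have hg := no_gap hA hTgap hspec hmod hAa hab he0 he1
  have hlim : Tendsto (fun J : ℤ => 2 * (J : ℝ) ^ (-(ε - e))) atTop (𝓝 0) := by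
    have h1 := (tendsto_rpow_neg_atTop (show 0 < ε - e by linarith)).const_mul 2
    rw [mul_zero] at h1
    exact h1.comp tendsto_intCast_atTop_atTop
  refine tendsto_of_tendsto_of_tendsto_of_le_of_le' tendsto_const_nhds hlim ?_ ?_
  · filter_upwards [eventually_ge_atTop 0] with J hJ
    have : (0 : ℝ) ≤ (J : ℝ) := by exact_mod_cast hJ
    exact mul_nonneg (Real.rpow_nonneg this _) (maxGap_nonneg _ _ _)
  · filter_upwards [hg, eventually_gt_atTop 0] with J hJ hJ0
    have hj : (0 : ℝ) < (J : ℝ) := by exact_mod_cast hJ0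
    have hm := maxGap_le (μ := ν J) (a := a) (b := b) (Real.rpow_pos_of_pos hj _) hJ
    calc (J : ℝ) ^ ((1 / 4 : ℝ) - ε) * maxGap (ν J) a b ≤
        (J : ℝ) ^ ((1 / 4 : ℝ) - ε) * (2 * (J : ℝ) ^ (-(1 / 4 : ℝ) + e)) := by gcongr
      _ = 2 * ((J : ℝ) ^ ((1 / 4 : ℝ) - ε) * (J : ℝ) ^ (-(1 / 4 : ℝ) + e)) := by ring
      _ = 2 * (J : ℝ) ^ (-(ε - e)) := by
        rw [← Real.rpow_add hj]; congr 2; ring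
end
end

section
/- Let (ν_J)_{J∈ℤ} be a modular invariant spectrum. Then for all reals a < b with b > A and every M > 0 there exists J_0 such that ν_J((a, b)) > M for every integer J ≥ J_0. In particular the large-spin spectrum becomes dense in every twist window overlapping (A, ∞). -/
open MeasureTheory Filter Topology Real

noncomputable section

namespace SBD

def Fr (ν : ℤ → Measure ℝ) (J : ℤ) (x y : ℝ) : ℝ :=
  ∫ h : ℝ, Real.exp (-x * h - y * (h + (J : ℝ))) ∂(ν J)

def NVr (ν : ℤ → Measure ℝ) (x y : ℝ) : ℝ := ∑' J : ℤ, Fr ν J x y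

def NVc (ν : ℤ → Measure ℝ) (βL βR : ℂ) : ℂ :=
  ∑' J : ℤ, ∫ h : ℝ, Complex.exp (-βL * (h : ℂ) - βR * ((h : ℂ) + (J : ℂ))) ∂(ν J)

lemma spec_ae {T : ℝ} {ν : ℤ → Measure ℝ} (hs : IsSpectrum T ν) (J : ℤ) :
    ∀ᵐ h ∂(ν J), T < h ∧ T < h + (J : ℝ) := by
  rw [ae_iff]; exact hs.1 J

lemma fr_integrable {T : ℝ} {ν : ℤ → Measure ℝ} (hs : IsSpectrum T ν) (J : ℤ) {x y : ℝ}
    (hx : 0 < x) (hy : 0 < y) :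
    Integrable (fun h : ℝ => Real.exp (-x * h - y * (h + (J : ℝ)))) (ν J) := by
  refine ⟨by fun_prop, ?_⟩
  rw [hasFiniteIntegral_iff_ofReal (Eventually.of_forall fun h => (Real.exp_pos _).le)]
  exact lt_of_le_of_lt (ENNReal.le_tsum J) (hs.2 x y hx hy)

lemma fr_nonneg (ν : ℤ → Measure ℝ) (J : ℤ) (x y : ℝ) : 0 ≤ Fr ν J x y :=
  integral_nonneg fun _ => (Real.exp_pos _).le

lemma fr_summable {T : ℝ} {ν : ℤ → Measure ℝ} (hs : IsSpectrum T ν) {x y : ℝ}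
    (hx : 0 < x) (hy : 0 < y) : Summable (fun J : ℤ => Fr ν J x y) := by
  have h := ENNReal.summable_toReal (hs.2 x y hx hy).ne
  refine h.congr fun J => ?_
  rw [Fr, integral_eq_lintegral_of_nonneg_ae (Eventually.of_forall fun h => (Real.exp_pos _).le)
    (by fun_prop)]

lemma nvr_nonneg (ν : ℤ → Measure ℝ) (x y : ℝ) : 0 ≤ NVr ν x y :=
  tsum_nonneg fun J => fr_nonneg ν J x y

lemma norm_term (βL βR : ℂ) (h : ℝ) (J : ℤ) :
    ‖Complex.exp (-βL * (h : ℂ) - βR * ((h : ℂ) + (J : ℂ)))‖ =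
      Real.exp (-βL.re * h - βR.re * (h + (J : ℝ))) := by
  rw [Complex.norm_exp]; simp

lemma nvc_norm_le {T : ℝ} {ν : ℤ → Measure ℝ} (hs : IsSpectrum T ν) {βL βR : ℂ}
    (hL : 0 < βL.re) (hR : 0 < βR.re) : ‖NVc ν βL βR‖ ≤ NVr ν βL.re βR.re := by
  refine tsum_of_norm_bounded (fr_summable hs hL hR).hasSum fun J => ?_
  refine (norm_integral_le_integral_norm _).trans (le_of_eq ?_)
  simp only [norm_term, Fr]

lemma nvc_ofReal (ν : ℤ → Measure ℝ) (x y : ℝ) : NVc ν (x : ℂ) (y : ℂ) = (NVr ν x y : ℂ) := by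
  rw [NVc, NVr, Complex.ofReal_tsum]
  congr 1; ext J
  rw [Fr, ← integral_complex_ofReal]
  congr 1; ext h; push_cast; rfl

lemma nvr_decay {T : ℝ} {ν : ℤ → Measure ℝ} (hs : IsSpectrum T ν) (hT : 0 < T) {x y x0 y0 : ℝ}
    (hx0 : 0 < x0) (hy0 : 0 < y0) (hx : x0 ≤ x) (hy : y0 ≤ y) :
    NVr ν x y ≤ Real.exp (-(T * (y - y0))) * NVr ν x0 y0 := by
  rw [NVr, NVr, ← tsum_mul_left]
  refine Summable.tsum_le_tsum (fun J => ?_) (fr_summable hs (by linarith) (by linarith))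
    ((fr_summable hs hx0 hy0).mul_left _)
  rw [Fr, Fr, ← integral_const_mul]
  refine integral_mono_ae (fr_integrable hs J (by linarith) (by linarith))
    ((fr_integrable hs J hx0 hy0).const_mul _) ?_
  filter_upwards [spec_ae hs J] with h hh

  rw [← Real.exp_add, Real.exp_le_exp]
  nlinarith [mul_nonneg (sub_nonneg.2 hx) (hT.trans hh.1).le,
    mul_nonneg (sub_nonneg.2 hy) (sub_nonneg.2 hh.2.le)]

lemma ztilde_eq (A : ℝ) (ν : ℤ → Measure ℝ) (βL βR : ℂ) : Ztilde A ν βL βR =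
    Complex.exp ((A : ℂ) * (βL + βR)) *
    ((1 - Complex.exp (-βL)) * (1 - Complex.exp (-βR)) + NVc ν βL βR) := rfl

lemma nvc_shift (ν : ℤ → Measure ℝ) (x y : ℝ) (K : ℤ) (s : ℝ) :
    ∫ h : ℝ, Complex.exp (-(x + s * Complex.I) * (h : ℂ) -
      (y - s * Complex.I) * ((h : ℂ) + (K : ℂ))) ∂(ν K) =
      Complex.exp (s * K * Complex.I) * (Fr ν K x y : ℂ) := by
  rw [Fr, ← integral_complex_ofReal, ← integral_const_mul]
  congr 1; ext h
  push_cast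
  rw [← Complex.exp_add]; congr 1; ring

lemma nvc_continuous {T : ℝ} {ν : ℤ → Measure ℝ} (hs : IsSpectrum T ν) {x y : ℝ}
    (hx : 0 < x) (hy : 0 < y) :
    Continuous (fun s : ℝ => NVc ν (x + s * Complex.I) (y - s * Complex.I)) := by
  simp only [NVc, nvc_shift]
  refine continuous_tsum (fun K => by fun_prop) (fr_summable hs hx hy) fun K s => ?_
  simp only [norm_mul, Complex.norm_exp,
        Complex.norm_real, Real.norm_of_nonneg (fr_nonneg ν K x y)]
  simp

/-- Extraction of a fixed spin. -/
lemma fourier_extract {T : ℝ} {ν : ℤ → Measure ℝ} (hs : IsSpectrum T ν) {x y : ℝ}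
    (hx : 0 < x) (hy : 0 < y) (J : ℤ) :
    (∫ s in (-π)..π, Complex.exp (-(s * J * Complex.I)) *
      NVc ν (x + s * Complex.I) (y - s * Complex.I)) = 2 * π * (Fr ν J x y : ℂ) := by
  have hsum := intervalIntegral.hasSum_intervalIntegral_of_summable_norm (a := -π) (b := π)
    (f := fun K : ℤ => (⟨fun s : ℝ => Complex.exp (-(s * J * Complex.I)) *
      (Complex.exp (s * K * Complex.I) * (Fr ν K x y : ℂ)), by fun_prop⟩ : C(ℝ, ℂ))) (by
      refine Summable.of_nonneg_of_le (fun _ => norm_nonneg _) (fun K => ?_) (fr_summable hs hx hy)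
      refine (ContinuousMap.norm_le _ (fr_nonneg ν K x y)).2 fun s => ?_
      simp only [ContinuousMap.restrict_apply, ContinuousMap.coe_mk, norm_mul, Complex.norm_exp,
        Complex.norm_real, Real.norm_of_nonneg (fr_nonneg ν K x y)]
      simp)
  have e1 : ∀ s : ℝ, Complex.exp (-(s * J * Complex.I)) *
      NVc ν (x + s * Complex.I) (y - s * Complex.I) = ∑' K : ℤ, Complex.exp (-(s * J * Complex.I)) *
      (Complex.exp (s * K * Complex.I) * (Fr ν K x y : ℂ)) := by
    intro s
    rw [NVc, tsum_mul_left]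
    congr 2; ext K; exact nvc_shift ν x y K s
  simp only [e1]
  simp only [ContinuousMap.coe_mk] at hsum
  rw [← hsum.tsum_eq, tsum_eq_single J]
  · have : ∀ s : ℝ, Complex.exp (-(s * J * Complex.I)) *
      (Complex.exp (s * J * Complex.I) * (Fr ν J x y : ℂ)) = Fr ν J x y := by
      intro s; rw [← mul_assoc, ← Complex.exp_add]; simp
    simp only [this]
    rw [intervalIntegral.integral_const, Complex.real_smul]
    push_cast; ring
  · intro K hK
    have hc : ((K : ℂ) - J) * Complex.I ≠ 0 := by
      refine mul_ne_zero (sub_ne_zero.2 (by exact_mod_cast hK)) Complex.I_ne_zero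
    have : ∀ s : ℝ, Complex.exp (-(s * J * Complex.I)) *
      (Complex.exp (s * K * Complex.I) * (Fr ν K x y : ℂ)) =
        Complex.exp ((((K : ℂ) - J) * Complex.I) * s) * Fr ν K x y := by
      intro s; rw [← mul_assoc, ← Complex.exp_add]; congr 2; ring
    simp only [this]
    rw [intervalIntegral.integral_mul_const, integral_exp_mul_complex hc]
    have : Complex.exp ((((K : ℂ) - J) * Complex.I) * (π : ℝ)) =
        Complex.exp ((((K : ℂ) - J) * Complex.I) * ((-π : ℝ) : ℂ)) := by
      rw [Complex.exp_eq_exp_iff_exists_int]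
      exact ⟨K - J, by push_cast; ring⟩
    rw [this]; simp

lemma norm_one_sub_exp_le {β : ℂ} (h : 0 ≤ β.re) : ‖1 - Complex.exp (-β)‖ ≤ 2 := by
  refine (norm_sub_le _ _).trans ?_
  have : ‖Complex.exp (-β)‖ ≤ 1 := by
    rw [Complex.norm_exp]; simpa using h
  rw [norm_one]; linarith

lemma ztilde_norm_le {T : ℝ} {ν : ℤ → Measure ℝ} (hs : IsSpectrum T ν) (A : ℝ) {βL βR : ℂ}
    (hL : 0 < βL.re) (hR : 0 < βR.re) : ‖Ztilde A ν βL βR‖ ≤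
      Real.exp (A * (βL.re + βR.re)) * (4 + NVr ν βL.re βR.re) := by
  rw [ztilde_eq, norm_mul, Complex.norm_exp]
  have e : ((A : ℂ) * (βL + βR)).re = A * (βL.re + βR.re) := by simp
  rw [e]
  refine mul_le_mul_of_nonneg_left ?_ (Real.exp_pos _).le
  refine (norm_add_le _ _).trans (add_le_add ?_ (nvc_norm_le hs hL hR))
  rw [norm_mul]
  have h1 := norm_one_sub_exp_le hL.le
  have h2 := norm_one_sub_exp_le hR.le
  have := mul_le_mul h1 h2 (norm_nonneg _) (by norm_num)
  linarith

lemma norm_half (z : ℂ) : ‖z ^ ((1 : ℂ) / 2)‖ = √‖z‖ := by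
  have : ((1 : ℂ) / 2) = (((1 / 2 : ℝ)) : ℂ) := by push_cast; rfl
  rw [this, Complex.norm_cpow_real, Real.sqrt_eq_rpow]

lemma nvr_small {A T : ℝ} (hA : 0 < A) (hT : 0 < T) {ν : ℤ → Measure ℝ} (hs : IsSpectrum T ν)
    (hm : ModularInvariant A ν) {c : ℝ} (hc : 0 < c) :
    ∃ C : ℝ, 0 ≤ C ∧ ∀ y : ℝ, 0 < y → y ≤ 1 →
      NVr ν c y ≤ C * (√y)⁻¹ * Real.exp (4 * π ^ 2 * A / y) := by
  have hp : 0 < 4 * π ^ 2 := by positivity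
  have hp1 : 1 ≤ 4 * π ^ 2 := by nlinarith [Real.pi_gt_three]
  have hc' : 0 < 4 * π ^ 2 / c := by positivity
  refine ⟨√(4 * π ^ 2 / c) * Real.exp (A * (4 * π ^ 2 / c)) * (4 + NVr ν (4 * π ^ 2 / c) 1),
    by have := nvr_nonneg ν (4 * π ^ 2 / c) 1; positivity, fun y hy hy1 => ?_⟩
  have hy' : 0 < 4 * π ^ 2 / y := by positivity
  have h1 := hm (c : ℂ) (y : ℂ) (by simpa) (by simpa)
  have ec : (4 * (π : ℂ) ^ 2 / (c : ℂ)) = ((4 * π ^ 2 / c : ℝ) : ℂ) := by push_cast; rfl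
  have ey : (4 * (π : ℂ) ^ 2 / (y : ℂ)) = ((4 * π ^ 2 / y : ℝ) : ℂ) := by push_cast; rfl
  have ecy : (4 * (π : ℂ) ^ 2 / ((c : ℂ) * (y : ℂ))) = ((4 * π ^ 2 / (c * y) : ℝ) : ℂ) := by
    push_cast; rfl
  rw [ec, ey, ecy] at h1
  have hup := ztilde_norm_le hs A (βL := ((4 * π ^ 2 / c : ℝ) : ℂ))
    (βR := ((4 * π ^ 2 / y : ℝ) : ℂ)) (by rwa [Complex.ofReal_re]) (by rwa [Complex.ofReal_re])
  rw [Complex.ofReal_re, Complex.ofReal_re] at hup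
  have hdec := nvr_decay hs hT hc' one_pos le_rfl (show 1 ≤ 4 * π ^ 2 / y by
    rw [le_div_iff₀ hy]; linarith)
  have hdec2 : NVr ν (4 * π ^ 2 / c) (4 * π ^ 2 / y) ≤ NVr ν (4 * π ^ 2 / c) 1 := by
    refine hdec.trans (mul_le_of_le_one_left (nvr_nonneg _ _ _) ?_)
    rw [Real.exp_le_one_iff]
    have : 1 ≤ 4 * π ^ 2 / y := by rw [le_div_iff₀ hy]; linarith
    nlinarith
  have hlow : NVr ν c y ≤ ‖Ztilde A ν c y‖ := by
    have : Ztilde A ν c y = ((Real.exp (A * (c + y)) *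
        ((1 - Real.exp (-c)) * (1 - Real.exp (-y)) + NVr ν c y) : ℝ) : ℂ) := by
      rw [ztilde_eq, nvc_ofReal]; push_cast; rfl
    rw [this, Complex.norm_real]
    refine le_trans ?_ (Real.le_norm_self _)
    have h1 : Real.exp (-c) ≤ 1 := by rw [Real.exp_le_one_iff]; linarith
    have h2 : Real.exp (-y) ≤ 1 := by rw [Real.exp_le_one_iff]; linarith
    have h3 : 1 ≤ Real.exp (A * (c + y)) := by rw [Real.one_le_exp_iff]; positivity
    have h4 := nvr_nonneg ν c y
    nlinarith [mul_nonneg (sub_nonneg.2 h1) (sub_nonneg.2 h2)]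
  rw [h1, norm_mul, norm_half, Complex.norm_real, Real.norm_of_nonneg (by positivity)] at hlow
  refine hlow.trans ?_
  have e1 : √(4 * π ^ 2 / (c * y)) = √(4 * π ^ 2 / c) * (√y)⁻¹ := by
    rw [← Real.sqrt_inv, ← Real.sqrt_mul (by positivity)]; congr 1; field_simp
  rw [e1]
  calc _ ≤ √(4 * π ^ 2 / c) * (√y)⁻¹ * (Real.exp (A * (4 * π ^ 2 / c + 4 * π ^ 2 / y)) *
        (4 + NVr ν (4 * π ^ 2 / c) 1)) := by
        gcongr; refine hup.trans ?_; gcongr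
    _ = _ := by
        rw [mul_add A, Real.exp_add, show A * (4 * π ^ 2 / y) = 4 * π ^ 2 * A / y by ring]; ring

def bL (β ε s : ℝ) : ℂ := ((β - ε : ℝ) : ℂ) + s * Complex.I
def bR (ε s : ℝ) : ℂ := (ε : ℂ) - s * Complex.I

lemma bL_re (β ε s : ℝ) : (bL β ε s).re = β - ε := by simp [bL]
lemma bR_re (ε s : ℝ) : (bR ε s).re = ε := by simp [bR]

lemma dual_re (z : ℂ) : (4 * (π : ℂ) ^ 2 / z).re = 4 * π ^ 2 * z.re / (z.re ^ 2 + z.im ^ 2) := by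
  have : (4 * (π : ℂ) ^ 2) = ((4 * π ^ 2 : ℝ) : ℂ) := by push_cast; rfl
  rw [this, Complex.div_re, Complex.ofReal_re, Complex.ofReal_im, Complex.normSq_apply]
  simp only [zero_mul, zero_div, add_zero, sq]

lemma dualR_re (ε s : ℝ) : (4 * (π : ℂ) ^ 2 / bR ε s).re = 4 * π ^ 2 * ε / (ε ^ 2 + s ^ 2) := by
  rw [dual_re]; simp [bR]

lemma dualL_re (β ε s : ℝ) : (4 * (π : ℂ) ^ 2 / bL β ε s).re =
    4 * π ^ 2 * (β - ε) / ((β - ε) ^ 2 + s ^ 2) := by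
  rw [dual_re]; simp [bL]

lemma dualL_upper {β ε s : ℝ} (hβ : 0 < β) (h : ε ≤ β / 2) :
    (4 * (π : ℂ) ^ 2 / bL β ε s).re ≤ 8 * π ^ 2 / β := by
  rw [dualL_re, div_le_div_iff₀ (by nlinarith) hβ]
  have : β * (β - ε) ≤ 2 * ((β - ε) ^ 2 + s ^ 2) := by nlinarith [sq_nonneg s]
  nlinarith [mul_le_mul_of_nonneg_left this (show 0 ≤ 4 * π ^ 2 by positivity)]

lemma dualL_lower {β ε s : ℝ} (hβ : 0 < β) (hε : 0 < ε) (h : ε ≤ β / 2) (hs : |s| ≤ π) :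
    2 * π ^ 2 * β / (β ^ 2 + π ^ 2) ≤ (4 * (π : ℂ) ^ 2 / bL β ε s).re := by
  have h2 : s ^ 2 ≤ π ^ 2 := sq_le_sq' (neg_le_of_abs_le hs) (le_of_abs_le hs)
  rw [dualL_re]
  have hd : 0 < β - ε := by linarith
  refine div_le_div₀ (by positivity) ?_ (by positivity) ?_
  · nlinarith [show 0 < π ^ 2 by positivity]
  · nlinarith

lemma pref_norm {β ε s : ℝ} (hβ : 0 < β) (hε : 0 < ε) (h : ε ≤ β / 2) :
    ‖((4 * (π : ℂ) ^ 2) / (bL β ε s * bR ε s)) ^ ((1 : ℂ) / 2)‖ ≤ √(8 * π ^ 2 / β) * (√ε)⁻¹ := by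
  rw [norm_half, ← Real.sqrt_inv, ← Real.sqrt_mul (by positivity)]
  refine Real.sqrt_le_sqrt ?_
  have e : (4 * (π : ℂ) ^ 2) = ((4 * π ^ 2 : ℝ) : ℂ) := by push_cast; rfl
  rw [norm_div, e, Complex.norm_real, Real.norm_of_nonneg (by positivity), norm_mul]
  have h1 : β / 2 ≤ ‖bL β ε s‖ := by
    refine le_trans ?_ (Complex.re_le_norm _); rw [bL_re]; linarith
  have h2 : ε ≤ ‖bR ε s‖ := by
    refine le_trans ?_ (Complex.re_le_norm _); rw [bR_re]
  calc 4 * π ^ 2 / (‖bL β ε s‖ * ‖bR ε s‖) ≤ 4 * π ^ 2 / ((β / 2) * ε) := by gcongr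
    _ = _ := by field_simp; ring

/-- main term in the dual channel -/
def Mn (A β ε s : ℝ) : ℂ :=
  ((4 * (π : ℂ) ^ 2) / (bL β ε s * bR ε s)) ^ ((1 : ℂ) / 2) *
    (Complex.exp ((A : ℂ) * (4 * (π : ℂ) ^ 2 / bL β ε s + 4 * (π : ℂ) ^ 2 / bR ε s)) *
      (1 - Complex.exp (-(4 * (π : ℂ) ^ 2 / bL β ε s))))

lemma exp_dual_norm {A β ε s : ℝ} (hA : 0 < A) (hβ : 0 < β) (h : ε ≤ β / 2) :
    ‖Complex.exp ((A : ℂ) * (4 * (π : ℂ) ^ 2 / bL β ε s + 4 * (π : ℂ) ^ 2 / bR ε s))‖ ≤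
    Real.exp (A * (8 * π ^ 2 / β)) * Real.exp (A * (4 * (π : ℂ) ^ 2 / bR ε s).re) := by
  rw [Complex.norm_exp, ← Real.exp_add, Real.exp_le_exp]
  rw [Complex.re_ofReal_mul, Complex.add_re, mul_add]
  have := dualL_upper (s := s) hβ h
  gcongr

set_option maxHeartbeats 2000000 in
lemma error_bound {A T : ℝ} (hA : 0 < A) (hT : 0 < T) {ν : ℤ → Measure ℝ} (hs : IsSpectrum T ν)
    (hm : ModularInvariant A ν) {β : ℝ} (hβ : 0 < β) :
    ∃ C δ : ℝ, 0 ≤ C ∧ 0 < δ ∧ ∀ ε : ℝ, 0 < ε → ε ≤ 1 → ε ≤ β / 2 → ∀ s : ℝ, |s| ≤ π →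
      ‖NVc ν (bL β ε s) (bR ε s) -
        Complex.exp (-(A * β : ℝ)) * (if |s| ≤ ε then Mn A β ε s else 0)‖ ≤
        C * ε⁻¹ * Real.exp ((4 * π ^ 2 * A - δ) * ε⁻¹) := by
  set c1 := 2 * π ^ 2 * β / (β ^ 2 + π ^ 2) with hc1
  have hc1p : 0 < c1 := by positivity
  set c2 := 8 * π ^ 2 / β with hc2
  obtain ⟨C1, hC1, hsm⟩ := nvr_small hA hT hs hm hc1p
  set N1 := NVr ν c1 1 with hN1
  have hN1n : 0 ≤ N1 := nvr_nonneg _ _ _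
  set P := √c2 * Real.exp (A * c2) with hP
  have hP0 : 0 ≤ P := by positivity
  set δ := min (2 * π ^ 2 * A) (min (2 * π ^ 2) (2 * π ^ 2 * T)) with hδ
  have hδA : δ ≤ 2 * π ^ 2 * A := min_le_left _ _
  have hδ1 : δ ≤ 2 * π ^ 2 := (min_le_right _ _).trans (min_le_left _ _)
  have hδT : δ ≤ 2 * π ^ 2 * T := (min_le_right _ _).trans (min_le_right _ _)
  have hδ0 : 0 < δ := by
    simp only [hδ, lt_min_iff]; refine ⟨?_, ?_, ?_⟩ <;> positivity
  clear_value δ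
  refine ⟨P * (2 + Real.exp T * N1) + P * (4 + N1) +
    P * (Real.exp A * (4 + C1 * Real.exp A)) + 4, δ, by positivity, hδ0, ?_⟩
  intro ε hε hε1 hεβ s hsπ
  set q := ε⁻¹ with hq
  have hq1 : 1 ≤ q := (one_le_inv₀ hε).2 hε1
  have hr0 : 0 ≤ (√ε)⁻¹ := by positivity
  have hrr : (√ε)⁻¹ * (√ε)⁻¹ = q := by rw [← mul_inv, Real.mul_self_sqrt hε.le]
  set r := (√ε)⁻¹ with hr
  have hr1 : 1 ≤ r := by nlinarith
  have hrq : r ≤ q := by nlinarith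
  set E := Real.exp ((4 * π ^ 2 * A - δ) * q) with hE
  have hE1 : 1 ≤ E := by
    rw [hE, Real.one_le_exp_iff]
    have : 0 ≤ 4 * π ^ 2 * A - δ := by nlinarith [show 0 < π ^ 2 * A by positivity]
    positivity
  have hLre : 0 < (bL β ε s).re := by rw [bL_re]; linarith
  have hRre : 0 < (bR ε s).re := by rw [bR_re]; exact hε
  have hmod := hm _ _ hLre hRre
  rw [ztilde_eq, ztilde_eq] at hmod
  have hsumβ : bL β ε s + bR ε s = (β : ℂ) := by simp [bL, bR]
  rw [hsumβ] at hmod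
  have hxl := dualL_lower hβ hε hεβ hsπ
  have hxp : 0 < (4 * (π : ℂ) ^ 2 / bL β ε s).re := hc1p.trans_le hxl
  have hye := dualR_re ε s
  have hexp := exp_dual_norm (s := s) hA hβ hεβ
  have hpref := pref_norm (s := s) hβ hε hεβ
  have hyp : 0 < (4 * (π : ℂ) ^ 2 / bR ε s).re := by rw [hye]; positivity
  have hnv := nvc_norm_le hs hxp hyp
  have hLn := norm_one_sub_exp_le hxp.le
  have hRn := norm_one_sub_exp_le hyp.le
  have hR' : ‖Complex.exp (-(4 * (π : ℂ) ^ 2 / bR ε s))‖ =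
      Real.exp (-(4 * (π : ℂ) ^ 2 / bR ε s).re) := by rw [Complex.norm_exp, Complex.neg_re]
  rw [Mn]
  set X := 4 * (π : ℂ) ^ 2 / bL β ε s with hX
  set Y := 4 * (π : ℂ) ^ 2 / bR ε s with hY
  set pf := ((4 * (π : ℂ) ^ 2) / (bL β ε s * bR ε s)) ^ ((1 : ℂ) / 2) with hpf
  have hv : ‖(1 - Complex.exp (-(bL β ε s))) * (1 - Complex.exp (-(bR ε s)))‖ ≤ 4 := by
    rw [norm_mul]
    have := mul_le_mul (norm_one_sub_exp_le hLre.le) (norm_one_sub_exp_le hRre.le)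
      (norm_nonneg _) (by norm_num)
    linarith
  set v := (1 - Complex.exp (-(bL β ε s))) * (1 - Complex.exp (-(bR ε s))) with hvdef
  have hNV : NVc ν (bL β ε s) (bR ε s) = Complex.exp (-(A * β : ℝ)) *
      (pf * (Complex.exp (A * (X + Y)) * ((1 - Complex.exp (-X)) * (1 - Complex.exp (-Y)) +
        NVc ν X Y))) - v := by
    rw [← hmod, ← mul_assoc, ← Complex.exp_add]
    push_cast; simp
  have hen : ‖Complex.exp (-(A * β : ℝ))‖ ≤ 1 := by
    rw [← Complex.ofReal_neg, ← Complex.ofReal_exp, Complex.norm_real,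
      Real.norm_of_nonneg (Real.exp_pos _).le, Real.exp_le_one_iff]
    have : 0 < A * β := by positivity
    linarith
  -- general reduction
  have gen : ∀ (W : ℂ) (w : ℝ), 0 ≤ w → ‖W‖ ≤ w →
      ‖Complex.exp (-(A * β : ℝ)) * (pf * (Complex.exp (A * (X + Y)) * W)) - v‖ ≤
        P * r * (Real.exp (A * Y.re) * w) + 4 := by
    intro W w hw0 hw
    refine (norm_sub_le _ _).trans (add_le_add ?_ hv)
    rw [norm_mul, norm_mul, norm_mul]
    calc _ ≤ 1 * (√c2 * r * ((Real.exp (A * c2) * Real.exp (A * Y.re)) * w)) := by gcongr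
      _ = _ := by rw [hP]; ring
  have hdecay : 1 ≤ Y.re → NVr ν X.re Y.re ≤ Real.exp (-(T * (Y.re - 1))) * N1 := fun h =>
    nvr_decay hs hT hc1p one_pos hxl h
  have hqE : 1 ≤ q * E := one_le_mul_of_one_le_of_one_le hq1 hE1
  have hA4 : 0 ≤ P * (2 + Real.exp T * N1) := by positivity
  have hA5 : 0 ≤ P * (4 + N1) := by positivity
  have hA6 : 0 ≤ P * (Real.exp A * (4 + C1 * Real.exp A)) := by positivity
  have hs2 : s ^ 2 ≤ π ^ 2 := sq_le_sq' (neg_le_of_abs_le hsπ) (le_of_abs_le hsπ)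
  have hpi3 : 9 ≤ π ^ 2 := by nlinarith [Real.pi_gt_three]
  rw [hNV]
  split_ifs with hcase
  · have hs3 : s ^ 2 ≤ ε ^ 2 := sq_le_sq' (neg_le_of_abs_le hcase) (le_of_abs_le hcase)
    have hyl : 2 * π ^ 2 * q ≤ Y.re := by
      rw [hye, hq, ← div_eq_mul_inv, div_le_div_iff₀ hε (by positivity)]
      linarith [mul_le_mul_of_nonneg_left hs3 (show 0 ≤ 2 * π ^ 2 by positivity)]
    have hyu : Y.re ≤ 4 * π ^ 2 * q := by
      rw [hye, hq, ← div_eq_mul_inv, div_le_div_iff₀ (by positivity) hε]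
      linarith [mul_nonneg (show 0 ≤ 4 * π ^ 2 by positivity) (sq_nonneg s)]
    have hy1 : 1 ≤ Y.re :=
      (one_le_mul_of_one_le_of_one_le (show 1 ≤ 2 * π ^ 2 by linarith) hq1).trans hyl
    have h1 : Real.exp (A * Y.re) * Real.exp (-Y.re) ≤ E := by
      rw [← Real.exp_add, hE, Real.exp_le_exp]
      linarith [mul_le_mul_of_nonneg_left hyu hA.le, mul_le_mul_of_nonneg_right hδ1 (zero_le_one.trans hq1)]
    have h2 : Real.exp (A * Y.re) * Real.exp (-(T * (Y.re - 1))) ≤ E * Real.exp T := by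
      rw [← Real.exp_add, hE, ← Real.exp_add, Real.exp_le_exp]
      linarith [mul_le_mul_of_nonneg_left hyu hA.le, mul_le_mul_of_nonneg_left hyl hT.le, mul_le_mul_of_nonneg_right hδT (zero_le_one.trans hq1)]
    have hg := gen (-((1 - Complex.exp (-X)) * Complex.exp (-Y)) + NVc ν X Y)
      (2 * Real.exp (-Y.re) + Real.exp (-(T * (Y.re - 1))) * N1) (by positivity) (by
        refine (norm_add_le _ _).trans (add_le_add ?_ (hnv.trans (hdecay hy1)))
        rw [norm_neg, norm_mul, hR']
        gcongr)
    rw [show Complex.exp (-(A * β : ℝ)) * (pf * (Complex.exp (A * (X + Y)) *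
      ((1 - Complex.exp (-X)) * (1 - Complex.exp (-Y)) + NVc ν X Y))) - v -
      Complex.exp (-(A * β : ℝ)) * (pf * (Complex.exp (A * (X + Y)) * (1 - Complex.exp (-X)))) =
      Complex.exp (-(A * β : ℝ)) * (pf * (Complex.exp (A * (X + Y)) *
      (-((1 - Complex.exp (-X)) * Complex.exp (-Y)) + NVc ν X Y))) - v by ring]
    refine hg.trans ?_
    have h3 : Real.exp (A * Y.re) * (2 * Real.exp (-Y.re) + Real.exp (-(T * (Y.re - 1))) * N1) ≤
        E * (2 + Real.exp T * N1) := by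
      linarith [mul_le_mul_of_nonneg_right h2 hN1n]
    calc _ ≤ P * q * (E * (2 + Real.exp T * N1)) + 4 * (q * E) := by gcongr; linarith
      _ ≤ _ := by linarith [mul_nonneg hA5 (zero_le_one.trans hqE), mul_nonneg hA6 (zero_le_one.trans hqE)]
  · rw [mul_zero, sub_zero]
    push Not at hcase
    have hs3 : ε ^ 2 ≤ s ^ 2 := by rw [← sq_abs s]; gcongr
    have hyu : Y.re ≤ 2 * π ^ 2 * q := by
      rw [hye, hq, ← div_eq_mul_inv, div_le_div_iff₀ (by positivity) hε]
      linarith [mul_le_mul_of_nonneg_left hs3 (show 0 ≤ 2 * π ^ 2 by positivity)]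
    have hw : ∀ n : ℝ, NVr ν X.re Y.re ≤ n →
      ‖(1 - Complex.exp (-X)) * (1 - Complex.exp (-Y)) + NVc ν X Y‖ ≤ 4 + n := by
      intro n hn
      refine (norm_add_le _ _).trans (add_le_add ?_ (hnv.trans hn))
      rw [norm_mul]
      have := mul_le_mul hLn hRn (norm_nonneg _) (by norm_num)
      linarith
    rcases le_or_gt 1 Y.re with hy1 | hy1
    · have h1 : Real.exp (A * Y.re) ≤ E := by
        rw [hE, Real.exp_le_exp]
        linarith [mul_le_mul_of_nonneg_left hyu hA.le, mul_le_mul_of_nonneg_right hδA (zero_le_one.trans hq1)]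
      refine (gen _ (4 + N1) (by positivity) (hw N1 ((hdecay hy1).trans
        (mul_le_of_le_one_left hN1n ?_)))).trans ?_
      · rw [Real.exp_le_one_iff]
        linarith [mul_nonneg hT.le (sub_nonneg.2 hy1)]
      calc _ ≤ P * q * (E * (4 + N1)) + 4 * (q * E) := by gcongr; linarith
        _ ≤ _ := by linarith [mul_nonneg hA4 (zero_le_one.trans hqE), mul_nonneg hA6 (zero_le_one.trans hqE)]
    · have hyε : ε ≤ Y.re := by
        rw [hye, le_div_iff₀ (by positivity), mul_comm]
        have : ε ^ 2 ≤ 1 := pow_le_one₀ hε.le hε1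
        exact mul_le_mul_of_nonneg_right (by linarith) hε.le
      have h1 : NVr ν X.re Y.re ≤ C1 * r * (Real.exp A * Real.exp (π ^ 2 * A * q)) := by
        have hd := nvr_decay hs hT hc1p hyp hxl le_rfl
        simp only [sub_self, mul_zero, neg_zero, Real.exp_zero, one_mul] at hd
        refine hd.trans ((hsm _ hyp hy1.le).trans ?_)
        have h2 : (√Y.re)⁻¹ ≤ r := by rw [hr]; gcongr
        have h3 : 4 * π ^ 2 * A / Y.re ≤ A + π ^ 2 * A * q := by
          have : 4 * π ^ 2 * A / Y.re = A * (ε + s ^ 2 * q) := by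
            rw [hye, hq]; field_simp
          rw [this]
          have : ε + s ^ 2 * q ≤ 1 + π ^ 2 * q := by gcongr
          linarith [mul_le_mul_of_nonneg_left this hA.le]
        rw [← Real.exp_add]
        gcongr
      have h2 : Real.exp (π ^ 2 * A * q) ≤ E := by
        rw [hE, Real.exp_le_exp]
        have : π ^ 2 * A ≤ 4 * π ^ 2 * A - δ := by nlinarith [show 0 < π ^ 2 * A by positivity]
        gcongr
      have h3 : Real.exp (A * Y.re) ≤ Real.exp A := by
        rw [Real.exp_le_exp]; exact mul_le_of_le_one_right hA.le hy1.le
      refine (gen _ _ (by positivity) (hw _ h1)).trans ?_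
      calc _ ≤ P * r * (Real.exp A * (4 * (r * E) + C1 * r * (Real.exp A * E))) + 4 * (q * E) := by
            gcongr
            · have : 1 ≤ r * E := one_le_mul_of_one_le_of_one_le hr1 hE1
              linarith
            · linarith
        _ = P * (Real.exp A * (4 + C1 * Real.exp A)) * ((r * r) * E) + 4 * (q * E) := by ring
        _ ≤ _ := by
            rw [hrr]
            linarith [mul_nonneg hA4 (zero_le_one.trans hqE), mul_nonneg hA5 (zero_le_one.trans hqE)]

lemma real_mul_half {r : ℝ} (hr : 0 < r) {z : ℂ} (hz : z ≠ 0) :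
    ((r : ℂ) * z) ^ ((1 : ℂ) / 2) = (√r : ℝ) * z ^ ((1 : ℂ) / 2) := by
  have hr' : (r : ℂ) ≠ 0 := by exact_mod_cast hr.ne'
  rw [Complex.cpow_def_of_ne_zero (mul_ne_zero hr' hz), Complex.log_ofReal_mul hr hz, add_mul,
    Complex.exp_add, ← Complex.cpow_def_of_ne_zero hz]
  congr 1
  rw [Real.sqrt_eq_rpow, Complex.ofReal_cpow hr.le, Complex.cpow_def_of_ne_zero hr',
    Complex.ofReal_log hr.le]
  push_cast; rfl

lemma real_half {r : ℝ} (hr : 0 < r) : ((r : ℂ)) ^ ((1 : ℂ) / 2) = (√r : ℝ) := by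
  have := real_mul_half hr one_ne_zero
  simpa using this

def wv (ε v : ℝ) : ℂ := 1 - ((√ε * v : ℝ) : ℂ) * Complex.I

def G0 (A β ε v : ℝ) : ℂ :=
  Complex.exp (-((4 * π ^ 2 * A * v ^ 2 : ℝ) : ℂ) / wv ε v) *
    (((4 * (π : ℂ) ^ 2) / ((β - ε * wv ε v) * wv ε v)) ^ ((1 : ℂ) / 2) *
      (Complex.exp (A * (4 * (π : ℂ) ^ 2 / (β - ε * wv ε v))) *
        (1 - Complex.exp (-(4 * (π : ℂ) ^ 2 / (β - ε * wv ε v))))))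

def GG (A β ε v : ℝ) : ℂ := if |√ε * v| ≤ 1 then G0 A β ε v else 0

lemma wv_re (ε v : ℝ) : (wv ε v).re = 1 := by simp [wv]
lemma wv_im (ε v : ℝ) : (wv ε v).im = -(√ε * v) := by simp [wv]
lemma wv_ne (ε v : ℝ) : wv ε v ≠ 0 := fun h => by
  have := wv_re ε v; rw [h] at this; simp at this

lemma bL_eq (β ε v : ℝ) : (β : ℂ) - ε * wv ε v = bL β ε (ε * √ε * v) := by
  simp only [wv, bL]; push_cast; ring

lemma bR_eq (ε v : ℝ) : ε * wv ε v = bR ε (ε * √ε * v) := by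
  simp only [wv, bR]; push_cast; ring

lemma GG_bound {A β ε : ℝ} (hA : 0 < A) (hβ : 0 < β) (hεβ : ε ≤ β / 2) (v : ℝ) :
    ‖GG A β ε v‖ ≤ Real.exp (-(2 * π ^ 2 * A) * v ^ 2) *
      (√(8 * π ^ 2 / β) * (Real.exp (A * (8 * π ^ 2 / β)) * 2)) := by
  rw [GG]
  split_ifs with h
  swap
  · rw [norm_zero]; positivity
  have hLr : β / 2 ≤ (bL β ε (ε * √ε * v)).re := by rw [bL_re]; linarith
  rw [G0, norm_mul, norm_mul, norm_mul, bL_eq]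
  have h0 : 0 < (bL β ε (ε * √ε * v)).re := by linarith
  have hxp : 0 ≤ (4 * (π : ℂ) ^ 2 / bL β ε (ε * √ε * v)).re := by rw [dual_re]; positivity
  gcongr
  · rw [Complex.norm_exp, Real.exp_le_exp, ← Complex.ofReal_neg, Complex.div_re,
      Complex.ofReal_re, Complex.ofReal_im, Complex.normSq_apply, wv_re, wv_im]
    have h2 : (√ε * v) ^ 2 ≤ 1 := by rw [← sq_abs]; exact pow_le_one₀ (abs_nonneg _) h
    rw [zero_mul, zero_div, add_zero, div_le_iff₀ (by nlinarith [sq_nonneg (√ε * v)])]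
    nlinarith [mul_le_mul_of_nonneg_left h2 (show 0 ≤ 2 * π ^ 2 * A * v ^ 2 by positivity)]
  · rw [norm_half]
    refine Real.sqrt_le_sqrt ?_
    have e : (4 * (π : ℂ) ^ 2) = ((4 * π ^ 2 : ℝ) : ℂ) := by push_cast; rfl
    rw [norm_div, e, Complex.norm_real, Real.norm_of_nonneg (by positivity), norm_mul]
    have h1 : β / 2 ≤ ‖bL β ε (ε * √ε * v)‖ := hLr.trans (Complex.re_le_norm _)
    have h2 : 1 ≤ ‖wv ε v‖ := by
      refine le_trans ?_ (Complex.re_le_norm _); rw [wv_re]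
    calc 4 * π ^ 2 / (‖bL β ε (ε * √ε * v)‖ * ‖wv ε v‖) ≤ 4 * π ^ 2 / ((β / 2) * 1) := by gcongr
      _ = _ := by field_simp; ring
  · rw [Complex.norm_exp, Real.exp_le_exp, Complex.re_ofReal_mul]
    have := dualL_upper (s := ε * √ε * v) hβ hεβ
    gcongr
  · exact norm_one_sub_exp_le hxp

lemma wv_meas (ε : ℝ) : Measurable (wv ε) := by unfold wv; fun_prop

lemma GG_meas (A β ε : ℝ) : Measurable (GG A β ε) := by
  have := wv_meas ε
  refine Measurable.ite (measurableSet_le (by fun_prop) (by fun_prop)) ?_ measurable_const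
  unfold G0
  fun_prop

def Klim (A β : ℝ) : ℝ :=
  √(4 * π ^ 2 / β) * (Real.exp (4 * π ^ 2 * A / β) * (1 - Real.exp (-(4 * π ^ 2 / β))))

lemma G0_zero {A β : ℝ} (hβ : 0 < β) (v : ℝ) : G0 A β 0 v =
    ((Real.exp (-(4 * π ^ 2 * A) * v ^ 2) * Klim A β : ℝ) : ℂ) := by
  have hw : wv 0 v = 1 := by simp [wv]
  have hp : 0 < 4 * π ^ 2 / β := by positivity
  have e : (4 * (π : ℂ) ^ 2 / (β : ℂ)) = ((4 * π ^ 2 / β : ℝ) : ℂ) := by push_cast; rfl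
  rw [G0, hw, Klim]
  simp only [Complex.ofReal_zero, sub_zero, mul_one, div_one]
  rw [e, real_half hp, show 4 * π ^ 2 * A / β = A * (4 * π ^ 2 / β) by ring]
  push_cast; ring_nf

lemma G0_cont {A β : ℝ} (hβ : 0 < β) (v : ℝ) : ContinuousAt (fun ε => G0 A β ε v) 0 := by
  have hw : ContinuousAt (fun ε => wv ε v) 0 := by
    have : Continuous (fun ε => wv ε v) := by unfold wv; fun_prop
    exact this.continuousAt
  have hw0 : wv 0 v = 1 := by simp [wv]
  have hb : ContinuousAt (fun ε : ℝ => (β : ℂ) - ε * wv ε v) 0 := by fun_prop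
  have hb0 : (β : ℂ) - (0 : ℝ) * wv 0 v = β := by simp
  have hβ' : (β : ℂ) ≠ 0 := by exact_mod_cast hβ.ne'
  have hX : ContinuousAt (fun ε : ℝ => 4 * (π : ℂ) ^ 2 / ((β : ℂ) - ε * wv ε v)) 0 :=
    continuousAt_const.div hb (by rw [hb0]; exact hβ')
  have e : (4 * (π : ℂ) ^ 2 / (β : ℂ)) = ((4 * π ^ 2 / β : ℝ) : ℂ) := by push_cast; rfl
  unfold G0
  refine ContinuousAt.mul ?_ (ContinuousAt.mul ?_ (ContinuousAt.mul ?_ ?_))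
  · exact (continuousAt_const.div hw (by rw [hw0]; exact one_ne_zero)).cexp
  · refine ContinuousAt.cpow ?_ continuousAt_const ?_
    · refine continuousAt_const.div (hb.mul hw) ?_
      rw [hb0, hw0, mul_one]; exact hβ'
    · rw [hb0, hw0, mul_one, e, Complex.ofReal_mem_slitPlane]
      positivity
  · exact (continuousAt_const.mul hX).cexp
  · exact continuousAt_const.sub hX.neg.cexp

lemma GG_limit {A β : ℝ} (hA : 0 < A) (hβ : 0 < β) :
    Tendsto (fun ε => ∫ v, GG A β ε v) (𝓝[>] 0)
      (𝓝 ((√(π / (4 * π ^ 2 * A)) * Klim A β : ℝ) : ℂ)) := by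
  have e : ((√(π / (4 * π ^ 2 * A)) * Klim A β : ℝ) : ℂ) =
      ∫ v : ℝ, ((Real.exp (-(4 * π ^ 2 * A) * v ^ 2) * Klim A β : ℝ) : ℂ) := by
    rw [integral_complex_ofReal, integral_mul_const, integral_gaussian]
  rw [e]
  refine tendsto_integral_filter_of_dominated_convergence
    (fun v => Real.exp (-(2 * π ^ 2 * A) * v ^ 2) *
      (√(8 * π ^ 2 / β) * (Real.exp (A * (8 * π ^ 2 / β)) * 2))) ?_ ?_ ?_ ?_
  · exact Eventually.of_forall fun ε => (GG_meas A β ε).aestronglyMeasurable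
  · have : ∀ᶠ ε : ℝ in 𝓝[>] 0, ε ≤ β / 2 :=
      nhdsWithin_le_nhds (Iic_mem_nhds (by positivity))
    filter_upwards [this] with ε h
    exact Eventually.of_forall fun v => GG_bound hA hβ h v
  · exact (integrable_exp_neg_mul_sq (by positivity)).mul_const _
  · refine Eventually.of_forall fun v => ?_
    have h1 := (G0_cont (A := A) hβ v).tendsto
    rw [G0_zero hβ] at h1
    refine (h1.mono_left nhdsWithin_le_nhds).congr' ?_
    have h2 : ContinuousAt (fun ε : ℝ => |√ε * v|) 0 := by
      have : Continuous (fun ε : ℝ => |√ε * v|) := by fun_prop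
      exact this.continuousAt
    have h3 : ∀ᶠ ε : ℝ in 𝓝 0, |√ε * v| < 1 := h2.eventually_lt_const (by simp)
    filter_upwards [nhdsWithin_le_nhds h3] with ε h
    rw [GG, if_pos h.le]

/-- rescaled main term -/
lemma main_rescale {A β ε : ℝ} (hβ : 0 < β) (hε : 0 < ε) (hεβ : ε ≤ β / 2)
    (J : ℤ) (hJ : ε * ε * J = 4 * π ^ 2 * A) (v : ℝ) :
    Complex.exp (-(((ε * √ε * v : ℝ) : ℂ) * J * Complex.I)) *
      (if |ε * √ε * v| ≤ ε then Mn A β ε (ε * √ε * v) else 0) =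
    (((√ε)⁻¹ * Real.exp (4 * π ^ 2 * A / ε) : ℝ) : ℂ) * GG A β ε v := by
  have hiff : |ε * √ε * v| ≤ ε ↔ |√ε * v| ≤ 1 := by
    rw [mul_assoc, abs_mul, abs_of_pos hε]
    constructor
    · intro h; by_contra! h'; nlinarith
    · intro h; nlinarith
  rw [GG]
  by_cases h : |√ε * v| ≤ 1
  swap
  · rw [if_neg h, if_neg (by rwa [hiff])]; simp
  rw [if_pos h, if_pos (hiff.2 h), Mn, G0, ← bR_eq, ← bL_eq]
  have hb : (β : ℂ) - ε * wv ε v ≠ 0 := by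
    rw [bL_eq]; intro h
    have := bL_re β ε (ε * √ε * v); rw [h] at this; simp at this; linarith
  have hw := wv_ne ε v
  have hε' : (ε : ℂ) ≠ 0 := by exact_mod_cast hε.ne'
  have hpi : (π : ℂ) ≠ 0 := by exact_mod_cast Real.pi_ne_zero
  set b := (β : ℂ) - ε * wv ε v with hbdef
  have e1 : 4 * (π : ℂ) ^ 2 / (b * (ε * wv ε v)) =
      ((ε⁻¹ : ℝ) : ℂ) * (4 * (π : ℂ) ^ 2 / (b * wv ε v)) := by
    push_cast; field_simp
  rw [e1, real_mul_half (by positivity) (by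
    exact div_ne_zero (mul_ne_zero (by norm_num) (pow_ne_zero 2 hpi)) (mul_ne_zero hb hw)), Real.sqrt_inv]
  have e2 : Complex.exp (-(((ε * √ε * v : ℝ) : ℂ) * J * Complex.I)) *
      Complex.exp ((A : ℂ) * (4 * (π : ℂ) ^ 2 / b + 4 * (π : ℂ) ^ 2 / (ε * wv ε v))) =
      (Real.exp (4 * π ^ 2 * A / ε) : ℝ) *
      (Complex.exp (-((4 * π ^ 2 * A * v ^ 2 : ℝ) : ℂ) / wv ε v) *
        Complex.exp (A * (4 * (π : ℂ) ^ 2 / b))) := by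
    rw [Complex.ofReal_exp, ← Complex.exp_add, ← Complex.exp_add, ← Complex.exp_add]
    congr 1
    have hJ' : (J : ℂ) = 4 * π ^ 2 * A / (ε * ε) := by
      rw [eq_div_iff (mul_ne_zero hε' hε')]
      have : ((ε * ε * J : ℝ) : ℂ) = ((4 * π ^ 2 * A : ℝ) : ℂ) := by rw [hJ]
      push_cast at this; rw [← this]; ring
    have hsq : ((√ε : ℝ) : ℂ) ^ 2 = ε := by
      rw [← Complex.ofReal_pow, Real.sq_sqrt hε.le]
    have hwI : ((√ε : ℝ) : ℂ) * v * Complex.I = 1 - wv ε v := by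
      simp only [wv]; push_cast; ring
    have hv2 : (ε : ℂ) * v ^ 2 = -(1 - wv ε v) ^ 2 := by
      rw [← hwI, ← hsq]; ring_nf; simp
    have e3 : ((ε * √ε * v : ℝ) : ℂ) * J * Complex.I =
        4 * π ^ 2 * A / ε * (1 - wv ε v) := by
      rw [← hwI, hJ']; push_cast; field_simp
    have e4 : ((4 * π ^ 2 * A * v ^ 2 : ℝ) : ℂ) = 4 * π ^ 2 * A / ε * (-(1 - wv ε v) ^ 2) := by
      rw [← hv2]; push_cast; field_simp
    rw [e3, e4]
    push_cast
    field_simp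
    ring
  push_cast at e2 ⊢
  linear_combination ((√ε : ℂ)⁻¹ * (4 * (π : ℂ) ^ 2 / (b * wv ε v)) ^ ((1 : ℂ) / 2) *
    (1 - Complex.exp (-(4 * (π : ℂ) ^ 2 / b)))) * e2

def Lap (ν : ℤ → Measure ℝ) (J : ℤ) (β : ℝ) : ℝ := ∫ h : ℝ, Real.exp (-β * h) ∂(ν J)

lemma fr_eq_lap (ν : ℤ → Measure ℝ) (J : ℤ) (β ε : ℝ) :
    Fr ν J (β - ε) ε = Real.exp (-(ε * J)) * Lap ν J β := by
  rw [Fr, Lap, ← integral_const_mul]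
  congr 1; ext h; rw [← Real.exp_add]; congr 1; ring

lemma GG_integrable {A β ε : ℝ} (hA : 0 < A) (hβ : 0 < β) (hεβ : ε ≤ β / 2) :
    Integrable (GG A β ε) := by
  refine Integrable.mono' (((integrable_exp_neg_mul_sq (b := 2 * π ^ 2 * A)
    (by positivity)).mul_const (√(8 * π ^ 2 / β) * (Real.exp (A * (8 * π ^ 2 / β)) * 2))))
    (GG_meas A β ε).aestronglyMeasurable ?_
  exact Eventually.of_forall fun v => GG_bound hA hβ hεβ v

lemma spin_identity {A T : ℝ} (hA : 0 < A) {ν : ℤ → Measure ℝ} (hs : IsSpectrum T ν)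
    {β C δ ε : ℝ} (hβ : 0 < β) (hε : 0 < ε) (hε1 : ε ≤ 1) (hεβ : ε ≤ β / 2)
    (hbd : ∀ s : ℝ, |s| ≤ π →
      ‖NVc ν (bL β ε s) (bR ε s) -
        Complex.exp (-(A * β : ℝ)) * (if |s| ≤ ε then Mn A β ε s else 0)‖ ≤
        C * ε⁻¹ * Real.exp ((4 * π ^ 2 * A - δ) * ε⁻¹))
    (J : ℤ) (hJ : ε * ε * J = 4 * π ^ 2 * A) :
    ‖((2 * π * (Lap ν J β / (Real.exp (2 * (4 * π ^ 2 * A / ε)) * ε)) : ℝ) : ℂ) -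
      Complex.exp (-(A * β : ℝ)) * ∫ v, GG A β ε v‖ ≤
      2 * π * C * (ε⁻¹ * ε⁻¹ * Real.exp (-(δ * ε⁻¹))) := by
  set F2 : ℝ → ℂ := fun s => Complex.exp (-((s : ℂ) * J * Complex.I)) *
      (if |s| ≤ ε then Mn A β ε s else 0) with hF2
  set R := ε * √ε with hR
  have hRp : 0 < R := by positivity
  set c : ℂ := (((√ε)⁻¹ * Real.exp (4 * π ^ 2 * A / ε) : ℝ) : ℂ) with hc
  have hresc : ∀ v : ℝ, F2 (R * v) = c * GG A β ε v := fun v =>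
    main_rescale hβ hε hεβ J hJ v
  have hF2int : Integrable F2 := by
    have h1 := ((GG_integrable hA hβ hεβ).const_mul c).comp_mul_left' (inv_ne_zero hRp.ne')
    refine h1.congr (Eventually.of_forall fun s => ?_)
    simp only
    rw [← hresc, mul_inv_cancel_left₀ hRp.ne']
  have hI2 : ∫ s in (-π)..π, F2 s = (ε * Real.exp (4 * π ^ 2 * A / ε) : ℝ) * ∫ v, GG A β ε v := by
    rw [intervalIntegral.integral_eq_integral_of_support_subset]
    · have h2 := Measure.integral_comp_mul_left F2 R
      simp only [hresc] at h2
      rw [integral_const_mul, abs_of_pos (inv_pos.2 hRp), Complex.real_smul] at h2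
      have hR' : (R : ℂ) ≠ 0 := by exact_mod_cast hRp.ne'
      have : ∫ s, F2 s = R * (c * ∫ v, GG A β ε v) := by
        rw [h2]; push_cast; field_simp
      rw [this, ← mul_assoc, hc, ← Complex.ofReal_mul]
      congr 2
      rw [hR]; field_simp
    · intro s hs'
      by_contra hcon
      apply hs'
      have : ¬ |s| ≤ ε := fun h => hcon ⟨by
        have := neg_le_of_abs_le h; linarith [Real.pi_gt_three], by
        have := le_of_abs_le h; linarith [Real.pi_gt_three]⟩
      simp [hF2, this]
  have hI1 := fourier_extract hs (show 0 < β - ε by linarith) hε J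
  rw [fr_eq_lap] at hI1
  have hcont := nvc_continuous hs (show 0 < β - ε by linarith) hε
  set F1 : ℝ → ℂ := fun s => Complex.exp (-((s : ℂ) * J * Complex.I)) *
    NVc ν (((β - ε : ℝ) : ℂ) + s * Complex.I) (ε - s * Complex.I) with hF1
  have hF1c : Continuous F1 := by
    refine Continuous.mul ?_ hcont
    fun_prop
  have hdiff : ‖∫ s in (-π)..π, (F1 s - Complex.exp (-(A * β : ℝ)) * F2 s)‖ ≤
      C * ε⁻¹ * Real.exp ((4 * π ^ 2 * A - δ) * ε⁻¹) * |π - -π| := by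
    refine intervalIntegral.norm_integral_le_of_norm_le_const fun s hs' => ?_
    rw [Set.uIoc_of_le (by linarith [Real.pi_pos])] at hs'
    have habs : |s| ≤ π := abs_le.2 ⟨hs'.1.le, hs'.2⟩
    refine le_trans (le_of_eq ?_) (hbd s habs)
    have : F1 s - Complex.exp (-(A * β : ℝ)) * F2 s =
        Complex.exp (-((s : ℂ) * J * Complex.I)) * (NVc ν (bL β ε s) (bR ε s) -
        Complex.exp (-(A * β : ℝ)) * (if |s| ≤ ε then Mn A β ε s else 0)) := by
      simp only [hF1, hF2, bL, bR]; ring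
    rw [this, norm_mul, Complex.norm_exp]
    simp
  rw [intervalIntegral.integral_sub (hF1c.intervalIntegrable _ _)
    ((hF2int.intervalIntegrable).const_mul _), intervalIntegral.integral_const_mul, hI1, hI2] at hdiff
  have hεJ : ε * J = 4 * π ^ 2 * A / ε := by
    rw [eq_div_iff hε.ne', ← hJ]; ring
  rw [hεJ] at hdiff
  set Λ := 4 * π ^ 2 * A / ε with hΛ
  have hD : 0 < Real.exp Λ * ε := by positivity
  have hD' : (0 : ℝ) < (Real.exp Λ * ε)⁻¹ := by positivity
  have key : ((2 * π * (Lap ν J β / (Real.exp (2 * Λ) * ε)) : ℝ) : ℂ) -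
      Complex.exp (-(A * β : ℝ)) * ∫ v, GG A β ε v =
      (((Real.exp Λ * ε)⁻¹ : ℝ) : ℂ) * (2 * π * ((Real.exp (-Λ) * Lap ν J β : ℝ) : ℂ) -
        Complex.exp (-(A * β : ℝ)) * ((ε * Real.exp Λ : ℝ) * ∫ v, GG A β ε v)) := by
    rw [two_mul Λ, Real.exp_add, Real.exp_neg]
    have h1 : ((Real.exp Λ : ℝ) : ℂ) ≠ 0 := by exact_mod_cast (Real.exp_pos Λ).ne'
    have h2 : (ε : ℂ) ≠ 0 := by exact_mod_cast hε.ne'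
    rw [Complex.ofReal_mul, Complex.ofReal_div, Complex.ofReal_inv, Complex.ofReal_mul (_ * _) ε,
      Complex.ofReal_mul (Real.exp Λ) (Real.exp Λ), Complex.ofReal_mul (Real.exp Λ) ε,
      Complex.ofReal_mul (Real.exp Λ)⁻¹, Complex.ofReal_inv, Complex.ofReal_mul ε,
      Complex.ofReal_mul 2 π, Complex.ofReal_ofNat]
    field_simp
  rw [key, norm_mul, Complex.norm_real, Real.norm_of_nonneg hD'.le]
  refine (mul_le_mul_of_nonneg_left hdiff hD'.le).trans (le_of_eq ?_)
  rw [abs_of_pos (by linarith [Real.pi_pos]), sub_mul, Real.exp_sub,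
    show 4 * π ^ 2 * A * ε⁻¹ = Λ by rw [hΛ]; ring, Real.exp_neg]
  have := (Real.exp_pos Λ).ne'
  field_simp
  ring

def epsJ (A : ℝ) (J : ℤ) : ℝ := 2 * π * √(A / J)

def NJ (A : ℝ) (J : ℤ) : ℝ := Real.exp (2 * (4 * π ^ 2 * A / epsJ A J)) * epsJ A J

lemma epsJ_pos {A : ℝ} (hA : 0 < A) {J : ℤ} (hJ : 0 < J) : 0 < epsJ A J := by
  have : (0 : ℝ) < J := by exact_mod_cast hJ
  unfold epsJ; positivity

lemma epsJ_sq {A : ℝ} (hA : 0 < A) {J : ℤ} (hJ : 0 < J) :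
    epsJ A J * epsJ A J * J = 4 * π ^ 2 * A := by
  have h : (0 : ℝ) < J := by exact_mod_cast hJ
  have h2 : √(A / J) * √(A / J) = A / J := Real.mul_self_sqrt (by positivity)
  calc epsJ A J * epsJ A J * J = 4 * π ^ 2 * (√(A / J) * √(A / J)) * J := by unfold epsJ; ring
    _ = _ := by rw [h2]; field_simp

lemma epsJ_tendsto {A : ℝ} (hA : 0 < A) : Tendsto (epsJ A) atTop (𝓝[>] 0) := by
  refine tendsto_nhdsWithin_iff.2 ⟨?_, ?_⟩
  · have h1 : Tendsto (fun J : ℤ => A / (J : ℝ)) atTop (𝓝 0) :=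
      tendsto_const_nhds.div_atTop tendsto_intCast_atTop_atTop
    have h2 := (Real.continuous_sqrt.tendsto 0).comp h1
    have h3 := h2.const_mul (2 * π)
    change Tendsto (fun J : ℤ => 2 * π * √(A / (J : ℝ))) atTop (𝓝 0)
    simpa [Function.comp_def] using h3
  · filter_upwards [eventually_gt_atTop 0] with J hJ
    exact epsJ_pos hA hJ

lemma NJ_tendsto {A : ℝ} (hA : 0 < A) : Tendsto (NJ A) atTop atTop := by
  have h1 : Tendsto (fun J => (epsJ A J)⁻¹) atTop atTop :=
    tendsto_inv_nhdsGT_zero.comp (epsJ_tendsto hA)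
  have h2 : Tendsto (fun q : ℝ => Real.exp ((8 * π ^ 2 * A) * q) / q ^ (1 : ℝ)) atTop atTop :=
    tendsto_exp_mul_div_rpow_atTop 1 _ (by positivity)
  refine (h2.comp h1).congr fun J => ?_
  simp only [Function.comp, Real.rpow_one, NJ, div_inv_eq_mul]
  congr 2; ring

lemma laplace_limit {A T : ℝ} (hA : 0 < A) (hT : 0 < T) {ν : ℤ → Measure ℝ}
    (hs : IsSpectrum T ν) (hm : ModularInvariant A ν) {β : ℝ} (hβ : 0 < β) :
    Tendsto (fun J : ℤ => 2 * π * (Lap ν J β / NJ A J)) atTop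
      (𝓝 (Real.exp (-(A * β)) * (√(π / (4 * π ^ 2 * A)) * Klim A β))) := by
  obtain ⟨C, δ, hC, hδ, hbd⟩ := error_bound hA hT hs hm hβ
  have he := epsJ_tendsto hA
  have h1 := ((GG_limit hA hβ).comp he).const_mul (Complex.exp (-(A * β : ℝ)))
  have hinv : Tendsto (fun J => (epsJ A J)⁻¹) atTop atTop :=
    tendsto_inv_nhdsGT_zero.comp he
  have h2 : Tendsto (fun q : ℝ => q ^ (2 : ℝ) * Real.exp (-δ * q)) atTop (𝓝 0) :=
    tendsto_rpow_mul_exp_neg_mul_atTop_nhds_zero 2 δ hδ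
  have h3 := (h2.comp hinv).const_mul (2 * π * C)
  rw [mul_zero] at h3
  have h4 : Tendsto (fun J : ℤ => ((2 * π * (Lap ν J β / NJ A J) : ℝ) : ℂ) -
      Complex.exp (-(A * β : ℝ)) * ∫ v, GG A β (epsJ A J) v) atTop (𝓝 0) := by
    refine squeeze_zero_norm' ?_ h3
    have hnear : ∀ᶠ ε : ℝ in 𝓝[>] 0, ε ≤ 1 ∧ ε ≤ β / 2 :=
      nhdsWithin_le_nhds (inter_mem (Iic_mem_nhds one_pos) (Iic_mem_nhds (by positivity)))
    filter_upwards [he.eventually hnear, eventually_gt_atTop 0] with J hJ hJ0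
    have hε := epsJ_pos hA hJ0
    refine (spin_identity hA hs hβ hε hJ.1 hJ.2 (hbd _ hε hJ.1 hJ.2) J (epsJ_sq hA hJ0)).trans
      (le_of_eq ?_)
    simp only [Function.comp]
    rw [show (2 : ℝ) = ((2 : ℕ) : ℝ) by norm_num, Real.rpow_natCast, sq, neg_mul]
  have h5 := h4.add h1
  simp only [Function.comp, sub_add_cancel, zero_add] at h5
  have h6 := (Complex.continuous_re.tendsto _).comp h5
  simp only [Function.comp_def, Complex.ofReal_re] at h6
  convert h6 using 2
  rw [← Complex.ofReal_neg, ← Complex.ofReal_exp, ← Complex.ofReal_mul, Complex.ofReal_re]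

def cB (B x : ℝ) : ℝ := if 0 ≤ B then Real.cosh (4 * π * √B * x) else Real.cos (4 * π * √(-B) * x)

lemma cB_cont (B : ℝ) : Continuous (cB B) := by
  unfold cB
  split_ifs
  · exact Real.continuous_cosh.comp (by fun_prop)
  · fun_prop

lemma cB_exp (B : ℝ) : ∃ k : ℂ, k ^ 2 = 16 * π ^ 2 * B ∧ ∀ x : ℝ, (cB B x : ℂ) =
    (Complex.exp (k * x) + Complex.exp (-k * x)) / 2 := by
  by_cases h : 0 ≤ B
  · refine ⟨((4 * π * √B : ℝ) : ℂ), ?_, fun x => ?_⟩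
    · rw [← Complex.ofReal_pow, mul_pow, Real.sq_sqrt h]; push_cast; ring
    · rw [cB, if_pos h, Complex.ofReal_cosh, Complex.cosh]; push_cast; ring_nf
  · refine ⟨((4 * π * √(-B) : ℝ) : ℂ) * Complex.I, ?_, fun x => ?_⟩
    · rw [mul_pow, ← Complex.ofReal_pow, mul_pow, Real.sq_sqrt (by linarith), Complex.I_sq]
      push_cast; ring
    · rw [cB, if_neg h, Complex.ofReal_cos, Complex.cos]; push_cast; ring_nf

lemma cB_int (B : ℝ) {β : ℝ} (hβ : 0 < β) :
    Integrable (fun x : ℝ => Real.exp (-β * x ^ 2) * cB B x) ∧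
    ∫ x : ℝ, Real.exp (-β * x ^ 2) * cB B x = √(π / β) * Real.exp (4 * π ^ 2 * B / β) := by
  obtain ⟨k, hk, hx⟩ := cB_exp B
  have hre : (-(β : ℂ)).re < 0 := by simpa using hβ
  have hβ' : (β : ℂ) ≠ 0 := by exact_mod_cast hβ.ne'
  have e : ∀ x : ℝ, ((Real.exp (-β * x ^ 2) * cB B x : ℝ) : ℂ) =
      (Complex.exp (-(β : ℂ) * x ^ 2 + k * x + 0) +
        Complex.exp (-(β : ℂ) * x ^ 2 + -k * x + 0)) / 2 := by
    intro x
    rw [Complex.ofReal_mul, hx, add_zero, add_zero, Complex.exp_add, Complex.exp_add]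
    push_cast; ring
  have i1 := integrable_cexp_quadratic' hre k 0
  have i2 := integrable_cexp_quadratic' hre (-k) 0
  have h_integrable : Integrable (fun x : ℝ => ((Real.exp (-β * x ^ 2) * cB B x : ℝ) : ℂ)) := by
    simp only [e]; exact (i1.add i2).div_const 2
  refine ⟨?_, ?_⟩
  · exact h_integrable.re
  · have h : ((∫ x : ℝ, Real.exp (-β * x ^ 2) * cB B x : ℝ) : ℂ) =
        ((√(π / β) * Real.exp (4 * π ^ 2 * B / β) : ℝ) : ℂ) := by
      rw [← integral_complex_ofReal]
      simp only [e]
      rw [integral_div, integral_add i1 i2, integral_cexp_quadratic hre, integral_cexp_quadratic hre,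
        neg_neg, neg_sq, hk, ← Complex.ofReal_div, real_half (by positivity)]
      push_cast
      rw [show (0 : ℂ) - 16 * π ^ 2 * B / (4 * -β) = 4 * π ^ 2 * B / β by field_simp; ring]
      ring
    exact_mod_cast h

def wd (A x : ℝ) : ℝ := cB A x - cB (A - 1) x

lemma wd_cont (A : ℝ) : Continuous (wd A) := (cB_cont A).sub (cB_cont (A - 1))

lemma wd_pos {A : ℝ} (hA : 0 < A) {x : ℝ} (hx : x ≠ 0) : 0 < wd A x := by
  rw [wd, cB, if_pos hA.le, cB, sub_pos]
  split_ifs with h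
  · rw [Real.cosh_lt_cosh, abs_mul _ x, abs_mul _ x]
    have h1 : √(A - 1) < √A := Real.sqrt_lt_sqrt h (by linarith)
    have h2 : 0 < |x| := abs_pos.2 hx
    rw [abs_of_nonneg (show 0 ≤ 4 * π * √(A - 1) by positivity),
      abs_of_nonneg (show 0 ≤ 4 * π * √A by positivity)]
    have := Real.pi_pos
    gcongr
  · refine (Real.cos_le_one _).trans_lt (Real.one_lt_cosh.2 ?_)
    have := Real.pi_pos
    positivity

lemma wd_zero {A : ℝ} (hA : 0 < A) : wd A 0 = 0 := by
  rw [wd, cB, if_pos hA.le, cB]; simp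

lemma wd_nonneg {A : ℝ} (hA : 0 < A) (x : ℝ) : 0 ≤ wd A x := by
  by_cases hx : x = 0
  · rw [hx, wd_zero hA]
  · exact (wd_pos hA hx).le

/-- limit functional -/
lemma wd_laplace {A β : ℝ} (hβ : 0 < β) :
    Integrable (fun x : ℝ => Real.exp (-β * (x ^ 2 + A)) * wd A x) ∧
    ∫ x : ℝ, Real.exp (-β * (x ^ 2 + A)) * wd A x = Real.exp (-(A * β)) * (√(π / β) *
      (Real.exp (4 * π ^ 2 * A / β) - Real.exp (4 * π ^ 2 * (A - 1) / β))) := by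
  have h1 := cB_int A hβ
  have h2 := cB_int (A - 1) hβ
  have e : ∀ x : ℝ, Real.exp (-β * (x ^ 2 + A)) * wd A x = Real.exp (-(A * β)) *
      (Real.exp (-β * x ^ 2) * cB A x - Real.exp (-β * x ^ 2) * cB (A - 1) x) := by
    intro x
    rw [show -β * (x ^ 2 + A) = -(A * β) + -β * x ^ 2 by ring, Real.exp_add, wd]; ring
  simp only [e]
  refine ⟨(h1.1.sub h2.1).const_mul _, ?_⟩
  rw [integral_const_mul, integral_sub h1.1 h2.1, h1.2, h2.2]; ring

lemma Klim_eq {A β : ℝ} (hβ : 0 < β) : Klim A β = 2 * √π * (√(π / β) *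
      (Real.exp (4 * π ^ 2 * A / β) - Real.exp (4 * π ^ 2 * (A - 1) / β))) := by
  have hpi := Real.pi_pos
  have e1 : √(4 * π ^ 2 / β) = 2 * √π * √(π / β) := by
    rw [show 4 * π ^ 2 / β = 2 ^ 2 * (π * (π / β)) by ring, Real.sqrt_mul (by norm_num),
      Real.sqrt_sq (by norm_num), Real.sqrt_mul hpi.le]; ring
  rw [Klim, e1, mul_sub, ← Real.exp_add, show 4 * π ^ 2 * A / β + -(4 * π ^ 2 / β) =
    4 * π ^ 2 * (A - 1) / β by ring]; ring

def kap (A : ℝ) : ℝ := √(π / (4 * π ^ 2 * A)) * (2 * √π)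

lemma lap_limit' {A T : ℝ} (hA : 0 < A) (hT : 0 < T) {ν : ℤ → Measure ℝ}
    (hs : IsSpectrum T ν) (hm : ModularInvariant A ν) {β : ℝ} (hβ : 0 < β) :
    Tendsto (fun J : ℤ => 2 * π * (Lap ν J β / NJ A J)) atTop
      (𝓝 (kap A * ∫ x : ℝ, Real.exp (-β * (x ^ 2 + A)) * wd A x)) := by
  have := laplace_limit hA hT hs hm hβ
  rw [Klim_eq hβ] at this
  rw [(wd_laplace hβ).2, kap]
  convert this using 2
  ring

lemma lap_integrable {T : ℝ} {ν : ℤ → Measure ℝ} (hs : IsSpectrum T ν) (J : ℤ) {β : ℝ}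
    (hβ : 0 < β) : Integrable (fun h : ℝ => Real.exp (-β * h)) (ν J) := by
  have h1 := (fr_integrable hs J (half_pos hβ) (half_pos hβ)).const_mul (Real.exp (β / 2 * J))
  refine h1.congr (Eventually.of_forall fun h => ?_)
  simp only
  rw [← Real.exp_add]; congr 1; ring

lemma poly_expand (Q : Polynomial ℝ) (h : ℝ) : Real.exp (-h) * Q.eval (Real.exp (-h)) =
    ∑ n ∈ Finset.range (Q.natDegree + 1), Q.coeff n * Real.exp (-(1 + n : ℝ) * h) := by
  rw [Polynomial.eval_eq_sum_range, Finset.mul_sum]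
  refine Finset.sum_congr rfl fun n _ => ?_
  rw [← Real.exp_nat_mul, mul_left_comm, ← Real.exp_add]
  congr 2; ring

lemma poly_int {T : ℝ} {ν : ℤ → Measure ℝ} (hs : IsSpectrum T ν) (J : ℤ) (Q : Polynomial ℝ) :
    Integrable (fun h : ℝ => Real.exp (-h) * Q.eval (Real.exp (-h))) (ν J) ∧
    ∫ h : ℝ, Real.exp (-h) * Q.eval (Real.exp (-h)) ∂(ν J) =
      ∑ n ∈ Finset.range (Q.natDegree + 1), Q.coeff n * Lap ν J (1 + n) := by
  have hi : ∀ n ∈ Finset.range (Q.natDegree + 1),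
      Integrable (fun h : ℝ => Q.coeff n * Real.exp (-(1 + n : ℝ) * h)) (ν J) := fun n _ =>
    (lap_integrable hs J (by positivity)).const_mul _
  simp only [poly_expand]
  refine ⟨integrable_finsetSum _ hi, ?_⟩
  rw [integral_finsetSum _ hi]
  simp only [integral_const_mul, Lap]

lemma poly_int_wd (A : ℝ) (Q : Polynomial ℝ) :
    Integrable (fun x : ℝ => Real.exp (-(x ^ 2 + A)) * Q.eval (Real.exp (-(x ^ 2 + A))) * wd A x) ∧
    ∫ x : ℝ, Real.exp (-(x ^ 2 + A)) * Q.eval (Real.exp (-(x ^ 2 + A))) * wd A x =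
      ∑ n ∈ Finset.range (Q.natDegree + 1), Q.coeff n *
        ∫ x : ℝ, Real.exp (-(1 + n : ℝ) * (x ^ 2 + A)) * wd A x := by
  have hi : ∀ n ∈ Finset.range (Q.natDegree + 1),
      Integrable (fun x : ℝ => Q.coeff n * (Real.exp (-(1 + n : ℝ) * (x ^ 2 + A)) * wd A x)) :=
    fun n _ => (wd_laplace (by positivity)).1.const_mul _
  simp only [poly_expand, Finset.sum_mul, mul_assoc]
  refine ⟨integrable_finsetSum _ hi, ?_⟩
  rw [integral_finsetSum _ hi]
  simp only [integral_const_mul]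

lemma poly_limit {A T : ℝ} (hA : 0 < A) (hT : 0 < T) {ν : ℤ → Measure ℝ}
    (hs : IsSpectrum T ν) (hm : ModularInvariant A ν) (Q : Polynomial ℝ) :
    Tendsto (fun J : ℤ => 2 * π * ((∫ h : ℝ, Real.exp (-h) * Q.eval (Real.exp (-h)) ∂(ν J))
      / NJ A J)) atTop (𝓝 (kap A *
        ∫ x : ℝ, Real.exp (-(x ^ 2 + A)) * Q.eval (Real.exp (-(x ^ 2 + A))) * wd A x)) := by
  rw [(poly_int_wd A Q).2, Finset.mul_sum]
  have : ∀ J : ℤ, 2 * π * ((∫ h : ℝ, Real.exp (-h) * Q.eval (Real.exp (-h)) ∂(ν J)) / NJ A J) =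
      ∑ n ∈ Finset.range (Q.natDegree + 1), Q.coeff n *
        (2 * π * (Lap ν J (1 + n) / NJ A J)) := by
    intro J
    rw [(poly_int hs J Q).2, Finset.sum_div, Finset.mul_sum]
    refine Finset.sum_congr rfl fun n _ => by ring
  simp only [this]
  refine tendsto_finsetSum _ fun n _ => ?_
  have := (lap_limit' hA hT hs hm (β := 1 + n) (by positivity)).const_mul (Q.coeff n)
  convert this using 2
  ring

def psi (α b t : ℝ) : ℝ := max 0 ((t - Real.exp (-b)) * (Real.exp (-α) - t))

lemma psi_cont (α b : ℝ) : Continuous (psi α b) := by unfold psi; fun_prop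

lemma psi_nonneg (α b t : ℝ) : 0 ≤ psi α b t := le_max_left _ _

lemma psi_zero {α b h : ℝ} (hab : α < b) (hh : h ∉ Set.Ioo α b) :
    psi α b (Real.exp (-h)) = 0 := by
  refine max_eq_left ?_
  rw [Set.mem_Ioo, not_and_or, not_lt, not_lt] at hh
  rcases hh with hh | hh
  · have h1 : Real.exp (-α) ≤ Real.exp (-h) := Real.exp_le_exp.2 (by linarith)
    have h2 : Real.exp (-b) ≤ Real.exp (-h) := Real.exp_le_exp.2 (by linarith)
    exact mul_nonpos_of_nonneg_of_nonpos (by linarith) (by linarith)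
  · have h1 : Real.exp (-h) ≤ Real.exp (-α) := Real.exp_le_exp.2 (by linarith)
    have h2 : Real.exp (-h) ≤ Real.exp (-b) := Real.exp_le_exp.2 (by linarith)
    exact mul_nonpos_of_nonpos_of_nonneg (by linarith) (by linarith)

lemma psi_pos {α b h : ℝ} (hh : h ∈ Set.Ioo α b) : 0 < psi α b (Real.exp (-h)) := by
  refine lt_max_of_lt_right (mul_pos ?_ ?_)
  · rw [sub_pos, Real.exp_lt_exp]; linarith [hh.2]
  · rw [sub_pos, Real.exp_lt_exp]; linarith [hh.1]

lemma psi_le_one {α b h : ℝ} (hα : 0 < α) (hh : 0 < h) (hab : α < b) :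
    psi α b (Real.exp (-h)) ≤ 1 := by
  by_cases hm : h ∈ Set.Ioo α b
  · refine max_le zero_le_one ?_
    have h1 : Real.exp (-h) ≤ 1 := by rw [Real.exp_le_one_iff]; linarith
    have h2 : Real.exp (-α) ≤ 1 := by rw [Real.exp_le_one_iff]; linarith
    have h3 : Real.exp (-h) ≤ Real.exp (-α) := Real.exp_le_exp.2 (by linarith [hm.1])
    have := Real.exp_pos (-b)
    have := Real.exp_pos (-h)
    exact mul_le_one₀ (by linarith) (by linarith) (by linarith)
  · rw [psi_zero hab hm]; exact zero_le_one

end SBD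

/-- The large-spin spectrum becomes dense: every twist window `(a,b)` with `b > A` eventually
contains arbitrarily many states, for every sufficiently large individual spin `J`. -/
theorem spectrum_becomes_dense
    (A Tgap : ℝ) (hA : 0 < A) (hTgap : 0 < Tgap)
    (ν : ℤ → Measure ℝ) (hspec : IsSpectrum Tgap ν) (hmod : ModularInvariant A ν) :
    ∀ a b : ℝ, a < b → A < b → ∀ M : ℝ, 0 < M →
      ∃ J0 : ℤ, ∀ J : ℤ, J0 ≤ J → ENNReal.ofReal M < (ν J) (Set.Ioo a b) := by
  intro a b hab hAb M hM
  set α := max a A with hα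
  have hαb : α < b := max_lt hab hAb
  have hα0 : 0 < α := hA.trans_le (le_max_right _ _)
  -- limit functional applied to the bump
  have hpsi01 : ∀ x : ℝ, SBD.psi α b (Real.exp (-(x ^ 2 + A))) ≤ 1 := fun x =>
    SBD.psi_le_one hα0 (by positivity) hαb
  have hw1 := (SBD.wd_laplace (A := A) (β := 1) one_pos).1
  have hw1' : Integrable (fun x : ℝ => Real.exp (-(x ^ 2 + A)) * SBD.wd A x) := by
    simpa only [neg_mul, one_mul] using hw1
  have hmint : Integrable (fun x : ℝ => Real.exp (-(x ^ 2 + A)) *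
      SBD.psi α b (Real.exp (-(x ^ 2 + A))) * SBD.wd A x) := by
    have hc1 := SBD.psi_cont α b
    have hc2 := SBD.wd_cont A
    refine hw1'.mono' (Continuous.aestronglyMeasurable (by fun_prop)) ?_
    refine Eventually.of_forall fun x => ?_
    have h1 := SBD.psi_nonneg α b (Real.exp (-(x ^ 2 + A)))
    have h2 := SBD.wd_nonneg hA x
    rw [Real.norm_of_nonneg (by positivity)]
    have := mul_le_of_le_one_right (Real.exp_pos (-(x ^ 2 + A))).le (hpsi01 x)
    gcongr
  set m := ∫ x : ℝ, Real.exp (-(x ^ 2 + A)) *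
      SBD.psi α b (Real.exp (-(x ^ 2 + A))) * SBD.wd A x with hm
  set m1 := ∫ x : ℝ, Real.exp (-(x ^ 2 + A)) * SBD.wd A x with hm1
  have hm1n : 0 ≤ m1 := integral_nonneg fun x => mul_nonneg (Real.exp_pos _).le (SBD.wd_nonneg hA x)
  have hmpos : 0 < m := by
    have hc1 := SBD.psi_cont α b
    have hc2 := SBD.wd_cont A
    have hgap : 0 < (α + b) / 2 - A := by
      have : A ≤ α := le_max_right _ _
      linarith
    refine integral_pos_of_integrable_nonneg_nonzero (x := √((α + b) / 2 - A)) (by fun_prop)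
      hmint (fun x => ?_) ?_
    · have h1 := SBD.psi_nonneg α b (Real.exp (-(x ^ 2 + A)))
      have h2 := SBD.wd_nonneg hA x
      positivity
    · rw [Real.sq_sqrt hgap.le, sub_add_cancel]
      have h1 : 0 < SBD.psi α b (Real.exp (-((α + b) / 2))) :=
        SBD.psi_pos ⟨by linarith, by linarith⟩
      have h2 := SBD.wd_pos hA (Real.sqrt_pos.2 hgap).ne'
      positivity
  set η := m / (4 * (m1 + 1)) with hη
  have hηpos : 0 < η := by positivity
  obtain ⟨P, hP⟩ := exists_polynomial_near_of_continuousOn 0 1 (SBD.psi α b)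
    (SBD.psi_cont α b).continuousOn η hηpos
  set Q : Polynomial ℝ := P - Polynomial.C η with hQ
  have hQle : ∀ h : ℝ, 0 < h → Q.eval (Real.exp (-h)) ≤ SBD.psi α b (Real.exp (-h)) ∧
      SBD.psi α b (Real.exp (-h)) - 2 * η ≤ Q.eval (Real.exp (-h)) := by
    intro h hh
    have := abs_lt.1 (hP (Real.exp (-h)) ⟨(Real.exp_pos _).le, by
      rw [Real.exp_le_one_iff]; linarith⟩)
    rw [hQ, Polynomial.eval_sub, Polynomial.eval_C]
    constructor <;> linarith [this.1, this.2]
  have hmQ : m - 2 * η * m1 ≤ ∫ x : ℝ, Real.exp (-(x ^ 2 + A)) *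
      Q.eval (Real.exp (-(x ^ 2 + A))) * SBD.wd A x := by
    rw [hm, hm1, ← integral_const_mul, ← integral_sub hmint (hw1'.const_mul _)]
    refine integral_mono (hmint.sub (hw1'.const_mul _)) (SBD.poly_int_wd A Q).1 fun x => ?_
    have h1 := (hQle (x ^ 2 + A) (by positivity)).2
    have h2 := mul_nonneg (Real.exp_pos (-(x ^ 2 + A))).le (SBD.wd_nonneg hA x)
    have h3 := mul_le_mul_of_nonneg_left h1 h2
    simp only
    linarith
  have hmQ2 : m / 2 ≤ m - 2 * η * m1 := by
    have : η * (m1 + 1) = m / 4 := by rw [hη]; field_simp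
    nlinarith
  have hkap : 0 < SBD.kap A := by unfold SBD.kap; positivity
  have hlim := SBD.poly_limit hA hTgap hspec hmod Q
  have hev : ∀ᶠ J : ℤ in atTop, SBD.kap A * (m / 4) <
      2 * π * ((∫ h : ℝ, Real.exp (-h) * Q.eval (Real.exp (-h)) ∂(ν J)) / SBD.NJ A J) := by
    refine hlim.eventually_const_lt ?_
    have : m / 4 < ∫ x : ℝ, Real.exp (-(x ^ 2 + A)) *
      Q.eval (Real.exp (-(x ^ 2 + A))) * SBD.wd A x := by linarith
    gcongr
  have hN := (SBD.NJ_tendsto hA).eventually_gt_atTop (2 * π * M / (SBD.kap A * (m / 4)))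
  have hfin : ∀ᶠ J : ℤ in atTop, ENNReal.ofReal M < (ν J) (Set.Ioo a b) := by
    filter_upwards [hev, hN] with J h1 h2
    have hd : 0 < SBD.kap A * (m / 4) := by positivity
    have hNp : 0 < SBD.NJ A J := lt_trans (by positivity) h2
    rw [div_lt_iff₀ hd] at h2
    rw [← mul_div_assoc (2 * π) _ (SBD.NJ A J), lt_div_iff₀ hNp] at h1
    have h3 : M < ∫ h : ℝ, Real.exp (-h) * Q.eval (Real.exp (-h)) ∂(ν J) := by
      refine lt_of_mul_lt_mul_left (a := 2 * π) ?_ (by positivity)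
      linarith
    have hlap := SBD.lap_integrable hspec J one_pos
    have hpint : Integrable (fun h : ℝ => Real.exp (-h) * SBD.psi α b (Real.exp (-h))) (ν J) := by
      have hc1 := SBD.psi_cont α b
      refine hlap.mono' (Continuous.aestronglyMeasurable (by fun_prop)) ?_
      filter_upwards [SBD.spec_ae hspec J] with h hh
      rw [Real.norm_of_nonneg (mul_nonneg (Real.exp_pos _).le (SBD.psi_nonneg _ _ _)),
        neg_mul, one_mul]
      exact mul_le_of_le_one_right (Real.exp_pos _).le
        (SBD.psi_le_one hα0 (hTgap.trans hh.1) hαb)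
    have h4 : M < ∫ h : ℝ, Real.exp (-h) * SBD.psi α b (Real.exp (-h)) ∂(ν J) := by
      refine h3.trans_le (integral_mono_ae (SBD.poly_int hspec J Q).1 hpint ?_)
      filter_upwards [SBD.spec_ae hspec J] with h hh
      exact mul_le_mul_of_nonneg_left (hQle h (hTgap.trans hh.1)).1 (Real.exp_pos _).le
    refine ((ENNReal.ofReal_lt_ofReal_iff (hM.trans h4)).2 h4).trans_le ?_
    rw [ofReal_integral_eq_lintegral_ofReal hpint (Eventually.of_forall fun h =>
      mul_nonneg (Real.exp_pos _).le (SBD.psi_nonneg _ _ _)),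
      ← lintegral_indicator_one measurableSet_Ioo]
    refine lintegral_mono_ae ?_
    filter_upwards [SBD.spec_ae hspec J] with h hh
    by_cases hmem : h ∈ Set.Ioo a b
    · rw [Set.indicator_of_mem hmem, Pi.one_apply, ← ENNReal.ofReal_one]
      refine ENNReal.ofReal_le_ofReal ?_
      have hh0 := hTgap.trans hh.1
      exact mul_le_one₀ (by rw [Real.exp_le_one_iff]; linarith) (SBD.psi_nonneg _ _ _)
        (SBD.psi_le_one hα0 hh0 hαb)
    · have : h ∉ Set.Ioo α b := fun h' => hmem ⟨(le_max_left _ _).trans_lt h'.1, h'.2⟩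
      rw [SBD.psi_zero hαb this, mul_zero, ENNReal.ofReal_zero]
      exact zero_le
  obtain ⟨J0, hJ0⟩ := eventually_atTop.1 hfin
  exact ⟨J0, hJ0⟩
end
end
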